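/- arXiv:1709.04955 — 2 statements merged into one kernel-verified Lean document; each statement's English description precedes it below -/
import Mathlib

section
/- For every δ > 0 with 2δ < √2 and every ε > 0, there exists E₀ such that for all integers E ≥ E₀ and all positive integers N with δ ≤ N/√E ≤ √2 - δ, one has | q(E,N) · E · exp(-√E · ḡ(N/√E)) / f̄(N/√E) - 1 | ≤ ε. -/
/-- `q E N`: the number of partitions of `E` into `N` distinct positive integer parts. -/
def q (E N : ℕ) : ℕ :=
  (Finset.univ.filter fun p : Nat.Partition E => p.parts.Nodup ∧ p.parts.card = N).card

/-- The function `t ↦ t / (1 - e^{-t})`, extended continuously by the value `1` at `t = 0`. -/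
noncomputable def F (t : ℝ) : ℝ := if t = 0 then 1 else t / (1 - Real.exp (-t))

namespace Szek

/-- finite sets of positive integers of cardinality `N` and sum `E` -/
def A (E N : ℕ) : Set (Finset ℕ) := {S | 0 ∉ S ∧ S.card = N ∧ ∑ x ∈ S, x = E}

/-- finite sets of naturals of cardinality `N` and sum `E` -/
def B (E N : ℕ) : Set (Finset ℕ) := {S | S.card = N ∧ ∑ x ∈ S, x = E}

lemma B_finite (E N : ℕ) : (B E N).Finite := by
  apply Set.Finite.subset (Finset.finite_toSet ((Finset.range (E+1)).powerset))
  rintro S ⟨_, hS⟩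
  simp only [Finset.coe_powerset, Set.mem_preimage, Set.mem_powerset_iff]
  intro x hx
  have : x ≤ ∑ y ∈ S, y := Finset.single_le_sum (f := fun y => y) (fun _ _ => Nat.zero_le _) hx
  simp; omega

lemma A_finite (E N : ℕ) : (A E N).Finite :=
  (B_finite E N).subset fun _ h => h.2

lemma q_eq (E N : ℕ) : q E N = (A E N).ncard := by
  rw [q, ← Set.ncard_coe_finset]
  apply Set.ncard_congr (fun p _ => p.parts.toFinset)
  · intro p hp
    simp only [Finset.coe_filter, Finset.mem_univ, true_and, Set.mem_setOf_eq] at hp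
    refine ⟨?_, ?_, ?_⟩
    · intro h0
      rw [Multiset.mem_toFinset] at h0
      exact lt_irrefl _ (p.parts_pos h0)
    · rw [Multiset.toFinset_card_of_nodup hp.1, hp.2]
    · rw [Finset.sum_eq_multiset_sum, Multiset.toFinset_val, Multiset.dedup_eq_self.2 hp.1]
      simpa using p.parts_sum
  · intro p r hp hr h
    simp only [Finset.coe_filter, Finset.mem_univ, true_and, Set.mem_setOf_eq] at hp hr
    ext1
    have := congrArg Finset.val h
    rwa [Multiset.toFinset_val, Multiset.toFinset_val, Multiset.dedup_eq_self.2 hp.1,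
      Multiset.dedup_eq_self.2 hr.1] at this
  · rintro S ⟨h0, hc, hs⟩
    refine ⟨⟨S.val, ?_, ?_⟩, ?_, ?_⟩
    · intro i hi
      rcases Nat.eq_zero_or_pos i with h | h
      · subst h; exact absurd hi h0
      · exact h
    · rw [← hs, Finset.sum_eq_multiset_sum]; simp
    · simp [S.nodup, hc]
    · simp

lemma q_zero (E : ℕ) : q E 0 = if E = 0 then 1 else 0 := by
  rw [q_eq]
  split_ifs with h
  · subst h
    have : A 0 0 = {∅} := by
      ext S; simp only [A, Finset.card_eq_zero, Set.mem_setOf_eq, Set.mem_singleton_iff]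
      constructor
      · exact fun h => h.2.1
      · rintro rfl; simp
    rw [this]; simp
  · have : A E 0 = ∅ := by
      ext S; simp only [A, Finset.card_eq_zero, Set.mem_setOf_eq, Set.mem_empty_iff_false, iff_false]
      rintro ⟨_, rfl, h2⟩
      simp at h2; omega
    rw [this]; simp

lemma card_le_of_A {E N : ℕ} {S : Finset ℕ} (h : S ∈ A E N) : N ≤ E := by
  obtain ⟨h0, hc, hs⟩ := h
  rw [← hc, ← hs, Finset.card_eq_sum_ones]
  apply Finset.sum_le_sum
  intro i hi
  rcases Nat.eq_zero_or_pos i with h | h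
  · subst h; exact absurd hi h0
  · exact h

lemma q_lt {E N : ℕ} (h : E < N) : q E N = 0 := by
  rw [q_eq]
  have : A E N = ∅ := by
    ext S
    simp only [Set.mem_empty_iff_false, iff_false]
    intro hS
    have := card_le_of_A hS; omega
  rw [this]; simp

lemma A_shift (E N : ℕ) : (A (E + N) N).ncard = (B E N).ncard := by
  symm
  apply Set.ncard_congr (fun S _ => S.map ⟨Nat.succ, Nat.succ_injective⟩)
  · rintro S ⟨hc, hs⟩
    refine ⟨by simp, by simp [hc], ?_⟩
    rw [Finset.sum_map]
    simp [Finset.sum_add_distrib, hs, hc]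
  · intro S T _ _ h
    exact Finset.map_injective _ h
  · rintro T ⟨h0, hc, hs⟩
    have key : (T.image Nat.pred).map ⟨Nat.succ, Nat.succ_injective⟩ = T := by
      ext x
      simp only [Finset.mem_map, Finset.mem_image, Function.Embedding.coeFn_mk,
        exists_exists_and_eq_and]
      constructor
      · rintro ⟨a, ha, rfl⟩
        have : a ≠ 0 := by rintro rfl; exact h0 ha
        rwa [show a.pred.succ = a from Nat.succ_pred this]
      · intro hx
        have : x ≠ 0 := by rintro rfl; exact h0 hx
        exact ⟨x, hx, Nat.succ_pred this⟩
    refine ⟨T.image Nat.pred, ⟨?_, ?_⟩, key⟩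
    · rw [← hc]; conv_rhs => rw [← key]
      simp
    · have h1 := hs
      rw [← key, Finset.sum_map] at h1
      have h2 : (T.image Nat.pred).card = N := by
        rw [← hc]; conv_rhs => rw [← key]
        simp
      simp only [Function.Embedding.coeFn_mk, Nat.succ_eq_add_one, Finset.sum_add_distrib,
        Finset.sum_const, h2] at h1
      simp at h1
      exact h1

lemma B_split (E N : ℕ) : (B E (N+1)).ncard = (A E (N+1)).ncard + (A E N).ncard := by
  have hU : B E (N+1) = A E (N+1) ∪ (insert 0) '' (A E N) := by
    ext S
    constructor
    · rintro ⟨hc, hs⟩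
      by_cases h0 : 0 ∈ S
      · right
        refine ⟨S.erase 0, ⟨by simp, ?_, ?_⟩, Finset.insert_erase h0⟩
        · rw [Finset.card_erase_of_mem h0, hc]; rfl
        · rw [← hs, ← Finset.sum_erase_add _ _ h0]; simp
      · left; exact ⟨h0, hc, hs⟩
    · rintro (h | ⟨T, ⟨h0, hc, hs⟩, rfl⟩)
      · exact h.2
      · refine ⟨by rw [Finset.card_insert_of_notMem h0, hc], by rw [Finset.sum_insert h0, hs]; simp⟩
  rw [hU, Set.ncard_union_eq ?_ (A_finite _ _) ((A_finite _ _).image _)]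
  · congr 1
    apply Set.ncard_image_of_injOn
    intro S hS T hT h
    have := congrArg (fun U => Finset.erase U 0) h
    simpa [Finset.erase_insert hS.1, Finset.erase_insert hT.1] using this
  · rw [Set.disjoint_left]
    rintro S hS ⟨T, _, rfl⟩
    exact hS.1 (by simp)

lemma q_rec (E N : ℕ) : q (E + (N+1)) (N+1) = q E (N+1) + q E N := by
  rw [q_eq, q_eq, q_eq, A_shift, B_split]

end Szek

namespace Szek
open Complex MeasureTheory

/-- the generating product -/
noncomputable def G (s : ℝ) (N : ℕ) (θ : ℝ) : ℂ :=
  ∏ j ∈ Finset.range N, (cexp (((j + 1 : ℕ) : ℂ) * (s + θ * I)) - 1)⁻¹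

/-- the contour integral -/
noncomputable def J (s : ℝ) (N : ℕ) (E : ℤ) : ℂ :=
  ∫ θ in (-Real.pi)..Real.pi, cexp (E * (s + θ * I)) * G s N θ

lemma norm_cexp_w (s : ℝ) (x : ℝ) (θ : ℝ) : ‖cexp ((x:ℂ) * (s + θ * I))‖ = Real.exp (x * s) := by
  rw [Complex.norm_exp]; simp

lemma den_lower (s : ℝ) (j : ℕ) (θ : ℝ) :
    Real.exp ((j + 1 : ℕ) * s) - 1 ≤ ‖cexp (((j + 1 : ℕ) : ℂ) * (s + θ * I)) - 1‖ := by
  have h := norm_cexp_w s ((j+1:ℕ):ℝ) θ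
  rw [Complex.ofReal_natCast] at h
  have h2 := norm_sub_norm_le (cexp (((j + 1 : ℕ) : ℂ) * (s + θ * I))) 1
  rw [h] at h2; simpa using h2

lemma den_pos {s : ℝ} (hs : 0 < s) (j : ℕ) : 0 < Real.exp ((j + 1 : ℕ) * s) - 1 := by
  have : 1 < Real.exp ((j + 1 : ℕ) * s) := Real.one_lt_exp_iff.2 (by positivity)
  linarith

lemma den_ne {s : ℝ} (hs : 0 < s) (j : ℕ) (θ : ℝ) :
    cexp (((j + 1 : ℕ) : ℂ) * (s + θ * I)) - 1 ≠ 0 := by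
  rw [← norm_pos_iff]
  exact (den_pos hs j).trans_le (den_lower s j θ)

lemma G_cont {s : ℝ} (hs : 0 < s) (N : ℕ) : Continuous (G s N) := by
  unfold G
  apply continuous_finsetProd
  intro j _
  apply Continuous.inv₀ (by fun_prop)
  exact fun θ => den_ne hs j θ

lemma G_norm_le {s : ℝ} (hs : 0 < s) (N : ℕ) (θ : ℝ) :
    ‖G s N θ‖ ≤ ∏ j ∈ Finset.range N, (Real.exp ((j + 1 : ℕ) * s) - 1)⁻¹ := by
  unfold G
  rw [norm_prod]
  apply Finset.prod_le_prod (fun _ _ => norm_nonneg _)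
  intro j _
  rw [norm_inv]
  exact inv_anti₀ (den_pos hs j) (den_lower s j θ)

lemma J_integrable {s : ℝ} (hs : 0 < s) (N : ℕ) (E : ℤ) :
    IntervalIntegrable (fun θ : ℝ => cexp (E * (s + θ * I)) * G s N θ) volume (-Real.pi) Real.pi := by
  apply Continuous.intervalIntegrable
  have := G_cont hs N
  fun_prop

lemma J_rec {s : ℝ} (hs : 0 < s) (N : ℕ) (E : ℤ) :
    J s (N+1) E = J s (N+1) (E - (N+1)) + J s N (E - (N+1)) := by
  unfold J
  rw [← intervalIntegral.integral_add (J_integrable hs _ _) (J_integrable hs _ _)]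
  congr 1
  ext θ
  unfold G
  rw [Finset.prod_range_succ]
  have h := den_ne hs N θ
  set w : ℂ := s + θ * I
  have e : cexp (E * w) = cexp (((E - (N+1) : ℤ) : ℂ) * w) * cexp (((N+1:ℕ):ℂ) * w) := by
    rw [← Complex.exp_add]; congr 1; push_cast; ring
  rw [e]
  generalize (∏ j ∈ Finset.range N, (cexp (((j + 1 : ℕ) : ℂ) * w) - 1)⁻¹) = P
  generalize cexp (((N + 1 : ℕ) : ℂ) * w) = y at *
  have h' : (y - 1) * (y - 1)⁻¹ = 1 := mul_inv_cancel₀ h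
  linear_combination (cexp (((E - (N+1) : ℤ) : ℂ) * w) * P) * h'

lemma J_zero (s : ℝ) (E : ℤ) : J s 0 E = if E = 0 then (2 * Real.pi : ℂ) else 0 := by
  unfold J G
  split_ifs with h
  · subst h; simp; ring
  · have hc : (E : ℂ) * I ≠ 0 := by simp [h]
    have : ∀ θ : ℝ, cexp (E * (s + θ * I)) * ∏ j ∈ Finset.range 0, (cexp (((j + 1 : ℕ) : ℂ) * (s + θ * I)) - 1)⁻¹
        = cexp (E * s) * cexp ((E * I) * θ) := by
      intro θ
      rw [← Complex.exp_add]; simp; congr 1; ring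
    simp_rw [this]
    rw [intervalIntegral.integral_const_mul, integral_exp_mul_complex hc]
    have h2 : cexp (E * I * (Real.pi : ℝ)) = cexp (E * I * ((-Real.pi : ℝ) : ℂ)) := by
      rw [Complex.exp_eq_exp_iff_exists_int]
      exact ⟨E, by push_cast; ring⟩
    rw [h2]; simp

lemma J_norm_le {s : ℝ} (hs : 0 < s) (N : ℕ) (E : ℤ) :
    ‖J s N E‖ ≤ Real.exp (E * s) * (∏ j ∈ Finset.range N, (Real.exp ((j + 1 : ℕ) * s) - 1)⁻¹) *
      (2 * Real.pi) := by
  unfold J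
  have := intervalIntegral.norm_integral_le_of_norm_le_const (a := -Real.pi) (b := Real.pi)
    (f := fun θ : ℝ => cexp (E * (s + θ * I)) * G s N θ)
    (C := Real.exp (E * s) * (∏ j ∈ Finset.range N, (Real.exp ((j + 1 : ℕ) * s) - 1)⁻¹)) ?_
  · refine this.trans_eq ?_
    congr 1
    rw [abs_of_pos (by linarith [Real.pi_pos])]; ring
  · intro θ _
    rw [norm_mul]
    have := norm_cexp_w s (E:ℝ) θ
    rw [Complex.ofReal_intCast] at this
    rw [this]
    gcongr
    exact G_norm_le hs N θ

lemma J_neg {s : ℝ} (hs : 0 < s) (N : ℕ) : ∀ E : ℤ, E < 0 → J s N E = 0 := by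
  induction N with
  | zero => intro E hE; rw [J_zero, if_neg hE.ne]
  | succ N ih =>
    intro E hE
    have h1 : ∀ k : ℕ, J s (N+1) E = J s (N+1) (E - k * (N+1)) := by
      intro k
      induction k with
      | zero => simp
      | succ k ihk =>
        rw [ihk, J_rec hs, ih, add_zero]
        · congr 1; push_cast; ring
        · have : (0:ℤ) ≤ k * (N+1) := by positivity
          linarith
    set C := (∏ j ∈ Finset.range (N+1), (Real.exp ((j + 1 : ℕ) * s) - 1)⁻¹)
    have h2 : ∀ k : ℕ, ‖J s (N+1) E‖ ≤ Real.exp (-(k * s)) * C * (2 * Real.pi) := by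
      intro k
      rw [h1 k]
      refine (J_norm_le hs _ _).trans ?_
      have hC : 0 ≤ C := Finset.prod_nonneg fun j _ => (inv_pos.2 (den_pos hs j)).le
      have : ((E - k * (N+1) : ℤ) : ℝ) * s ≤ -(k * s) := by
        have : E - k * (N+1) ≤ - k := by
          have : (0:ℤ) ≤ k * N := by positivity
          nlinarith
        have : ((E - k * (N+1) : ℤ) : ℝ) ≤ -k := by exact_mod_cast this
        nlinarith
      gcongr
    have h3 : Filter.Tendsto (fun k : ℕ => Real.exp (-(k * s)) * C * (2 * Real.pi)) Filter.atTop
        (nhds 0) := by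
      have : Filter.Tendsto (fun k : ℕ => Real.exp (-(k * s))) Filter.atTop (nhds 0) := by
        apply Real.tendsto_exp_neg_atTop_nhds_zero.comp
        exact tendsto_natCast_atTop_atTop.atTop_mul_const hs
      simpa using (this.mul_const C).mul_const (2 * Real.pi)
    have := ge_of_tendsto' h3 h2
    exact norm_le_zero_iff.1 this

theorem J_eq {s : ℝ} (hs : 0 < s) (N : ℕ) : ∀ E : ℕ, J s N E = 2 * Real.pi * q E N := by
  induction N with
  | zero =>
    intro E
    rw [J_zero, q_zero]
    by_cases h : E = 0 <;> simp [h]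
  | succ N ih =>
    intro E
    induction E using Nat.strong_induction_on with
    | _ E ihE =>
      rw [J_rec hs]
      rcases lt_or_ge E (N+1) with h | h
      · rw [q_lt h, J_neg hs _ _ (by omega), J_neg hs _ _ (by omega)]; simp
      · obtain ⟨K, rfl⟩ := Nat.exists_eq_add_of_le' h
        have : ((K + (N+1) : ℕ) : ℤ) - (N+1) = K := by push_cast; ring
        rw [this, ih, ihE K (by omega), q_rec]
        push_cast; ring

end Szek

namespace Szek
open MeasureTheory

/-- `(e^t - 1)/t`, extended by continuity -/
noncomputable def D (t : ℝ) : ℝ := dslope Real.exp 0 t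

lemma D_of_ne {t : ℝ} (ht : t ≠ 0) : D t = (Real.exp t - 1) / t := by
  rw [D, dslope_of_ne _ ht, slope_def_field]; simp

lemma D_zero : D 0 = 1 := by
  rw [D, dslope_same]; simp

lemma mul_D (t : ℝ) : t * D t = Real.exp t - 1 := by
  by_cases h : t = 0
  · subst h; simp
  · rw [D_of_ne h]; field_simp

lemma D_pos (t : ℝ) : 0 < D t := by
  rcases lt_trichotomy t 0 with h | h | h
  · rw [D_of_ne h.ne]
    exact div_pos_of_neg_of_neg (by linarith [Real.exp_lt_one_iff.2 h]) h
  · subst h; rw [D_zero]; norm_num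
  · rw [D_of_ne h.ne']
    exact div_pos (by linarith [Real.one_lt_exp_iff.2 h]) h

lemma D_contDiff : ContDiff ℝ 2 D := by
  rw [contDiff_iff_contDiffAt]
  intro t
  by_cases h : t = 0
  · subst h
    obtain ⟨p, hp⟩ := (analyticAt_rexp (x := 0))
    have : AnalyticAt ℝ (dslope Real.exp 0) 0 := ⟨_, hp.has_fpower_series_dslope_fslope⟩
    exact this.contDiffAt
  · have h1 : ContDiffAt ℝ 2 (fun t => (Real.exp t - 1) / t) t := by
      apply ContDiffAt.div _ contDiffAt_id h
      fun_prop
    refine h1.congr_of_eventuallyEq ?_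
    filter_upwards [isOpen_ne.mem_nhds h] with y hy
    exact D_of_ne hy

lemma D_diff : Differentiable ℝ D := D_contDiff.differentiable (by norm_num)

lemma F_eq (t : ℝ) : F t = Real.exp t / D t := by
  unfold F
  split_ifs with h
  · subst h; simp [D_zero]
  · rw [D_of_ne h, Real.exp_neg]
    have h1 : Real.exp t - 1 ≠ 0 := by
      intro h2; exact h (Real.exp_eq_one_iff t |>.1 (by linarith))
    have h3 : 1 - (Real.exp t)⁻¹ ≠ 0 := by
      have := Real.exp_pos t
      field_simp; exact div_ne_zero h1 this.ne'
    have := Real.exp_ne_zero t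
    field_simp

/-- `log ((e^t-1)/t)` -/
noncomputable def H (t : ℝ) : ℝ := Real.log (D t)

/-- `t^2 e^t / (e^t-1)^2` -/
noncomputable def K (t : ℝ) : ℝ := Real.exp t / D t ^ 2

lemma F_contDiff : ContDiff ℝ 2 F := by
  have : F = fun t => Real.exp t / D t := funext F_eq
  rw [this]
  exact Real.contDiff_exp.div D_contDiff fun t => (D_pos t).ne'

lemma H_contDiff : ContDiff ℝ 2 H := D_contDiff.log fun t => (D_pos t).ne'

lemma K_contDiff : ContDiff ℝ 2 K :=
  Real.contDiff_exp.div (D_contDiff.pow 2) fun t => (pow_pos (D_pos t) 2).ne'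

lemma mul_D_deriv (t : ℝ) : t * deriv D t = Real.exp t - D t := by
  have h1 : HasDerivAt (fun t => t * D t) (1 * D t + t * deriv D t) t :=
    (hasDerivAt_id t).mul (D_diff t).hasDerivAt
  have h2 : HasDerivAt (fun t => t * D t) (Real.exp t) t := by
    have : (fun t => t * D t) = fun t => Real.exp t - 1 := funext mul_D
    rw [this]
    exact (Real.hasDerivAt_exp t).sub_const 1
  have := h1.unique h2
  linarith

lemma hasDeriv_mul_H (t : ℝ) : HasDerivAt (fun t => t * H t) (H t + F t - 1) t := by
  have h1 : HasDerivAt (fun t => t * H t) (1 * H t + t * (deriv D t / D t)) t :=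
    (hasDerivAt_id t).mul ((D_diff t).hasDerivAt.log (D_pos t).ne')
  convert h1 using 1
  rw [F_eq, mul_div, mul_D_deriv]
  have := (D_pos t).ne'
  field_simp
  ring

lemma hasDeriv_mul_F (t : ℝ) : HasDerivAt (fun t => t * F t) (2 * F t - K t) t := by
  have h0 : HasDerivAt F ((Real.exp t * D t - Real.exp t * deriv D t) / D t ^ 2) t := by
    have : F = fun t => Real.exp t / D t := funext F_eq
    rw [this]
    exact (Real.hasDerivAt_exp t).div (D_diff t).hasDerivAt (D_pos t).ne'
  have h1 : HasDerivAt (fun t => t * F t) (1 * F t +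
      t * ((Real.exp t * D t - Real.exp t * deriv D t) / D t ^ 2)) t := (hasDerivAt_id t).mul h0
  convert h1 using 1
  rw [F_eq, K]
  have := (D_pos t).ne'
  have h2 := mul_D_deriv t
  have h3 := mul_D t
  field_simp
  linear_combination (-1) * h3 + h2

lemma int_H (v : ℝ) : ∫ t in (0:ℝ)..v, H t = v * H v - (∫ t in (0:ℝ)..v, F t) + v := by
  have h := intervalIntegral.integral_eq_sub_of_hasDerivAt (a := 0) (b := v)
    (fun t _ => hasDeriv_mul_H t) (by
      apply Continuous.intervalIntegrable
      have := H_contDiff.continuous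
      have := F_contDiff.continuous
      fun_prop)
  have hH : IntervalIntegrable H volume 0 v := H_contDiff.continuous.intervalIntegrable _ _
  have hF : IntervalIntegrable F volume 0 v := F_contDiff.continuous.intervalIntegrable _ _
  rw [intervalIntegral.integral_sub (hH.add hF) (by simp), intervalIntegral.integral_add hH hF] at h
  simp at h
  linarith

lemma int_K (v : ℝ) : ∫ t in (0:ℝ)..v, K t = 2 * (∫ t in (0:ℝ)..v, F t) - v * F v := by
  have h := intervalIntegral.integral_eq_sub_of_hasDerivAt (a := 0) (b := v)
    (fun t _ => hasDeriv_mul_F t) (by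
      apply Continuous.intervalIntegrable
      have := K_contDiff.continuous
      have := F_contDiff.continuous
      fun_prop)
  have hH : IntervalIntegrable K volume 0 v := K_contDiff.continuous.intervalIntegrable _ _
  have hF : IntervalIntegrable F volume 0 v := F_contDiff.continuous.intervalIntegrable _ _
  rw [intervalIntegral.integral_sub (hF.const_mul 2) hH, intervalIntegral.integral_const_mul] at h
  simp at h
  linarith

lemma one_le_D {t : ℝ} (ht : 0 ≤ t) : 1 ≤ D t := by
  rcases ht.eq_or_lt with h | h
  · rw [← h, D_zero]
  · rw [D_of_ne h.ne', le_div_iff₀ h]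
    linarith [Real.add_one_le_exp t]

lemma D_le_exp {t : ℝ} (ht : 0 ≤ t) : D t ≤ Real.exp t := by
  rcases ht.eq_or_lt with h | h
  · rw [← h, D_zero]; simp
  · rw [D_of_ne h.ne', div_le_iff₀ h]
    have h1 := Real.add_one_le_exp (-t)
    have h2 : Real.exp t * Real.exp (-t) = 1 := by rw [← Real.exp_add]; simp
    nlinarith [Real.exp_pos t]

lemma one_le_F {t : ℝ} (ht : 0 ≤ t) : 1 ≤ F t := by
  rw [F_eq, le_div_iff₀ (D_pos t), one_mul]; exact D_le_exp ht

lemma F_le {t : ℝ} (ht : 0 ≤ t) : F t ≤ 1 + t := by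
  rw [F_eq, div_le_iff₀ (D_pos t)]
  have := mul_D t
  have := one_le_D ht
  nlinarith

lemma K_ge {t : ℝ} (ht : 0 ≤ t) : Real.exp (-t) ≤ K t := by
  rw [K, le_div_iff₀ (pow_pos (D_pos t) 2)]
  have h1 := D_le_exp ht
  have h2 : Real.exp t * Real.exp (-t) = 1 := by rw [← Real.exp_add]; simp
  have h3 := D_pos t
  calc Real.exp (-t) * D t ^ 2 ≤ Real.exp (-t) * Real.exp t ^ 2 := by gcongr
    _ = Real.exp t := by linear_combination Real.exp t * h2

lemma K_le {t : ℝ} (ht : 0 ≤ t) : K t ≤ Real.exp t := by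
  rw [K]
  apply div_le_self (Real.exp_pos t).le
  exact one_le_pow₀ (one_le_D ht)

lemma v_lower {u v : ℝ} (hu : 0 < u) (hv : 0 < v) (h : v ^ 2 / u ^ 2 = ∫ t in (0 : ℝ)..v, F t) :
    u ^ 2 ≤ v := by
  have h1 : ∫ t in (0:ℝ)..v, (1:ℝ) ≤ ∫ t in (0:ℝ)..v, F t := by
    apply intervalIntegral.integral_mono_on hv.le (by simp)
      (F_contDiff.continuous.intervalIntegrable _ _)
    intro t ht; exact one_le_F ht.1
  rw [← h] at h1
  simp at h1
  rw [le_div_iff₀ (by positivity)] at h1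
  nlinarith

lemma v_upper {u v : ℝ} (hu : 0 < u) (hv : 0 < v) (h : v ^ 2 / u ^ 2 = ∫ t in (0 : ℝ)..v, F t) :
    v * (1 / u ^ 2 - 1 / 2) ≤ 1 := by
  have h1 : ∫ t in (0:ℝ)..v, F t ≤ ∫ t in (0:ℝ)..v, (1 + t) := by
    apply intervalIntegral.integral_mono_on hv.le (F_contDiff.continuous.intervalIntegrable _ _)
      (Continuous.intervalIntegrable (by fun_prop) _ _)
    intro t ht; exact F_le ht.1
  rw [← h, intervalIntegral.integral_add (by simp) (by simp)] at h1
  simp at h1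
  have h2 : v * (v * (1 / u ^ 2 - 1 / 2)) ≤ v * 1 := by
    have : v * (v * (1 / u ^ 2 - 1 / 2)) = v ^ 2 / u ^ 2 - v ^ 2 / 2 := by ring
    rw [this]; linarith
  exact le_of_mul_le_mul_left h2 hv

lemma trap {f : ℝ → ℝ} (hf : ContDiff ℝ 2 f) (b : ℝ) (hb : 0 < b) :
    ∃ C : ℝ, 0 ≤ C ∧ ∀ N : ℕ, 0 < N → ∀ v : ℝ, 0 < v → v ≤ b →
      |∑ j ∈ Finset.range N, f ((j + 1 : ℕ) * (v / N)) - (N / v) * (∫ t in (0:ℝ)..v, f t)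
        - (f v - f 0) / 2| ≤ C / N := by
  obtain ⟨ζ, hζ⟩ := (isCompact_Icc (a := (0:ℝ)) (b := b)).exists_bound_of_continuousOn
    (f := iteratedDeriv 2 f) (hf.continuous_iteratedDeriv 2 le_rfl).continuousOn
  have hζ0 : 0 ≤ ζ := (norm_nonneg _).trans (hζ 0 ⟨le_rfl, hb.le⟩)
  refine ⟨b ^ 2 * ζ / 12, by positivity, ?_⟩
  intro N hN v hv hvb
  have hN' : (0:ℝ) < N := by exact_mod_cast hN
  have key := trapezoidal_error_le_of_c2 (f := f) (a := 0) (b := v) hf.contDiffOn (ζ := ζ) ?_ hN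
  · have e : ∑ j ∈ Finset.range N, f ((j + 1 : ℕ) * (v / N)) - (N / v) * (∫ t in (0:ℝ)..v, f t)
        - (f v - f 0) / 2 = (N / v) * trapezoidal_error f N 0 v := by
      unfold trapezoidal_error trapezoidal_integral
      obtain ⟨M, rfl⟩ := Nat.exists_eq_add_of_le' hN
      rw [Finset.sum_range_succ]
      have h1 : ((M + 1 : ℕ) : ℝ) * (v / ((M + 1 : ℕ) : ℝ)) = v := by field_simp
      rw [h1]
      have h2 : ∀ k : ℕ, (0:ℝ) + ((k:ℝ) + 1) * (v - 0) / ((M + 1 : ℕ) : ℝ)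
          = ((k + 1 : ℕ) : ℝ) * (v / ((M + 1 : ℕ) : ℝ)) := by
        intro k; push_cast; ring
      have h3 : M + Nat.succ 0 - 1 = M := rfl
      rw [h3]
      change _ = ((M + 1 : ℕ) : ℝ) / v * ((v - 0) / ((M + 1 : ℕ) : ℝ) * ((f 0 + f v) / 2 +
        ∑ k ∈ Finset.range M, f ((0:ℝ) + ((k:ℝ) + 1) * (v - 0) / ((M + 1 : ℕ) : ℝ))) - _)
      simp only [h2]
      generalize (∑ k ∈ Finset.range M, f (((k + 1 : ℕ) : ℝ) * (v / ((M + 1 : ℕ) : ℝ)))) = S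
      field_simp
      ring
    rw [e, abs_mul, abs_of_pos (by positivity)]
    rw [sub_zero, abs_of_pos hv] at key
    calc (N / v) * |trapezoidal_error f N 0 v| ≤ (N / v) * (v ^ 3 * ζ / (12 * N ^ 2)) := by gcongr
      _ = v ^ 2 * ζ / 12 / N := by field_simp
      _ ≤ _ := by gcongr
  · intro x
    rw [Set.uIcc_of_le hv.le]
    by_cases hx : x ∈ Set.Icc 0 v
    · rw [iteratedDerivWithin_eq_iteratedDeriv (uniqueDiffOn_Icc hv) hf.contDiffAt hx]
      exact hζ x ⟨hx.1, hx.2.trans hvb⟩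
    · rw [iteratedDerivWithin_succ, derivWithin_zero_of_notMem_closure]
      · simpa using hζ0
      · rwa [isClosed_Icc.closure_eq]

end Szek

namespace Szek
open Complex MeasureTheory

/-- `e^y/(e^y-1)` -/
noncomputable def nn (y : ℝ) : ℝ := Real.exp y / (Real.exp y - 1)

lemma exp_sub_one_pos {y : ℝ} (hy : 0 < y) : 0 < Real.exp y - 1 := by
  have := Real.one_lt_exp_iff.2 hy
  linarith

lemma mul_nn {y : ℝ} (hy : 0 < y) : y * nn y = F y := by
  have := exp_sub_one_pos hy
  rw [F_eq, nn, D_of_ne hy.ne']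
  field_simp

lemma sq_mul_nn {y : ℝ} (hy : 0 < y) : y ^ 2 * (nn y * (nn y - 1)) = K y := by
  have := exp_sub_one_pos hy
  rw [K, nn, D_of_ne hy.ne']
  field_simp
  ring

lemma one_le_nn {y : ℝ} (hy : 0 < y) : 1 ≤ nn y := by
  rw [nn, le_div_iff₀ (exp_sub_one_pos hy)]; linarith

lemma nn_ge {y : ℝ} (hy : 0 < y) : Real.exp (-y) ≤ nn y * (nn y - 1) := by
  have := exp_sub_one_pos hy
  have e : nn y * (nn y - 1) = Real.exp y / (Real.exp y - 1) ^ 2 := by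
    rw [nn]; field_simp; ring
  rw [e, le_div_iff₀ (by positivity)]
  have h2 : Real.exp y * Real.exp (-y) = 1 := by rw [← Real.exp_add]; simp
  have h3 := Real.exp_pos (-y)
  calc Real.exp (-y) * (Real.exp y - 1) ^ 2 ≤ Real.exp (-y) * Real.exp y ^ 2 := by
        gcongr; linarith
    _ = Real.exp y := by linear_combination Real.exp y * h2

/-- denominators of the normalized characteristic function -/
noncomputable def den (n α : ℝ) : ℂ := 1 + n * (cexp (I * α) - 1)

lemma den_small {n α : ℝ} (hn : 1 ≤ n) (h : n * |α| ≤ 1 / 4) :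
    ∃ R : ℂ, ‖R‖ ≤ 11 * (n * |α|) ^ 3 ∧
      den n α = cexp (I * (n * α : ℝ) + ((n * (n - 1) * α ^ 2 / 2 : ℝ) : ℂ) + R) := by
  set η := n * |α| with hη
  have hα0 := abs_nonneg α
  have hη0 : 0 ≤ η := by positivity
  have hαη : |α| ≤ η := by nlinarith
  have hIα : ‖I * (α:ℂ)‖ = |α| := by simp
  set r : ℂ := cexp (I * α) - 1 - I * α + α ^ 2 / 2 with hr
  have hrb : ‖r‖ ≤ |α| ^ 3 := by
    have := Complex.exp_bound (x := I * α) (by rw [hIα]; linarith) (n := 3) (by norm_num)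
    rw [hIα] at this
    have e : cexp (I * α) - ∑ m ∈ Finset.range 3, (I * (α:ℂ)) ^ m / (m.factorial : ℂ) = r := by
      simp [Finset.sum_range_succ, hr, mul_pow, Nat.factorial]; ring
    rw [e] at this
    refine this.trans ?_
    have : (0:ℝ) ≤ |α| ^ 3 := by positivity
    norm_num [Nat.factorial]
    nlinarith
  set w : ℂ := n * (cexp (I * α) - 1) with hw
  set d : ℂ := w - I * (n * α) with hd
  have hde : d = n * r - n * α ^ 2 / 2 := by rw [hd, hw, hr]; ring
  have hn0 : 0 ≤ n := by linarith
  have hnr : ‖(n:ℂ) * r‖ ≤ η ^ 3 := by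
    rw [norm_mul, Complex.norm_real, Real.norm_of_nonneg hn0]
    calc n * ‖r‖ ≤ n * |α| ^ 3 := by gcongr
      _ = η * |α| ^ 2 := by rw [hη]; ring
      _ ≤ η * η ^ 2 := by gcongr
      _ = η ^ 3 := by ring
  have hna : ‖(n:ℂ) * α ^ 2 / 2‖ ≤ η ^ 2 / 2 := by
    rw [norm_div, norm_mul, norm_pow, Complex.norm_real, Complex.norm_real,
      Real.norm_of_nonneg hn0, Real.norm_eq_abs]
    simp only [Complex.norm_ofNat]
    gcongr
    calc n * |α| ^ 2 = η * |α| := by rw [hη]; ring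
      _ ≤ η * η := by gcongr
      _ = η ^ 2 := by ring
  have hη2 : η ^ 3 ≤ η ^ 2 / 4 := by nlinarith [sq_nonneg η]
  have hdb : ‖d‖ ≤ η ^ 2 := by
    rw [hde]
    refine (norm_sub_le _ _).trans ?_
    nlinarith [sq_nonneg η]
  have hInα : ‖I * ((n:ℂ) * α)‖ = η := by
    rw [norm_mul, norm_mul, Complex.norm_real, Complex.norm_real, Real.norm_of_nonneg hn0,
      Real.norm_eq_abs]; simp [hη]
  have hwb : ‖w‖ ≤ 2 * η := by
    have : w = d + I * (n * α) := by rw [hd]; ring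
    rw [this]
    refine (norm_add_le _ _).trans ?_
    rw [hInα]; nlinarith
  have hw2 : ‖w‖ ≤ 1 / 2 := by linarith
  set r2 : ℂ := Complex.log (1 + w) - (w - w ^ 2 / 2) with hr2
  have hr2b : ‖r2‖ ≤ 8 * η ^ 3 := by
    have h1 := Complex.norm_log_sub_logTaylor_le 2 (z := w) (by linarith)
    have e : Complex.log (1 + w) - logTaylor (2 + 1) w = r2 := by
      rw [hr2]; simp [logTaylor, Finset.sum_range_succ]; ring
    rw [e] at h1
    refine h1.trans ?_
    have h2 : (1 - ‖w‖)⁻¹ ≤ 2 := by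
      rw [inv_le_comm₀ (by linarith) (by norm_num)]; linarith
    have h3 : ‖w‖ ^ 3 ≤ (2 * η) ^ 3 := by gcongr
    have h4 : ‖w‖ ^ (2 + 1) * (1 - ‖w‖)⁻¹ ≤ (2 * η) ^ 3 * 2 := by
      have : 0 ≤ (1 - ‖w‖)⁻¹ := inv_nonneg.2 (by linarith)
      gcongr
    have : 0 ≤ η ^ 3 := by positivity
    rw [div_le_iff₀ (by norm_num)]
    push_cast
    nlinarith
  refine ⟨r2 + n * r - I * (n * α) * d - d ^ 2 / 2, ?_, ?_⟩
  · have e1 : ‖I * ((n:ℂ) * α) * d‖ ≤ η ^ 3 := by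
      rw [norm_mul, hInα]
      calc η * ‖d‖ ≤ η * η ^ 2 := by gcongr
        _ = _ := by ring
    have e2 : ‖d ^ 2 / 2‖ ≤ η ^ 3 := by
      rw [norm_div, norm_pow]
      simp only [Complex.norm_ofNat]
      have : ‖d‖ ^ 2 ≤ (η ^ 2) ^ 2 := by gcongr
      have : 0 ≤ η ^ 3 := by positivity
      nlinarith
    calc _ ≤ ‖r2‖ + ‖(n:ℂ) * r‖ + ‖I * ((n:ℂ) * α) * d‖ + ‖d ^ 2 / 2‖ := by
          refine (norm_sub_le _ _).trans ?_
          gcongr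
          refine (norm_sub_le _ _).trans ?_
          gcongr
          exact norm_add_le _ _
      _ ≤ _ := by linarith
  · have hne : 1 + w ≠ 0 := by
      intro h0
      have : w = -1 := by linear_combination h0
      rw [this] at hw2; norm_num at hw2
    have : den n α = cexp (Complex.log (1 + w)) := by
      rw [Complex.exp_log hne]; rfl
    rw [this]
    congr 1
    have e3 : Complex.log (1 + w) = r2 + (w - w ^ 2 / 2) := by rw [hr2]; ring
    have e4 : w = I * (n * α) + d := by rw [hd]; ring
    have e5 : w = I * (n * α) + n * r - n * α ^ 2 / 2 := by rw [hr, hw]; ring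
    rw [e3]
    have e6 : w ^ 2 = (I * (n * α) + d) ^ 2 := by rw [← e4]
    rw [e6]
    conv_lhs => rw [e5]
    push_cast
    have hI := Complex.I_sq
    linear_combination (-(n:ℂ) ^ 2 * α ^ 2 / 2) * hI

lemma den_normSq (n α : ℝ) : ‖den n α‖ ^ 2 = 1 + 2 * (n * (n - 1)) * (1 - Real.cos α) := by
  rw [← Complex.normSq_eq_norm_sq, den, mul_comm I, Complex.exp_mul_I, ← Complex.ofReal_cos,
    ← Complex.ofReal_sin, Complex.normSq_apply]
  have h1 : (1 + (n:ℂ) * ((Real.cos α : ℂ) + (Real.sin α : ℂ) * I - 1)).re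
      = 1 + n * (Real.cos α - 1) := by
    simp [Complex.cos_ofReal_re, -Complex.ofReal_cos, -Complex.ofReal_sin]
  have h2 : (1 + (n:ℂ) * ((Real.cos α : ℂ) + (Real.sin α : ℂ) * I - 1)).im
      = n * Real.sin α := by
    simp [-Complex.ofReal_cos, -Complex.ofReal_sin]
  rw [h1, h2]
  linear_combination n ^ 2 * Real.sin_sq_add_cos_sq α

lemma den_bound {κ n α : ℝ} (hκ : 0 < κ) (h : κ ≤ n * (n - 1)) :
    ‖(den n α)⁻¹‖ ≤ Real.exp (-(κ / (1 + 4 * κ)) * (1 - Real.cos α)) := by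
  have hc := Real.cos_le_one α
  have hc' := Real.neg_one_le_cos α
  set y := 1 - Real.cos α with hy
  have hy0 : 0 ≤ y := by linarith
  have h1 : 1 + 2 * κ * y ≤ ‖den n α‖ ^ 2 := by
    rw [den_normSq]; nlinarith
  have h2 : Real.exp (2 * κ / (1 + 4 * κ) * y) ≤ 1 + 2 * κ * y := by
    have h3 := Real.add_one_le_exp (-(2 * κ / (1 + 4 * κ) * y))
    have h4 : 1 ≤ (1 + 2 * κ * y) * (-(2 * κ / (1 + 4 * κ) * y) + 1) := by
      have : (1 + 2 * κ * y) * (-(2 * κ / (1 + 4 * κ) * y) + 1) - 1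
        = 2 * κ * y * (4 * κ - 2 * κ * y) / (1 + 4 * κ) := by field_simp; ring
      have h5 : 0 ≤ 2 * κ * y * (4 * κ - 2 * κ * y) / (1 + 4 * κ) := by
        have : 0 ≤ 4 * κ - 2 * κ * y := by nlinarith
        positivity
      linarith
    have h6 : 1 ≤ (1 + 2 * κ * y) * Real.exp (-(2 * κ / (1 + 4 * κ) * y)) :=
      h4.trans (by gcongr)
    rw [Real.exp_neg] at h6
    have := Real.exp_pos (2 * κ / (1 + 4 * κ) * y)
    rwa [← div_eq_mul_inv, le_div_iff₀ this, one_mul] at h6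
  have h7 : Real.exp (κ / (1 + 4 * κ) * y) ≤ ‖den n α‖ := by
    refine le_of_sq_le_sq ?_ (norm_nonneg _)
    rw [← Real.exp_nat_mul]
    refine le_trans (le_of_eq ?_) (h2.trans h1)
    congr 1; push_cast; ring
  rw [norm_inv, neg_mul, Real.exp_neg]
  exact inv_anti₀ (Real.exp_pos _) h7

lemma sum_sq_lower (k : ℕ) : (k:ℝ) ^ 3 / 3 ≤ ∑ j ∈ Finset.range k, ((j + 1 : ℕ) : ℝ) ^ 2 := by
  induction k with
  | zero => simp
  | succ k ih =>
    rw [Finset.sum_range_succ]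
    push_cast at ih ⊢
    have : (0:ℝ) ≤ k := by positivity
    nlinarith

lemma sum_cos_lower {N : ℕ} (hN : 2 ≤ N) {θ : ℝ} (hθ : |θ| ≤ Real.pi) :
    2 / (81 * Real.pi ^ 2) * (N * min 1 ((N:ℝ) ^ 2 * θ ^ 2)) ≤
      ∑ j ∈ Finset.range N, (1 - Real.cos ((j + 1 : ℕ) * θ)) := by
  have hpi := Real.pi_pos
  have hpi3 := Real.pi_gt_three
  have hN0 : (0:ℝ) < N := by exact_mod_cast (by omega : 0 < N)
  have hterm : ∀ j : ℕ, 0 ≤ 1 - Real.cos ((j + 1 : ℕ) * θ) := fun j => by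
    linarith [Real.cos_le_one ((j + 1 : ℕ) * θ)]
  rcases le_or_gt (N * |θ|) (2 * Real.pi) with h | h
  · set k := N / 2 with hk
    have hk3 : (N:ℝ) / 3 ≤ k := by
      rw [div_le_iff₀ (by norm_num)]
      exact_mod_cast (by omega : N ≤ k * 3)
    have hkN : k ≤ N := by omega
    have hk2 : (k:ℝ) * 2 ≤ N := by exact_mod_cast (by omega : k * 2 ≤ N)
    have h1 : ∑ j ∈ Finset.range k, (2 / Real.pi ^ 2 * θ ^ 2) * ((j + 1 : ℕ) : ℝ) ^ 2 ≤
        ∑ j ∈ Finset.range k, (1 - Real.cos ((j + 1 : ℕ) * θ)) := by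
      apply Finset.sum_le_sum
      intro j hj
      rw [Finset.mem_range] at hj
      have hjk : ((j + 1 : ℕ) : ℝ) ≤ k := by exact_mod_cast hj
      have : |((j + 1 : ℕ) : ℝ) * θ| ≤ Real.pi := by
        rw [abs_mul, Nat.abs_cast]
        have := abs_nonneg θ
        nlinarith
      have := Real.cos_le_one_sub_mul_cos_sq this
      rw [mul_pow] at this
      linarith
    have h2 : ∑ j ∈ Finset.range k, (1 - Real.cos ((j + 1 : ℕ) * θ)) ≤
        ∑ j ∈ Finset.range N, (1 - Real.cos ((j + 1 : ℕ) * θ)) := by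
      apply Finset.sum_le_sum_of_subset_of_nonneg
      · intro j hj; simp at hj ⊢; omega
      · intro j _ _; exact hterm j
    refine le_trans ?_ (h1.trans h2)
    rw [← Finset.mul_sum]
    have h3 := sum_sq_lower k
    calc 2 / (81 * Real.pi ^ 2) * (N * min 1 ((N:ℝ) ^ 2 * θ ^ 2))
        ≤ 2 / (81 * Real.pi ^ 2) * (N * ((N:ℝ) ^ 2 * θ ^ 2)) := by
          gcongr; exact min_le_right _ _
      _ = (2 / Real.pi ^ 2 * θ ^ 2) * (((N:ℝ) / 3) ^ 3 / 3) := by field_simp; ring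
      _ ≤ (2 / Real.pi ^ 2 * θ ^ 2) * ((k:ℝ) ^ 3 / 3) := by gcongr
      _ ≤ _ := by gcongr
  · have hθ0 : 0 < |θ| := by
      by_contra h0
      have : |θ| = 0 := le_antisymm (not_lt.1 h0) (abs_nonneg _)
      rw [this] at h; linarith
    set z : ℂ := cexp (I * θ) with hz
    have hz1 : 2 * |θ| / Real.pi ≤ ‖z - 1‖ := by
      rw [hz, Complex.norm_exp_I_mul_ofReal_sub_one, norm_mul, Real.norm_eq_abs, Real.norm_eq_abs]
      have h3 := Real.mul_le_sin (x := |θ| / 2) (by positivity) (by linarith)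
      have h4 : Real.sin (|θ| / 2) ≤ |Real.sin (θ / 2)| := by
        rcases abs_cases θ with ⟨h5, _⟩ | ⟨h5, _⟩
        · rw [h5]; exact le_abs_self _
        · rw [h5, neg_div, Real.sin_neg]; exact neg_le_abs _
      rw [abs_of_pos (by norm_num : (0:ℝ) < 2)]
      have : 2 * |θ| / Real.pi = 2 * (2 / Real.pi * (|θ| / 2)) := by ring
      rw [this]
      linarith
    have hzp : 0 < ‖z - 1‖ := lt_of_lt_of_le (by positivity) hz1
    have hzn : z ≠ 1 := by
      intro h0; rw [h0] at hzp; simp at hzp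
    have hznorm : ‖z‖ = 1 := by rw [hz, mul_comm]; exact Complex.norm_exp_ofReal_mul_I θ
    have hsum : ∑ j ∈ Finset.range N, Real.cos ((j + 1 : ℕ) * θ)
        = (∑ j ∈ Finset.range N, z ^ (j + 1)).re := by
      rw [Complex.re_sum]
      apply Finset.sum_congr rfl
      intro j _
      rw [hz, ← Complex.exp_nat_mul]
      have : ((j + 1 : ℕ) : ℂ) * (I * θ) = (((j + 1 : ℕ) * θ : ℝ) : ℂ) * I := by push_cast; ring
      rw [this, Complex.exp_ofReal_mul_I_re]
    have hgeo : ∑ j ∈ Finset.range N, z ^ (j + 1) = z * ((z ^ N - 1) / (z - 1)) := by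
      rw [← geom_sum_eq hzn, Finset.mul_sum]
      apply Finset.sum_congr rfl
      intro j _; ring
    have hb : ∑ j ∈ Finset.range N, Real.cos ((j + 1 : ℕ) * θ) ≤ N / 2 := by
      rw [hsum, hgeo]
      refine (Complex.re_le_norm _).trans ?_
      rw [norm_mul, norm_div, hznorm, one_mul, div_le_iff₀ hzp]
      have h5 : ‖z ^ N - 1‖ ≤ 2 := by
        refine (norm_sub_le _ _).trans ?_
        rw [norm_pow, hznorm]; norm_num
      refine h5.trans ?_
      have h6 : 2 ≤ N / 2 * (2 * |θ| / Real.pi) := by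
        have : N / 2 * (2 * |θ| / Real.pi) = N * |θ| / Real.pi := by ring
        rw [this, le_div_iff₀ hpi]; linarith
      exact h6.trans (by gcongr)
    rw [Finset.sum_sub_distrib]
    simp only [Finset.sum_const, Finset.card_range, nsmul_eq_mul, mul_one]
    have h7 : 2 / (81 * Real.pi ^ 2) ≤ 1 / 2 := by
      rw [div_le_iff₀ (by positivity)]; nlinarith
    have h8 : 2 / (81 * Real.pi ^ 2) * (N * min 1 ((N:ℝ) ^ 2 * θ ^ 2)) ≤ 1 / 2 * (N * 1) := by
      gcongr
      exact min_le_left _ _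
    linarith

end Szek

namespace Szek
open Complex MeasureTheory Filter Topology

/-- normalized characteristic function -/
noncomputable def Phi (s : ℝ) (N : ℕ) (E : ℝ) (θ : ℝ) : ℂ :=
  cexp (I * (E * θ : ℝ)) * ∏ j ∈ Finset.range N, (den (nn ((j + 1 : ℕ) * s)) ((j + 1 : ℕ) * θ))⁻¹

/-- mean -/
noncomputable def mu (s : ℝ) (N : ℕ) : ℝ :=
  ∑ j ∈ Finset.range N, ((j + 1 : ℕ) : ℝ) * nn ((j + 1 : ℕ) * s)

/-- variance -/
noncomputable def sig2 (s : ℝ) (N : ℕ) : ℝ :=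
  ∑ j ∈ Finset.range N, ((j + 1 : ℕ) : ℝ) ^ 2 * (nn ((j + 1 : ℕ) * s) * (nn ((j + 1 : ℕ) * s) - 1))

/-- real normalizing product -/
noncomputable def PP (s : ℝ) (N : ℕ) : ℝ := ∏ j ∈ Finset.range N, (Real.exp ((j + 1 : ℕ) * s) - 1)

lemma PP_pos {s : ℝ} (hs : 0 < s) (N : ℕ) : 0 < PP s N :=
  Finset.prod_pos fun j _ => den_pos hs j

lemma Phi_eq {s : ℝ} (hs : 0 < s) (N : ℕ) (E : ℕ) (θ : ℝ) :
    cexp ((E : ℤ) * (s + θ * I)) * G s N θ =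
      ((Real.exp (E * s) / PP s N : ℝ) : ℂ) * Phi s N E θ := by
  unfold G Phi PP
  have e1 : cexp (((E : ℕ) : ℤ) * (s + θ * I)) = (Real.exp (E * s) : ℝ) * cexp (I * (E * θ : ℝ)) := by
    rw [Complex.ofReal_exp, ← Complex.exp_add]; congr 1; push_cast; ring
  have e2 : ∀ j ∈ Finset.range N, (cexp (((j + 1 : ℕ) : ℂ) * (s + θ * I)) - 1)⁻¹ =
      (((Real.exp ((j + 1 : ℕ) * s) - 1 : ℝ) : ℂ))⁻¹ *
        (den (nn ((j + 1 : ℕ) * s)) ((j + 1 : ℕ) * θ))⁻¹ := by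
    intro j _
    rw [← mul_inv]
    congr 1
    have h1 : (((Real.exp ((j + 1 : ℕ) * s) - 1 : ℝ) : ℂ)) ≠ 0 := by
      exact_mod_cast (den_pos hs j).ne'
    have h2 : (((Real.exp ((j + 1 : ℕ) * s) - 1 : ℝ) : ℂ)) * (nn ((j + 1 : ℕ) * s) : ℂ)
        = (Real.exp ((j + 1 : ℕ) * s) : ℝ) := by
      rw [nn, ← Complex.ofReal_mul]
      congr 1
      have := (den_pos hs j).ne'
      field_simp
    have h3 : cexp (((j + 1 : ℕ) : ℂ) * (s + θ * I)) = (Real.exp ((j + 1 : ℕ) * s) : ℝ) *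
        cexp (I * (((j + 1 : ℕ) * θ : ℝ) : ℂ)) := by
      rw [Complex.ofReal_exp, ← Complex.exp_add]; congr 1; push_cast; ring
    rw [den, h3]
    have h4 : (((Real.exp ((j + 1 : ℕ) * s) - 1 : ℝ) : ℂ)) = (Real.exp ((j + 1 : ℕ) * s) : ℝ) - 1 := by
      push_cast; ring
    linear_combination (1 - cexp (I * (((j + 1 : ℕ) * θ : ℝ) : ℂ))) * h2 - h4
  rw [e1, Finset.prod_congr rfl e2, Finset.prod_mul_distrib, Finset.prod_inv_distrib]
  push_cast
  ring

lemma nn_mul_le {a b v : ℝ} {N : ℕ} (ha : 0 < a) (hav : a ≤ v) (hvb : v ≤ b) (hN : 0 < N)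
    {j : ℕ} (hj : j < N) (θ : ℝ) :
    nn ((j + 1 : ℕ) * (v / N)) * |((j + 1 : ℕ) : ℝ) * θ| ≤ (1 + b) * |θ| * N / a := by
  have hN' : (0:ℝ) < N := by exact_mod_cast hN
  have hv : 0 < v := by linarith
  set y : ℝ := (j + 1 : ℕ) * (v / N) with hy
  have hy0 : 0 < y := by positivity
  have hjN : ((j + 1 : ℕ) : ℝ) ≤ N := by exact_mod_cast hj
  have hyv : y ≤ v := by
    rw [hy]
    calc ((j + 1 : ℕ) : ℝ) * (v / N) ≤ N * (v / N) := by gcongr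
      _ = v := by field_simp
  have h1 := mul_nn hy0
  have h2 := F_le hy0.le
  have e : nn y * |((j + 1 : ℕ) : ℝ) * θ| = (y * nn y) * |θ| * N / v := by
    rw [abs_mul, Nat.abs_cast, hy]; field_simp
  rw [e, h1]
  have h3 : F y ≤ 1 + b := by linarith
  have h4 : 0 ≤ 1 + b := by linarith
  gcongr

lemma Phi_approx {a b v C E θ : ℝ} {N : ℕ} (ha : 0 < a) (hav : a ≤ v) (hvb : v ≤ b) (hN : 0 < N)
    (hE : |E - mu (v / N) N| ≤ C * N) (hη : (1 + b) * |θ| * N / a ≤ 1 / 4)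
    (hρ : C * N * |θ| + N * (11 * ((1 + b) * |θ| * N / a) ^ 3) ≤ 1) :
    ‖Phi (v / N) N E θ - ((Real.exp (-(sig2 (v / N) N * θ ^ 2 / 2)) : ℝ) : ℂ)‖ ≤
      2 * (C * N * |θ| + N * (11 * ((1 + b) * |θ| * N / a) ^ 3)) := by
  have hN' : (0:ℝ) < N := by exact_mod_cast hN
  have hv : 0 < v := by linarith
  set η := (1 + b) * |θ| * N / a with hηd
  set s := v / N with hs
  have hs0 : 0 < s := by positivity
  have hex : ∀ j ∈ Finset.range N, ∃ R : ℂ, ‖R‖ ≤ 11 * η ^ 3 ∧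
      den (nn ((j + 1 : ℕ) * s)) ((j + 1 : ℕ) * θ) =
        cexp (I * ((nn ((j + 1 : ℕ) * s)) * ((j + 1 : ℕ) * θ) : ℝ) +
          (((nn ((j + 1 : ℕ) * s)) * ((nn ((j + 1 : ℕ) * s)) - 1) * ((j + 1 : ℕ) * θ) ^ 2 / 2 : ℝ) : ℂ)
          + R) := by
    intro j hj
    have h1 := nn_mul_le ha hav hvb hN (Finset.mem_range.1 hj) θ
    have h0 : 1 ≤ nn ((j + 1 : ℕ) * s) := one_le_nn (by positivity)
    obtain ⟨R, hR, hR2⟩ := den_small h0 (h1.trans hη)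
    refine ⟨R, hR.trans ?_, hR2⟩
    have : 0 ≤ nn ((j + 1 : ℕ) * s) * |((j + 1 : ℕ) : ℝ) * θ| := by positivity
    gcongr
  choose! R hR hR2 using hex
  have hprod : ∏ j ∈ Finset.range N, (den (nn ((j + 1 : ℕ) * s)) ((j + 1 : ℕ) * θ))⁻¹ =
      cexp (-(I * (mu s N * θ : ℝ)) - ((sig2 s N * θ ^ 2 / 2 : ℝ) : ℂ)
        - ∑ j ∈ Finset.range N, R j) := by
    rw [Finset.prod_inv_distrib, Finset.prod_congr rfl hR2, ← Complex.exp_sum, ← Complex.exp_neg]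
    congr 1
    rw [Finset.sum_add_distrib, Finset.sum_add_distrib, ← Finset.mul_sum, ← Complex.ofReal_sum,
      ← Complex.ofReal_sum]
    have e1 : ∑ j ∈ Finset.range N, (nn ((j + 1 : ℕ) * s)) * (((j + 1 : ℕ) : ℝ) * θ) = mu s N * θ := by
      rw [mu, Finset.sum_mul]; apply Finset.sum_congr rfl; intros; ring
    have e2 : ∑ j ∈ Finset.range N, (nn ((j + 1 : ℕ) * s)) * ((nn ((j + 1 : ℕ) * s)) - 1) *
        (((j + 1 : ℕ) : ℝ) * θ) ^ 2 / 2 = sig2 s N * θ ^ 2 / 2 := by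
      rw [sig2, Finset.sum_mul, Finset.sum_div]; apply Finset.sum_congr rfl; intros; ring
    rw [e1, e2]; ring
  have hPhi : Phi s N E θ = ((Real.exp (-(sig2 s N * θ ^ 2 / 2)) : ℝ) : ℂ) *
      cexp (I * ((E - mu s N) * θ : ℝ) - ∑ j ∈ Finset.range N, R j) := by
    rw [Phi, hprod, Complex.ofReal_exp, ← Complex.exp_add, ← Complex.exp_add]
    congr 1; push_cast; ring
  set z : ℂ := I * ((E - mu s N) * θ : ℝ) - ∑ j ∈ Finset.range N, R j with hz
  have hzb : ‖z‖ ≤ C * N * |θ| + N * (11 * η ^ 3) := by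
    rw [hz]
    refine (norm_sub_le _ _).trans ?_
    gcongr
    · rw [norm_mul, Complex.norm_real, Complex.norm_I, one_mul, Real.norm_eq_abs, abs_mul]
      gcongr
    · refine (norm_sum_le _ _).trans ?_
      refine (Finset.sum_le_sum hR).trans ?_
      simp
  rw [hPhi]
  have e3 : ((Real.exp (-(sig2 s N * θ ^ 2 / 2)) : ℝ) : ℂ) * cexp z -
      ((Real.exp (-(sig2 s N * θ ^ 2 / 2)) : ℝ) : ℂ) =
      ((Real.exp (-(sig2 s N * θ ^ 2 / 2)) : ℝ) : ℂ) * (cexp z - 1) := by ring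
  rw [e3, norm_mul, Complex.norm_real, Real.norm_of_nonneg (Real.exp_pos _).le]
  have hsig : 0 ≤ sig2 s N := by
    apply Finset.sum_nonneg
    intro j _
    have := one_le_nn (y := (j + 1 : ℕ) * s) (by positivity)
    have : 0 ≤ nn ((j + 1 : ℕ) * s) - 1 := by linarith
    positivity
  have h5 : Real.exp (-(sig2 s N * θ ^ 2 / 2)) ≤ 1 := by
    rw [Real.exp_le_one_iff]
    have : 0 ≤ sig2 s N * θ ^ 2 / 2 := by positivity
    linarith
  have h6 := Complex.norm_exp_sub_one_le (hzb.trans hρ)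
  calc _ ≤ 1 * (2 * ‖z‖) := by gcongr
    _ ≤ _ := by linarith

/-- the exponential decay constant -/
noncomputable def AA (b : ℝ) : ℝ :=
  Real.exp (-b) / (1 + 4 * Real.exp (-b)) * (2 / (81 * Real.pi ^ 2))

lemma AA_pos (b : ℝ) : 0 < AA b := by
  unfold AA
  have := Real.exp_pos (-b)
  have := Real.pi_pos
  positivity

lemma y_le {b v : ℝ} {N : ℕ} (hv : 0 < v) (hvb : v ≤ b) {j : ℕ} (hj : j < N) :
    0 < ((j + 1 : ℕ) : ℝ) * (v / N) ∧ ((j + 1 : ℕ) : ℝ) * (v / N) ≤ b := by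
  have hN' : (0:ℝ) < N := by exact_mod_cast (by omega : 0 < N)
  refine ⟨by positivity, ?_⟩
  have hjN : ((j + 1 : ℕ) : ℝ) ≤ N := by exact_mod_cast hj
  calc ((j + 1 : ℕ) : ℝ) * (v / N) ≤ N * (v / N) := by gcongr
    _ = v := by field_simp
    _ ≤ b := hvb

lemma Phi_bound {b v E θ : ℝ} {N : ℕ} (hv : 0 < v) (hvb : v ≤ b) (hN : 2 ≤ N)
    (hθ : |θ| ≤ Real.pi) :
    ‖Phi (v / N) N E θ‖ ≤ Real.exp (-(AA b * (N * min 1 ((N:ℝ) ^ 2 * θ ^ 2)))) := by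
  rw [Phi, norm_mul, mul_comm I, Complex.norm_exp_ofReal_mul_I, one_mul, norm_prod]
  have h1 : ∀ j ∈ Finset.range N, ‖(den (nn ((j + 1 : ℕ) * (v / N))) ((j + 1 : ℕ) * θ))⁻¹‖ ≤
      Real.exp (-(Real.exp (-b) / (1 + 4 * Real.exp (-b))) *
        (1 - Real.cos (((j + 1 : ℕ) : ℝ) * θ))) := by
    intro j hj
    apply den_bound (Real.exp_pos _)
    obtain ⟨h2, h3⟩ := y_le hv hvb (Finset.mem_range.1 hj)
    exact (Real.exp_le_exp.2 (by linarith)).trans (nn_ge h2)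
  refine (Finset.prod_le_prod (fun _ _ => norm_nonneg _) h1).trans ?_
  rw [← Real.exp_sum, ← Finset.mul_sum, Real.exp_le_exp, neg_mul, neg_le_neg_iff, AA, mul_assoc]
  have := Real.exp_pos (-b)
  gcongr
  exact sum_cos_lower hN hθ

lemma Phi_dom {b v E x : ℝ} {N : ℕ} (hv : 0 < v) (hvb : v ≤ b) (hN : 2 ≤ N)
    (hx : |x| ≤ Real.pi * (N * √N)) :
    ‖Phi (v / N) N E (x / (N * √N))‖ ≤
      (1 + 1 / AA b + 6 * Real.pi ^ 2 / AA b ^ 3) * (1 + x ^ 2)⁻¹ := by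
  have hN' : (0:ℝ) < N := by exact_mod_cast (by omega : 0 < N)
  have hA := AA_pos b
  have hpi := Real.pi_pos
  have hsq : √(N:ℝ) ^ 2 = N := Real.sq_sqrt hN'.le
  have hsq0 : 0 < √(N:ℝ) := Real.sqrt_pos.2 hN'
  have hc : 0 < N * √(N:ℝ) := by positivity
  have h1 : |x / (N * √N)| ≤ Real.pi := by
    rw [abs_div, abs_of_pos hc, div_le_iff₀ hc]; exact hx
  refine (Phi_bound hv hvb hN h1).trans ?_
  rw [← div_eq_mul_inv, le_div_iff₀ (by positivity)]
  have e : (N:ℝ) ^ 2 * (x / (N * √N)) ^ 2 = x ^ 2 / N := by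
    rw [div_pow, mul_pow, hsq]; field_simp
  rw [e]
  have hx2 : x ^ 2 ≤ Real.pi ^ 2 * (N:ℝ) ^ 3 := by
    have : |x| ^ 2 ≤ (Real.pi * (N * √N)) ^ 2 := by gcongr
    rw [sq_abs, mul_pow, mul_pow, hsq] at this
    linarith
  rcases le_total 1 (x ^ 2 / N) with h | h
  · rw [min_eq_left h, mul_one]
    have h2 := Real.pow_div_factorial_le_exp (AA b * N) (by positivity) 3
    have h3 : Real.exp (-(AA b * N)) * Real.exp (AA b * N) = 1 := by rw [← Real.exp_add]; simp
    have h4 : Real.exp (-(AA b * N)) ≤ 1 := Real.exp_le_one_iff.2 (by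
      have : 0 < AA b * N := by positivity
      linarith)
    have h5 : Real.exp (-(AA b * N)) * (AA b ^ 3 * N ^ 3 / 6) ≤ 1 := by
      rw [← h3]
      gcongr
      refine le_trans (le_of_eq ?_) h2
      simp [Nat.factorial]; ring
    calc Real.exp (-(AA b * N)) * (1 + x ^ 2)
        ≤ Real.exp (-(AA b * N)) * (1 + Real.pi ^ 2 * (N:ℝ) ^ 3) := by gcongr
      _ = Real.exp (-(AA b * N)) + (6 * Real.pi ^ 2 / AA b ^ 3) *
          (Real.exp (-(AA b * N)) * (AA b ^ 3 * N ^ 3 / 6)) := by field_simp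
      _ ≤ 1 + (6 * Real.pi ^ 2 / AA b ^ 3) * 1 := by gcongr
      _ ≤ _ := by
        have : 0 ≤ 1 / AA b := by positivity
        linarith
  · rw [min_eq_right h]
    have e2 : (N:ℝ) * (x ^ 2 / N) = x ^ 2 := by field_simp
    rw [e2]
    have h2 := Real.add_one_le_exp (AA b * x ^ 2)
    have h3 : Real.exp (-(AA b * x ^ 2)) * Real.exp (AA b * x ^ 2) = 1 := by
      rw [← Real.exp_add]; simp
    have h4 : Real.exp (-(AA b * x ^ 2)) ≤ 1 := Real.exp_le_one_iff.2 (by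
      have : 0 ≤ AA b * x ^ 2 := by positivity
      linarith)
    have h5 : Real.exp (-(AA b * x ^ 2)) * (AA b * x ^ 2) ≤ 1 := by
      rw [← h3]
      gcongr
      linarith
    calc Real.exp (-(AA b * x ^ 2)) * (1 + x ^ 2)
        = Real.exp (-(AA b * x ^ 2)) + (1 / AA b) * (Real.exp (-(AA b * x ^ 2)) * (AA b * x ^ 2)) := by
          field_simp
      _ ≤ 1 + (1 / AA b) * 1 := by gcongr
      _ ≤ _ := by
        have : 0 ≤ 6 * Real.pi ^ 2 / AA b ^ 3 := by positivity
        linarith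

lemma sig2_eq {v : ℝ} {N : ℕ} (hv : 0 < v) (hN : 0 < N) :
    sig2 (v / N) N = (N / v) ^ 2 * ∑ j ∈ Finset.range N, K ((j + 1 : ℕ) * (v / N)) := by
  have hN' : (0:ℝ) < N := by exact_mod_cast hN
  rw [sig2, Finset.mul_sum]
  apply Finset.sum_congr rfl
  intro j hj
  rw [← sq_mul_nn (y_le hv le_rfl (Finset.mem_range.1 hj)).1]
  field_simp

lemma mu_eq {v : ℝ} {N : ℕ} (hv : 0 < v) (hN : 0 < N) :
    mu (v / N) N = (N / v) * ∑ j ∈ Finset.range N, F ((j + 1 : ℕ) * (v / N)) := by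
  have hN' : (0:ℝ) < N := by exact_mod_cast hN
  rw [mu, Finset.mul_sum]
  apply Finset.sum_congr rfl
  intro j hj
  rw [← mul_nn (y_le hv le_rfl (Finset.mem_range.1 hj)).1]
  field_simp

lemma sig2_bounds {a b v : ℝ} {N : ℕ} (ha : 0 < a) (hav : a ≤ v) (hvb : v ≤ b) (hN : 0 < N) :
    Real.exp (-b) / b ^ 2 ≤ sig2 (v / N) N / N ^ 3 ∧
    sig2 (v / N) N / N ^ 3 ≤ Real.exp b / a ^ 2 := by
  have hN' : (0:ℝ) < N := by exact_mod_cast hN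
  have hv : 0 < v := by linarith
  have hb : 0 < b := by linarith
  have e : sig2 (v / N) N / N ^ 3 =
      (∑ j ∈ Finset.range N, K ((j + 1 : ℕ) * (v / N))) / N / v ^ 2 := by
    rw [sig2_eq hv hN]; field_simp
  have h1 : N * Real.exp (-b) ≤ ∑ j ∈ Finset.range N, K ((j + 1 : ℕ) * (v / N)) := by
    have : ∑ j ∈ Finset.range N, Real.exp (-b) = N * Real.exp (-b) := by simp
    rw [← this]
    apply Finset.sum_le_sum
    intro j hj
    obtain ⟨h2, h3⟩ := y_le hv hvb (Finset.mem_range.1 hj)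
    exact (Real.exp_le_exp.2 (by linarith)).trans (K_ge h2.le)
  have h2 : ∑ j ∈ Finset.range N, K ((j + 1 : ℕ) * (v / N)) ≤ N * Real.exp b := by
    have : ∑ j ∈ Finset.range N, Real.exp b = N * Real.exp b := by simp
    rw [← this]
    apply Finset.sum_le_sum
    intro j hj
    obtain ⟨h2, h3⟩ := y_le hv hvb (Finset.mem_range.1 hj)
    exact (K_le h2.le).trans (Real.exp_le_exp.2 h3)
  rw [e]
  have := Real.exp_pos (-b)
  have := Real.exp_pos b
  constructor
  · calc Real.exp (-b) / b ^ 2 ≤ Real.exp (-b) / v ^ 2 := by gcongr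
      _ = N * Real.exp (-b) / N / v ^ 2 := by field_simp
      _ ≤ _ := by gcongr
  · calc _ ≤ N * Real.exp b / N / v ^ 2 := by gcongr
      _ = Real.exp b / v ^ 2 := by field_simp
      _ ≤ _ := by gcongr

lemma Phi_cont {s : ℝ} (hs : 0 < s) (N : ℕ) (E : ℝ) : Continuous (Phi s N E) := by
  unfold Phi
  apply Continuous.mul (by fun_prop)
  apply continuous_finsetProd
  intro j _
  apply Continuous.inv₀
  · unfold den; fun_prop
  · intro θ h0
    have h1 := den_normSq (nn ((j + 1 : ℕ) * s)) ((j + 1 : ℕ) * θ)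
    rw [h0] at h1
    have h2 := one_le_nn (y := (j + 1 : ℕ) * s) (by positivity)
    have h3 := Real.cos_le_one ((j + 1 : ℕ) * θ)
    have h4 : 0 ≤ 2 * (nn ((j + 1 : ℕ) * s) * (nn ((j + 1 : ℕ) * s) - 1)) *
      (1 - Real.cos ((j + 1 : ℕ) * θ)) := by
      apply mul_nonneg _ (by linarith)
      have : 0 ≤ nn ((j + 1 : ℕ) * s) - 1 := by linarith
      positivity
    simp at h1
    push_cast at h4
    linarith

end Szek

namespace Szek
open Complex MeasureTheory Filter Topology

/-- the exact Fourier formula, rescaled -/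
lemma q_fourier {v : ℝ} {N : ℕ} (hv : 0 < v) (hN : 0 < N) (E : ℕ) :
    ∫ x : ℝ, (Set.Ioc (-(Real.pi * (N * √N))) (Real.pi * (N * √N))).indicator
      (fun x => Phi (v / N) N E (x / (N * √N))) x =
    ((N * √N * (2 * Real.pi * (q E N * Real.exp (-(E * (v / N))) * PP (v / N) N)) : ℝ) : ℂ) := by
  have hN' : (0:ℝ) < N := by exact_mod_cast hN
  have hs : 0 < v / N := by positivity
  have hsq0 : 0 < √(N:ℝ) := Real.sqrt_pos.2 hN'
  have hc : 0 < N * √(N:ℝ) := by positivity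
  set c := N * √(N:ℝ) with hcd
  have hpi := Real.pi_pos
  rw [integral_indicator measurableSet_Ioc, ← intervalIntegral.integral_of_le (by
    have : 0 < Real.pi * c := by positivity
    linarith)]
  rw [intervalIntegral.integral_comp_div _ hc.ne']
  have e1 : -(Real.pi * c) / c = -Real.pi := by field_simp
  have e2 : (Real.pi * c) / c = Real.pi := by field_simp
  rw [e1, e2]
  have hJ := J_eq hs N E
  unfold J at hJ
  simp_rw [Phi_eq hs N E] at hJ
  rw [intervalIntegral.integral_const_mul] at hJ
  have hP := PP_pos hs N
  have hk : ((Real.exp (E * (v / N)) / PP (v / N) N : ℝ) : ℂ) ≠ 0 := by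
    have : Real.exp (E * (v / N)) / PP (v / N) N ≠ 0 := by positivity
    exact_mod_cast this
  have hI : ∫ θ in (-Real.pi)..Real.pi, Phi (v / N) N E θ =
      ((2 * Real.pi * (q E N * Real.exp (-(E * (v / N))) * PP (v / N) N) : ℝ) : ℂ) := by
    apply mul_left_cancel₀ hk
    rw [hJ, ← Complex.ofReal_mul]
    have : Real.exp (E * (v / N)) / PP (v / N) N * (2 * Real.pi *
        (q E N * Real.exp (-(E * (v / N))) * PP (v / N) N)) = 2 * Real.pi * q E N := by
      rw [Real.exp_neg]
      have := Real.exp_pos (E * (v / N))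
      field_simp
    rw [this]; push_cast; ring
  rw [hI, Complex.real_smul, ← Complex.ofReal_mul]

theorem clt {ι : Type*} {l : Filter ι} [l.IsCountablyGenerated] (E N : ι → ℕ) (v : ι → ℝ)
    {a b C : ℝ} (ha : 0 < a) (hNt : Tendsto N l atTop) (hva : ∀ᶠ i in l, a ≤ v i)
    (hvb : ∀ᶠ i in l, v i ≤ b) (hE : ∀ᶠ i in l, |(E i : ℝ) - mu (v i / N i) (N i)| ≤ C * N i) :
    Tendsto (fun i => q (E i) (N i) * Real.exp (-(E i * (v i / N i))) * PP (v i / N i) (N i) *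
      √(2 * Real.pi * sig2 (v i / N i) (N i))) l (𝓝 1) := by
  rcases l.eq_or_neBot with hl | hl
  · rw [hl]; exact tendsto_bot
  have hb : 0 < b := by
    obtain ⟨i, h1, h2⟩ := (hva.and hvb).exists
    linarith
  have hpi := Real.pi_pos
  have hN2 : ∀ᶠ i in l, 2 ≤ N i := hNt.eventually_ge_atTop 2
  have hNr : Tendsto (fun i => (N i : ℝ)) l atTop := tendsto_natCast_atTop_atTop.comp hNt
  have hsqt : Tendsto (fun i => √(N i : ℝ)) l atTop := Real.tendsto_sqrt_atTop.comp hNr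
  set c : ι → ℝ := fun i => N i * √(N i : ℝ) with hc
  have hct : Tendsto c l atTop := hNr.atTop_mul_atTop₀ hsqt
  set τ : ι → ℝ := fun i => sig2 (v i / N i) (N i) / (N i) ^ 3 with hτ
  set τ0 := Real.exp (-b) / b ^ 2 with hτ0
  have hτ0p : 0 < τ0 := by have := Real.exp_pos (-b); positivity
  set f : ι → ℝ → ℂ := fun i x => (Set.Ioc (-(Real.pi * c i)) (Real.pi * c i)).indicator
      (fun x => Phi (v i / N i) (N i) (E i) (x / c i)) x - ((Real.exp (-(τ i / 2) * x ^ 2) : ℝ) : ℂ)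
    with hf
  have hcpos : ∀ i, 2 ≤ N i → 0 < c i := by
    intro i hi
    have : (0:ℝ) < N i := by exact_mod_cast (by omega : 0 < N i)
    have := Real.sqrt_pos.2 this
    simp only [hc]; positivity
  have hgauss_int : ∀ i, 0 < τ i → Integrable fun x : ℝ => ((Real.exp (-(τ i / 2) * x ^ 2) : ℝ) : ℂ) :=
    fun i hi => (integrable_exp_neg_mul_sq (by positivity)).ofReal
  have hτb : ∀ᶠ i in l, τ0 ≤ τ i ∧ τ i ≤ Real.exp b / a ^ 2 := by
    filter_upwards [hva, hvb, hN2] with i h1 h2 h3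
    exact sig2_bounds ha h1 h2 (by omega)
  have hindint : ∀ i, 2 ≤ N i → 0 < v i → Integrable (fun x : ℝ =>
      (Set.Ioc (-(Real.pi * c i)) (Real.pi * c i)).indicator
      (fun x => Phi (v i / N i) (N i) (E i) (x / c i)) x) := by
    intro i hi hvi
    rw [integrable_indicator_iff measurableSet_Ioc]
    have h1 : (0:ℝ) < N i := by exact_mod_cast (by omega : 0 < N i)
    have h2 : Continuous (fun x : ℝ => Phi (v i / N i) (N i) (E i) (x / c i)) :=
      (Phi_cont (by positivity) _ _).comp (by fun_prop)
    exact h2.integrableOn_Ioc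
  have hmain : Tendsto (fun i => ∫ x, f i x) l (𝓝 (∫ _ : ℝ, (0:ℂ))) := by
    apply tendsto_integral_filter_of_dominated_convergence
      (fun x => (1 + 1 / AA b + 6 * Real.pi ^ 2 / AA b ^ 3) * (1 + x ^ 2)⁻¹
        + Real.exp (-(τ0 / 2) * x ^ 2))
    · filter_upwards [hN2, hva, hτb] with i h1 h2 h3
      exact ((hindint i h1 (by linarith)).sub (hgauss_int i (by linarith [h3.1]))).1
    · filter_upwards [hN2, hva, hvb, hτb] with i h1 h2 h3 h4
      refine Eventually.of_forall fun x => ?_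
      refine (norm_sub_le _ _).trans ?_
      apply add_le_add
      · by_cases hx : x ∈ Set.Ioc (-(Real.pi * c i)) (Real.pi * c i)
        · rw [Set.indicator_of_mem hx]
          exact Phi_dom (by linarith) h3 h1 (abs_le.2 ⟨hx.1.le, hx.2⟩)
        · rw [Set.indicator_of_notMem hx, norm_zero]
          have := AA_pos b
          positivity
      · rw [Complex.norm_real, Real.norm_of_nonneg (Real.exp_pos _).le, Real.exp_le_exp]
        have := h4.1
        nlinarith [sq_nonneg x]
    · exact (integrable_inv_one_add_sq.const_mul _).add
        (integrable_exp_neg_mul_sq (by positivity))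
    · refine Eventually.of_forall fun x => ?_
      rw [tendsto_zero_iff_norm_tendsto_zero]
      -- error term
      set ρ : ι → ℝ := fun i => C * N i * |x / c i| +
        N i * (11 * ((1 + b) * |x / c i| * N i / a) ^ 3) with hρ
      have hinv : Tendsto (fun i => (√(N i : ℝ))⁻¹) l (𝓝 0) := hsqt.inv_tendsto_atTop
      have eη : ∀ᶠ i in l, (1 + b) * |x / c i| * N i / a = ((1 + b) * |x| / a) * (√(N i : ℝ))⁻¹ := by
        filter_upwards [hN2] with i hi
        have h1 : (0:ℝ) < N i := by exact_mod_cast (by omega : 0 < N i)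
        have h2 := Real.sqrt_pos.2 h1
        rw [abs_div, abs_of_pos (hcpos i hi)]
        simp only [hc]
        field_simp
      have hηt : Tendsto (fun i => (1 + b) * |x / c i| * N i / a) l (𝓝 0) := by
        rw [tendsto_congr' eη]
        simpa using hinv.const_mul ((1 + b) * |x| / a)
      have hρt : Tendsto ρ l (𝓝 0) := by
        have e : ∀ᶠ i in l, ρ i = (C * |x|) * (√(N i : ℝ))⁻¹ +
            (11 * ((1 + b) * |x| / a) ^ 3) * (√(N i : ℝ))⁻¹ := by
          filter_upwards [hN2, eη] with i hi h0
          have h1 : (0:ℝ) < N i := by exact_mod_cast (by omega : 0 < N i)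
          have h2 := Real.sqrt_pos.2 h1
          have h3 : √(N i : ℝ) ^ 2 = N i := Real.sq_sqrt h1.le
          simp only [hρ]
          rw [h0, abs_div, abs_of_pos (hcpos i hi)]
          simp only [hc]
          have e1 : C * (N i:ℝ) * (|x| / (N i * √(N i : ℝ))) = (C * |x|) * (√(N i : ℝ))⁻¹ := by
            field_simp
          have e2 : (N i : ℝ) * (√(N i : ℝ))⁻¹ ^ 3 = (√(N i : ℝ))⁻¹ := by
            field_simp; rw [h3]
          rw [e1]
          linear_combination (11 * ((1 + b) * |x| / a) ^ 3) * e2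
        rw [tendsto_congr' e]
        simpa using (hinv.const_mul (C * |x|)).add (hinv.const_mul (11 * ((1 + b) * |x| / a) ^ 3))
      have hind : ∀ᶠ i in l, x ∈ Set.Ioc (-(Real.pi * c i)) (Real.pi * c i) := by
        have h1 : Tendsto (fun i => Real.pi * c i) l atTop := hct.const_mul_atTop hpi
        filter_upwards [h1.eventually_gt_atTop |x|] with i hi
        obtain ⟨h2, h3⟩ := abs_lt.1 hi
        exact ⟨h2, h3.le⟩
      apply squeeze_zero' (g := fun i => 2 * ρ i)
      · exact Eventually.of_forall fun i => norm_nonneg _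
      · filter_upwards [hN2, hva, hvb, hE, hind, hηt.eventually_le_const (by norm_num : (0:ℝ) < 1/4),
          hρt.eventually_le_const (by norm_num : (0:ℝ) < 1)] with i h1 h2 h3 h4 h5 h6 h7
        simp only [hf]
        rw [Set.indicator_of_mem h5]
        have h8 := Phi_approx (E := E i) ha h2 h3 (by omega : 0 < N i) h4 h6 h7
        have e3 : -(τ i / 2) * x ^ 2 = -(sig2 (v i / N i) (N i) * (x / c i) ^ 2 / 2) := by
          have h1' : (0:ℝ) < N i := by exact_mod_cast (by omega : 0 < N i)
          have h3 : √(N i : ℝ) ^ 2 = N i := Real.sq_sqrt h1'.le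
          simp only [hτ, hc]
          rw [div_pow, mul_pow, h3]
          field_simp
        rw [e3]
        exact h8
      · simpa using hρt.const_mul 2
  rw [integral_zero] at hmain
  -- evaluate
  have heval : ∀ᶠ i in l, ∫ x, f i x = ((c i * (2 * Real.pi * (q (E i) (N i) *
      Real.exp (-(E i * (v i / N i))) * PP (v i / N i) (N i))) - √(Real.pi / (τ i / 2)) : ℝ) : ℂ) := by
    filter_upwards [hN2, hva, hτb] with i h1 h2 h3
    simp only [hf]
    rw [integral_sub (hindint i h1 (by linarith)) (hgauss_int i (by linarith [h3.1]))]
    simp only [hc]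
    rw [q_fourier (by linarith) (by omega), integral_complex_ofReal, integral_gaussian, Complex.ofReal_sub]
  have h1 := (tendsto_congr' heval).1 hmain
  have h2 : Tendsto (fun i => c i * (2 * Real.pi * (q (E i) (N i) *
      Real.exp (-(E i * (v i / N i))) * PP (v i / N i) (N i))) - √(Real.pi / (τ i / 2))) l (𝓝 0) := by
    have := (Complex.continuous_re.tendsto _).comp h1
    simpa only [Function.comp_def, Complex.ofReal_re, Complex.zero_re] using this
  have h3 : Tendsto (fun i => √(τ i / (2 * Real.pi)) * (c i * (2 * Real.pi * (q (E i) (N i) *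
      Real.exp (-(E i * (v i / N i))) * PP (v i / N i) (N i))) - √(Real.pi / (τ i / 2)))) l (𝓝 0) := by
    rw [tendsto_zero_iff_norm_tendsto_zero] at h2 ⊢
    apply squeeze_zero' (Eventually.of_forall fun i => norm_nonneg _)
      (g := fun i => √(Real.exp b / a ^ 2 / (2 * Real.pi)) * ‖c i * (2 * Real.pi * (q (E i) (N i) *
      Real.exp (-(E i * (v i / N i))) * PP (v i / N i) (N i))) - √(Real.pi / (τ i / 2))‖)
    · filter_upwards [hτb] with i hi
      rw [norm_mul, Real.norm_of_nonneg (Real.sqrt_nonneg _)]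
      have := hi.2
      gcongr
    · simpa using h2.const_mul √(Real.exp b / a ^ 2 / (2 * Real.pi))
  have h4 := h3.add_const 1
  rw [zero_add] at h4
  refine (tendsto_congr' ?_).1 h4
  filter_upwards [hN2, hτb] with i hi hτi
  have hτp : 0 < τ i := by linarith [hτi.1]
  have hNi : (0:ℝ) < N i := by exact_mod_cast (by omega : 0 < N i)
  have e1 : √(τ i / (2 * Real.pi)) * √(Real.pi / (τ i / 2)) = 1 := by
    rw [← Real.sqrt_mul (by positivity)]
    have : τ i / (2 * Real.pi) * (Real.pi / (τ i / 2)) = 1 := by field_simp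
    rw [this, Real.sqrt_one]
  have e2 : √(τ i / (2 * Real.pi)) * (c i * (2 * Real.pi)) =
      √(2 * Real.pi * sig2 (v i / N i) (N i)) := by
    symm
    rw [Real.sqrt_eq_iff_mul_self_eq _ (by have := hcpos i hi; positivity)]
    · have h5 : √(τ i / (2 * Real.pi)) ^ 2 = τ i / (2 * Real.pi) := Real.sq_sqrt (by positivity)
      have h6 : √(N i : ℝ) ^ 2 = N i := Real.sq_sqrt hNi.le
      have h7 : c i ^ 2 = (N i : ℝ) ^ 3 := by
        simp only [hc]; rw [mul_pow, h6]; ring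
      have h8 : sig2 (v i / N i) (N i) = τ i * (N i) ^ 3 := by
        simp only [hτ]; field_simp
      rw [h8]
      symm
      calc _ = √(τ i / (2 * Real.pi)) ^ 2 * c i ^ 2 * (2 * Real.pi) ^ 2 := by ring
        _ = _ := by rw [h5, h7]; field_simp
    · have h8 : sig2 (v i / N i) (N i) = τ i * (N i) ^ 3 := by
        simp only [hτ]; field_simp
      rw [h8]; positivity
  rw [← e2]
  linear_combination (-1) * e1

end Szek

namespace Szek
open MeasureTheory Filter Topology

lemma D_zero_H : H 0 = 0 := by rw [H, D_zero, Real.log_one]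

lemma PP_fact {v : ℝ} {N : ℕ} (hv : 0 < v) (hN : 0 < N) :
    PP (v / N) N = N.factorial * (v / N) ^ N *
      Real.exp (∑ j ∈ Finset.range N, H ((j + 1 : ℕ) * (v / N))) := by
  have e : ∀ j : ℕ, Real.exp ((j + 1 : ℕ) * (v / N)) - 1 =
      ((j + 1 : ℕ) : ℝ) * (v / N) * Real.exp (H ((j + 1 : ℕ) * (v / N))) := by
    intro j
    rw [H, Real.exp_log (D_pos _), mul_D]
  unfold PP
  simp_rw [e]
  rw [Finset.prod_mul_distrib, Finset.prod_mul_distrib, Real.exp_sum, Finset.prod_const,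
    Finset.card_range, ← Nat.cast_prod, Finset.prod_range_add_one_eq_factorial]

lemma PP_asymp {ι : Type*} {l : Filter ι} (N : ι → ℕ) (v : ι → ℝ)
    {a b : ℝ} (ha : 0 < a) (hb : 0 < b) (hNt : Tendsto N l atTop) (hva : ∀ᶠ i in l, a ≤ v i)
    (hvb : ∀ᶠ i in l, v i ≤ b) :
    Tendsto (fun i => PP (v i / N i) (N i) / (√(2 * N i * Real.pi) *
      Real.exp (N i * Real.log (v i) - N i + (N i / v i) * (∫ t in (0:ℝ)..(v i), H t)
        + H (v i) / 2))) l (𝓝 1) := by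
  obtain ⟨C, hC0, hC⟩ := trap H_contDiff b hb
  have hNr : Tendsto (fun i => (N i : ℝ)) l atTop := tendsto_natCast_atTop_atTop.comp hNt
  have h1 : Tendsto (fun n : ℕ => Stirling.stirlingSeq n / √Real.pi) atTop (𝓝 1) := by
    have := Stirling.tendsto_stirlingSeq_sqrt_pi.div_const (√Real.pi)
    rwa [div_self (by have := Real.pi_pos; positivity)] at this
  have h2 := h1.comp hNt
  set w : ι → ℝ := fun i => ∑ j ∈ Finset.range (N i), H ((j + 1 : ℕ) * (v i / N i)) -
    (N i / v i) * (∫ t in (0:ℝ)..(v i), H t) - H (v i) / 2 with hw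
  have h3 : Tendsto w l (𝓝 0) := by
    apply squeeze_zero_norm' (a := fun i => C / (N i : ℝ))
    · filter_upwards [hva, hvb, hNt.eventually_ge_atTop 1] with i h1 h2 h3
      have := hC (N i) (by omega) (v i) (by linarith) h2
      rw [D_zero_H, sub_zero] at this
      exact this
    · exact hNr.const_div_atTop C
  have h4 : Tendsto (fun i => Real.exp (w i)) l (𝓝 1) := by
    simpa [Function.comp_def] using (Real.continuous_exp.tendsto 0).comp h3
  have h5 := h2.mul h4
  rw [one_mul] at h5
  refine (tendsto_congr' ?_).1 h5
  filter_upwards [hva, hNt.eventually_ge_atTop 1] with i hi hN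
  have hv : 0 < v i := by linarith
  have hn : (0:ℝ) < N i := by exact_mod_cast hN
  have hp := Real.pi_pos
  rw [PP_fact hv hN]
  simp only [Function.comp_apply, Stirling.stirlingSeq, hw]
  have e1 : √(2 * N i * Real.pi) = √(2 * N i) * √Real.pi := by
    rw [Real.sqrt_mul (by positivity)]
  rw [e1, Real.exp_sub, Real.exp_sub, Real.exp_add, Real.exp_add, Real.exp_sub]
  have e2 : Real.exp (N i * Real.log (v i)) = v i ^ N i := by
    rw [Real.exp_nat_mul, Real.exp_log hv]
  have e3 : Real.exp (N i) = Real.exp 1 ^ N i := by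
    rw [← Real.exp_nat_mul, mul_one]
  rw [e2, e3, div_pow, div_pow]
  have e4 : 0 < √(2 * (N i:ℝ)) := by positivity
  have e5 : 0 < √Real.pi := by positivity
  generalize Real.exp (∑ j ∈ Finset.range (N i), H ((j + 1 : ℕ) * (v i / N i))) = S
  field_simp

lemma sig_asymp {ι : Type*} {l : Filter ι} (N : ι → ℕ) (v : ι → ℝ)
    {a b : ℝ} (ha : 0 < a) (hb : 0 < b) (hNt : Tendsto N l atTop) (hva : ∀ᶠ i in l, a ≤ v i)
    (hvb : ∀ᶠ i in l, v i ≤ b) :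
    (∀ᶠ i in l, 0 < ∫ t in (0:ℝ)..(v i), K t) ∧
    Tendsto (fun i => sig2 (v i / N i) (N i) / ((N i / v i) ^ 3 * ∫ t in (0:ℝ)..(v i), K t))
      l (𝓝 1) := by
  obtain ⟨C, hC0, hC⟩ := trap K_contDiff b hb
  have hNr : Tendsto (fun i => (N i : ℝ)) l atTop := tendsto_natCast_atTop_atTop.comp hNt
  have hK : ∀ v : ℝ, 0 < v → v ≤ b → v * Real.exp (-b) ≤ ∫ t in (0:ℝ)..v, K t := by
    intro v hv hvb
    have h1 : ∫ t in (0:ℝ)..v, Real.exp (-b) ≤ ∫ t in (0:ℝ)..v, K t := by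
      apply intervalIntegral.integral_mono_on hv.le (by simp)
        (K_contDiff.continuous.intervalIntegrable _ _)
      intro t ht
      refine le_trans ?_ (K_ge ht.1)
      rw [Real.exp_le_exp]
      linarith [ht.2]
    simpa using h1
  constructor
  · filter_upwards [hva, hvb] with i h1 h2
    have h3 : 0 < v i := by linarith
    have := hK (v i) h3 h2
    have h4 : 0 < v i * Real.exp (-b) := by positivity
    linarith
  · rw [tendsto_iff_norm_sub_tendsto_zero]
    apply squeeze_zero' (Eventually.of_forall fun i => norm_nonneg _)
      (g := fun i => ((Real.exp b + 1) / 2 + C) * Real.exp b / (N i : ℝ))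
    · filter_upwards [hva, hvb, hNt.eventually_ge_atTop 1] with i h1 h2 h3
      have hv : 0 < v i := by linarith
      have hn : (1:ℝ) ≤ N i := by exact_mod_cast h3
      have hn0 : (0:ℝ) < N i := by linarith
      have hI := hK (v i) hv h2
      have hc := hC (N i) (by omega) (v i) hv h2
      rw [sig2_eq hv (by omega)]
      set I := ∫ t in (0:ℝ)..(v i), K t
      set S := ∑ j ∈ Finset.range (N i), K ((j + 1 : ℕ) * (v i / N i))
      have hep := Real.exp_pos (-b)
      have hIp : 0 < I := lt_of_lt_of_le (by positivity) hI
      have e : (N i / v i) ^ 2 * S / ((N i / v i) ^ 3 * I) - 1 = (S - (N i / v i) * I) / ((N i / v i) * I) := by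
        field_simp
      rw [e, norm_div, Real.norm_of_nonneg (by positivity : 0 ≤ (N i / v i) * I), Real.norm_eq_abs]
      have hden : N i * Real.exp (-b) ≤ (N i / v i) * I := by
        rw [div_mul_eq_mul_div, le_div_iff₀ hv]
        nlinarith
      have hnum : |S - (N i / v i) * I| ≤ (Real.exp b + 1) / 2 + C := by
        have k1 : K (v i) ≤ Real.exp b := (K_le hv.le).trans (Real.exp_le_exp.2 h2)
        have k2 : 0 ≤ K (v i) := (Real.exp_pos _).le.trans (K_ge hv.le)
        have k3 : K 0 = 1 := by simp [K, D_zero]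
        have k4 : C / N i ≤ C := div_le_self hC0 hn
        rw [k3] at hc
        have := abs_le.1 hc
        have := Real.exp_pos b
        rw [abs_le]; constructor <;> linarith
      calc _ ≤ ((Real.exp b + 1) / 2 + C) / (N i * Real.exp (-b)) := by
            apply div_le_div₀ _ hnum (by positivity) hden
            have := Real.exp_pos b
            positivity
        _ = _ := by
          rw [Real.exp_neg]; have := Real.exp_pos b; field_simp
    · exact hNr.const_div_atTop _

/-- the exact algebraic identity behind the final formula -/
lemma final_alg {u v r n I : ℝ} (hu : 0 < u) (hv : 0 < v) (hr : 0 < r) (hn : n = u * r)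
    (hI : I = 2 * (v ^ 2 / u ^ 2) - v * F v) (hIp : 0 < I) :
    √(2 * n * Real.pi) * Real.exp (H v / 2) * √(2 * Real.pi * ((n / v) ^ 3 * I)) =
     r ^ 2 / (v / ((2 : ℝ) ^ ((3 : ℝ) / 2) * Real.pi * u) *
      (Real.exp v - 1 - u ^ 2 / 2 * Real.exp v) ^ (-(1 : ℝ) / 2)) := by
  have hp := Real.pi_pos
  have hn0 : 0 < n := by rw [hn]; positivity
  have hev : 0 < Real.exp v - 1 := by linarith [Real.add_one_le_exp v]
  have hD : D v = (Real.exp v - 1) / v := D_of_ne hv.ne'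
  have hIe : I = 2 * v ^ 2 / (u ^ 2 * (Real.exp v - 1)) *
      (Real.exp v - 1 - u ^ 2 / 2 * Real.exp v) := by
    rw [hI, F_eq, hD]; field_simp
  set d := Real.exp v - 1 - u ^ 2 / 2 * Real.exp v with hd
  have hdp : 0 < d := by
    rw [hIe] at hIp
    exact (pos_iff_pos_of_mul_pos hIp).1 (by positivity)
  have e1 : Real.exp (H v / 2) = √(D v) := by
    rw [Real.sqrt_eq_rpow, Real.rpow_def_of_pos (D_pos v), H]; congr 1; ring
  have e2 : d ^ (-(1:ℝ) / 2) = (√d)⁻¹ := by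
    rw [Real.sqrt_eq_rpow, ← Real.rpow_neg hdp.le]; congr 1; ring
  have e3 : (2:ℝ) ^ ((3:ℝ) / 2) = 2 * √2 := by
    rw [Real.sqrt_eq_rpow, ← Real.rpow_one_add' (by norm_num) (by norm_num)]; norm_num
  have hs2 : √(2:ℝ) ^ 2 = 2 := Real.sq_sqrt (by norm_num)
  have hsd : √d ^ 2 = d := Real.sq_sqrt hdp.le
  have hDp := D_pos v
  have hsd0 : 0 < √d := Real.sqrt_pos.2 hdp
  rw [e1, e2, e3, ← Real.sqrt_mul (by positivity), ← Real.sqrt_mul (by positivity)]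
  have e4 : r ^ 2 / (v / (2 * √2 * Real.pi * u) * (√d)⁻¹) =
      r ^ 2 * (2 * √2 * Real.pi * u) * √d / v := by
    field_simp
  rw [e4]
  apply (Real.sqrt_eq_iff_mul_self_eq (by positivity) (by positivity)).2
  rw [hD, hIe, hn]
  have e5 : r ^ 2 * (2 * √2 * Real.pi * u) * √d / v * (r ^ 2 * (2 * √2 * Real.pi * u) * √d / v)
      = r ^ 4 * (4 * √2 ^ 2 * Real.pi ^ 2 * u ^ 2) * √d ^ 2 / v ^ 2 := by
    ring
  rw [e5, hs2, hsd]
  field_simp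
  try ring

lemma final_exp {u v r n I : ℝ} (hu : 0 < u) (hv : 0 < v) (hr : 0 < r) (hn : n = u * r)
    (hI : I = v * H v - (v ^ 2 / u ^ 2) + v) :
    -(r ^ 2 * (v / n)) + (n * Real.log v - n + (n / v) * I) =
      -r * (2 * v / u - u * Real.log (Real.exp v - 1)) := by
  have hev : 0 < Real.exp v - 1 := by linarith [Real.add_one_le_exp v]
  have hH : H v = Real.log (Real.exp v - 1) - Real.log v := by
    rw [H, D_of_ne hv.ne', Real.log_div hev.ne' hv.ne']
  rw [hI, hH, hn]
  field_simp
  ring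

end Szek

namespace Szek
open MeasureTheory Filter Topology

lemma mean_close {a b : ℝ} (ha : 0 < a) (hb : 0 < b) : ∃ C : ℝ, ∀ (E N : ℕ) (v : ℝ), 0 < N →
    a ≤ v → v ≤ b → (E : ℝ) = (N / v) ^ 2 * (∫ t in (0:ℝ)..v, F t) →
    |(E : ℝ) - mu (v / N) N| ≤ C * N := by
  obtain ⟨C, hC0, hC⟩ := trap F_contDiff b hb
  refine ⟨(b / 2 + C) / a, fun E N v hN hav hvb hE => ?_⟩
  have hv : 0 < v := by linarith
  have hn : (1:ℝ) ≤ N := by exact_mod_cast hN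
  have hc := hC N hN v hv hvb
  rw [mu_eq hv hN, hE]
  set I := ∫ t in (0:ℝ)..v, F t
  set S := ∑ j ∈ Finset.range N, F ((j + 1 : ℕ) * (v / N))
  have k1 := F_le hv.le
  have k2 := one_le_F hv.le
  have k3 : F 0 = 1 := by simp [F]
  have k4 : C / N ≤ C := div_le_self hC0 hn
  rw [k3] at hc
  have hc2 := abs_le.1 hc
  have e : (N / v) ^ 2 * I - N / v * S = (N / v) * ((N / v) * I - S) := by ring
  rw [e, abs_mul, abs_of_pos (by positivity)]
  have h1 : |N / v * I - S| ≤ b / 2 + C := by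
    rw [abs_le]; constructor <;> linarith
  calc N / v * |N / v * I - S| ≤ N / a * (b / 2 + C) := by gcongr
    _ = _ := by ring

theorem main_lim (v : ℝ → ℝ)
    (hv : ∀ u : ℝ, 0 < u → u < Real.sqrt 2 →
      0 < v u ∧ (v u) ^ 2 / u ^ 2 = ∫ t in (0 : ℝ)..(v u), F t)
    (gbar fbar : ℝ → ℝ)
    (hg : ∀ u : ℝ, gbar u = 2 * v u / u - u * Real.log (Real.exp (v u) - 1))
    (hf : ∀ u : ℝ, fbar u = v u / ((2 : ℝ) ^ ((3 : ℝ) / 2) * Real.pi * u) *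
      (Real.exp (v u) - 1 - u ^ 2 / 2 * Real.exp (v u)) ^ (-(1 : ℝ) / 2))
    (δ : ℝ) (hδ : 0 < δ) (hδ2 : 2 * δ < Real.sqrt 2) :
    Tendsto (fun p : ℕ × ℕ => (q p.1 p.2 : ℝ) * (p.1 : ℝ) *
          Real.exp (-(Real.sqrt p.1) * gbar ((p.2 : ℝ) / Real.sqrt p.1)) /
          fbar ((p.2 : ℝ) / Real.sqrt p.1))
      (comap Prod.fst atTop ⊓ 𝓟 {p : ℕ × ℕ | 0 < p.2 ∧ δ ≤ (p.2 : ℝ) / Real.sqrt p.1 ∧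
        (p.2 : ℝ) / Real.sqrt p.1 ≤ Real.sqrt 2 - δ}) (𝓝 1) := by
  set l : Filter (ℕ × ℕ) := comap Prod.fst atTop ⊓ 𝓟 {p : ℕ × ℕ | 0 < p.2 ∧
    δ ≤ (p.2 : ℝ) / Real.sqrt p.1 ∧ (p.2 : ℝ) / Real.sqrt p.1 ≤ Real.sqrt 2 - δ} with hl
  have hEt : Tendsto (fun p : ℕ × ℕ => p.1) l atTop := tendsto_comap.mono_left inf_le_left
  have hmem : ∀ᶠ p in l, 0 < p.2 ∧
    δ ≤ (p.2 : ℝ) / Real.sqrt p.1 ∧ (p.2 : ℝ) / Real.sqrt p.1 ≤ Real.sqrt 2 - δ :=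
    Filter.Eventually.filter_mono inf_le_right (Filter.eventually_principal.2 fun _ h => h)
  have hEr : Tendsto (fun p : ℕ × ℕ => Real.sqrt p.1) l atTop :=
    Real.tendsto_sqrt_atTop.comp (tendsto_natCast_atTop_atTop.comp hEt)
  have hE1 : ∀ᶠ p in l, 1 ≤ p.1 := hEt.eventually_ge_atTop 1
  have hNt : Tendsto (fun p : ℕ × ℕ => p.2) l atTop := by
    rw [← tendsto_natCast_atTop_iff (R := ℝ)]
    apply tendsto_atTop_mono' l _ (hEr.const_mul_atTop hδ)
    filter_upwards [hmem, hE1] with p hp h1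
    have h2 : (0:ℝ) < √p.1 := Real.sqrt_pos.2 (by exact_mod_cast h1)
    exact (le_div_iff₀ h2).1 hp.2.1
  set b : ℝ := 1 / (1 / (√2 - δ) ^ 2 - 1 / 2) with hbd
  have hs2 : √(2:ℝ) ^ 2 = 2 := Real.sq_sqrt (by norm_num)
  have hw0 : 0 < √2 - δ := by linarith
  have hw : 0 < 1 / (√2 - δ) ^ 2 - 1 / 2 := by
    have : (√2 - δ) ^ 2 < 2 := by nlinarith
    rw [sub_pos]
    exact one_div_lt_one_div_of_lt (by positivity) this
  have hb : 0 < b := by positivity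
  set a : ℝ := δ ^ 2 with had
  have ha : 0 < a := by positivity
  set U : ℕ × ℕ → ℝ := fun p => (p.2 : ℝ) / Real.sqrt p.1 with hU
  have hva : ∀ᶠ p in l, a ≤ v (U p) := by
    filter_upwards [hmem] with p ⟨_, h1, h2⟩
    have hu : 0 < U p := by linarith
    obtain ⟨h3, h4⟩ := hv (U p) hu (by linarith)
    refine le_trans ?_ (v_lower hu h3 h4)
    exact pow_le_pow_left₀ hδ.le h1 2
  have hvb : ∀ᶠ p in l, v (U p) ≤ b := by
    filter_upwards [hmem] with p ⟨_, h1, h2⟩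
    have hu : 0 < U p := by linarith
    obtain ⟨h3, h4⟩ := hv (U p) hu (by linarith)
    have h5 := v_upper hu h3 h4
    rw [hbd, le_div_iff₀ hw]
    refine le_trans ?_ h5
    gcongr
  obtain ⟨C, hC⟩ := mean_close ha hb
  have hclose : ∀ᶠ p in l, |(p.1 : ℝ) - mu (v (U p) / p.2) p.2| ≤ C * p.2 := by
    filter_upwards [hmem, hva, hvb, hE1] with p ⟨h0, h1, h2⟩ h3 h4 h5
    have hu : 0 < U p := by linarith
    have hE0 : (0:ℝ) < p.1 := by exact_mod_cast h5
    obtain ⟨h6, h7⟩ := hv (U p) hu (by linarith)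
    apply hC _ _ _ h0 h3 h4
    rw [← h7]
    have hr : 0 < √(p.1:ℝ) := Real.sqrt_pos.2 hE0
    have e : (p.2 : ℝ) = U p * √(p.1:ℝ) := by simp only [hU]; field_simp
    have e2 : √(p.1:ℝ) ^ 2 = p.1 := Real.sq_sqrt hE0.le
    rw [e]
    field_simp
    exact e2.symm
  have T0 := clt (fun p : ℕ × ℕ => p.1) (fun p => p.2) (fun p => v (U p)) ha hNt hva hvb hclose
  have T1 := PP_asymp (fun p : ℕ × ℕ => p.2) (fun p => v (U p)) ha hb hNt hva hvb
  obtain ⟨hIp, T2⟩ := sig_asymp (fun p : ℕ × ℕ => p.2) (fun p => v (U p)) ha hb hNt hva hvb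
  have T3 := T0.div (T1.mul T2.sqrt) (by simp)
  rw [Real.sqrt_one, one_mul, div_one] at T3
  refine (tendsto_congr' ?_).1 T3
  filter_upwards [hmem, hva, hvb, hE1, hIp] with p ⟨h0, h1, h2⟩ h3 h4 h5 hI
  have hu : 0 < U p := by linarith
  have hE0 : (0:ℝ) < p.1 := by exact_mod_cast h5
  have hN0 : (0:ℝ) < p.2 := by exact_mod_cast h0
  obtain ⟨h6, h7⟩ := hv (U p) hu (by linarith)
  have hr : 0 < √(p.1:ℝ) := Real.sqrt_pos.2 hE0
  have e : (p.2 : ℝ) = U p * √(p.1:ℝ) := by simp only [hU]; field_simp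
  have e2 : √(p.1:ℝ) ^ 2 = p.1 := Real.sq_sqrt hE0.le
  have A1 := final_alg hu h6 hr e (by rw [int_K, ← h7]) hI
  have A2 := final_exp hu h6 hr e (by rw [int_H, ← h7] : (∫ t in (0:ℝ)..(v (U p)), H t) = _)
  rw [← hf, e2] at A1
  rw [← hg, e2] at A2
  change _ = (q p.1 p.2 : ℝ) * (p.1 : ℝ) * Real.exp (-√(p.1:ℝ) * gbar (U p)) / fbar (U p)
  rw [mul_div_right_comm, mul_div_assoc, ← A1, ← A2]
  rw [Pi.div_apply]
  have hPP := PP_pos (div_pos h6 hN0) p.2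
  have hsig : 0 < sig2 (v (U p) / p.2) p.2 := by
    have := (sig2_bounds ha h3 h4 h0).1
    have h8 : 0 < sig2 (v (U p) / p.2) p.2 / (p.2:ℝ) ^ 3 :=
      lt_of_lt_of_le (by have := Real.exp_pos (-b); positivity) this
    exact (div_pos_iff_of_pos_right (by positivity)).1 h8
  set I := ∫ t in (0:ℝ)..(v (U p)), K t
  set L := ∫ t in (0:ℝ)..(v (U p)), H t
  set W := sig2 (v (U p) / p.2) p.2
  have hB : 0 < ((p.2:ℝ) / v (U p)) ^ 3 * I := by positivity
  set B := ((p.2:ℝ) / v (U p)) ^ 3 * I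
  have hpi := Real.pi_pos
  rw [Real.sqrt_mul (by positivity : 0 ≤ 2 * Real.pi) W, Real.sqrt_mul (by positivity : 0 ≤ 2 * Real.pi) B,
    Real.sqrt_div' _ hB.le, Real.exp_add _ (H (v (U p)) / 2), Real.exp_add (-((p.1:ℝ) * _)) _]
  have s1 : 0 < √W := Real.sqrt_pos.2 hsig
  have s2 : 0 < √B := Real.sqrt_pos.2 hB
  have s3 : 0 < √(2 * (p.2:ℝ) * Real.pi) := Real.sqrt_pos.2 (by positivity)
  generalize Real.exp (-((p.1:ℝ) * (v (U p) / p.2))) = X1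
  have hX2 := Real.exp_pos ((p.2:ℝ) * Real.log (v (U p)) - p.2 + p.2 / v (U p) * L)
  set X2 := Real.exp ((p.2:ℝ) * Real.log (v (U p)) - p.2 + p.2 / v (U p) * L)
  have hX3 := Real.exp_pos (H (v (U p)) / 2)
  set X3 := Real.exp (H (v (U p)) / 2)
  set Q := PP (v (U p) / p.2) p.2
  field_simp

end Szek

theorem stmt_14
    -- `v u` is the unique solution of the saddle-point equation for `0 < u < √2`
    (v : ℝ → ℝ)
    (hv : ∀ u : ℝ, 0 < u → u < Real.sqrt 2 →
      0 < v u ∧ (v u) ^ 2 / u ^ 2 = ∫ t in (0 : ℝ)..(v u), F t)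
    (gbar fbar : ℝ → ℝ)
    (hg : ∀ u : ℝ, gbar u = 2 * v u / u - u * Real.log (Real.exp (v u) - 1))
    (hf : ∀ u : ℝ, fbar u = v u / ((2 : ℝ) ^ ((3 : ℝ) / 2) * Real.pi * u) *
      (Real.exp (v u) - 1 - u ^ 2 / 2 * Real.exp (v u)) ^ (-(1 : ℝ) / 2))
    (δ : ℝ) (hδ : 0 < δ) (hδ2 : 2 * δ < Real.sqrt 2) (ε : ℝ) (hε : 0 < ε) :
    ∃ E₀ : ℕ, ∀ E : ℕ, E₀ ≤ E → ∀ N : ℕ, 0 < N →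
      δ ≤ (N : ℝ) / Real.sqrt E → (N : ℝ) / Real.sqrt E ≤ Real.sqrt 2 - δ →
      |(q E N : ℝ) * (E : ℝ) *
          Real.exp (-(Real.sqrt E) * gbar ((N : ℝ) / Real.sqrt E)) /
          fbar ((N : ℝ) / Real.sqrt E) - 1| ≤ ε := by
  have h := Szek.main_lim v hv gbar fbar hg hf δ hδ hδ2
  have h1 := h.eventually (Metric.closedBall_mem_nhds (1:ℝ) hε)
  rw [Filter.eventually_inf_principal, Filter.eventually_comap, Filter.eventually_atTop] at h1
  obtain ⟨E₀, h2⟩ := h1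
  refine ⟨E₀, fun E hE N hN h3 h4 => ?_⟩
  exact h2 E hE (E, N) rfl ⟨hN, h3, h4⟩
end

section
/- For every δ > 0 and every ε > 0, there exists E₀ such that for all integers E ≥ E₀ and all positive integers N with δ ≤ N/√E ≤ 1/δ, one has | P(E,N) · E · exp(-√E · g(N/√E)) / f(N/√E) - 1 | ≤ ε. -/
/-- `P E N`: the number of partitions of `E` into at most `N` positive integer parts. -/
def P (E N : ℕ) : ℕ :=
  (Finset.univ.filter fun p : Nat.Partition E => p.parts.card ≤ N).card

/-- The function `t ↦ t / (e^t - 1)`, extended continuously by the value `1` at `t = 0`. -/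
noncomputable def G (t : ℝ) : ℝ := if t = 0 then 1 else t / (Real.exp t - 1)

lemma ms_pred_sum (s : Multiset ℕ) (h : ∀ a ∈ s, 0 < a) :
    (s.map Nat.pred).sum + s.card = s.sum := by
  induction s using Multiset.induction_on with
  | empty => simp
  | cons a s ih =>
    have h1 := ih (fun b hb => h b (Multiset.mem_cons_of_mem hb))
    have h2 := h a (Multiset.mem_cons_self a s)
    simp only [Multiset.map_cons, Multiset.sum_cons, Multiset.card_cons, Nat.pred_eq_sub_one] at *
    omega

lemma ms_succ_sum (s : Multiset ℕ) : (s.map Nat.succ).sum = s.sum + s.card := by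
  induction s using Multiset.induction_on with
  | empty => simp
  | cons a s ih =>
    simp only [Multiset.map_cons, Multiset.sum_cons, Multiset.card_cons, Nat.succ_eq_add_one] at *
    omega

lemma ms_roundtrip (s : Multiset ℕ) (h : ∀ a ∈ s, 0 < a) :
    (((s.map Nat.pred).filter (· ≠ 0)).card ≤ s.card) ∧
    ((s.map Nat.pred).filter (· ≠ 0)).map Nat.succ +
      Multiset.replicate (s.card - ((s.map Nat.pred).filter (· ≠ 0)).card) 1 = s := by
  induction s using Multiset.induction_on with
  | empty => simp
  | cons a s ih =>
    obtain ⟨h0, h1⟩ := ih (fun b hb => h b (Multiset.mem_cons_of_mem hb))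
    have h2 := h a (Multiset.mem_cons_self a s)
    obtain ⟨a, rfl⟩ : ∃ b, a = b + 1 := ⟨a - 1, by omega⟩
    rcases Nat.eq_zero_or_pos a with rfl | ha
    · simp only [Multiset.map_cons, zero_add, Nat.pred_succ, Nat.pred_eq_sub_one, Nat.sub_self, ne_eq,
        not_true_eq_false, not_false_eq_true, Multiset.filter_cons_of_neg, Multiset.card_cons] at *
      refine ⟨by omega, ?_⟩
      rw [Nat.succ_sub h0, Multiset.replicate_succ, Multiset.add_cons, h1]
    · have ha' : a ≠ 0 := by omega
      simp only [Multiset.map_cons, Nat.pred_eq_sub_one, Nat.add_sub_cancel, ne_eq, ha',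
        not_false_eq_true, Multiset.filter_cons_of_pos, Multiset.card_cons, Nat.succ_eq_add_one,
        Nat.add_sub_add_right] at *
      refine ⟨by omega, ?_⟩
      rw [Multiset.cons_add, h1]

lemma ms_filter_pos (s : Multiset ℕ) (h : ∀ a ∈ s, 0 < a) : s.filter (· ≠ 0) = s :=
  Multiset.filter_eq_self.2 fun a ha => (h a ha).ne'

lemma card_exact (M N : ℕ) :
    (Finset.univ.filter fun p : Nat.Partition (M + N) => p.parts.card = N).card = P M N := by
  unfold P
  refine Finset.card_bij'
    (fun p hp => Nat.Partition.ofSums M (p.parts.map Nat.pred) (by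
      have := ms_pred_sum p.parts (fun a ha => p.parts_pos ha)
      rw [p.parts_sum, (Finset.mem_filter.1 hp).2] at this
      omega))
    (fun q hq => ⟨q.parts.map Nat.succ + Multiset.replicate (N - q.parts.card) 1, by
      intro i hi
      rcases Multiset.mem_add.1 hi with h | h
      · obtain ⟨a, _, rfl⟩ := Multiset.mem_map.1 h
        exact Nat.succ_pos a
      · rw [Multiset.eq_of_mem_replicate h]; exact Nat.one_pos, by
      have := (Finset.mem_filter.1 hq).2
      rw [Multiset.sum_add, ms_succ_sum, q.parts_sum, Multiset.sum_replicate]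
      simp only [smul_eq_mul, mul_one]
      omega⟩) ?_ ?_ ?_ ?_
  · intro p hp
    have h2 := (Finset.mem_filter.1 hp).2
    have := (ms_roundtrip p.parts (fun a ha => p.parts_pos ha)).1
    simp only [Finset.mem_filter, Finset.mem_univ, true_and, Nat.Partition.ofSums_parts]
    omega
  · intro q hq
    have := (Finset.mem_filter.1 hq).2
    simp only [Finset.mem_filter, Finset.mem_univ, true_and, Multiset.card_add, Multiset.card_map,
      Multiset.card_replicate]
    omega
  · intro p hp
    have h2 := (Finset.mem_filter.1 hp).2
    have := (ms_roundtrip p.parts (fun a ha => p.parts_pos ha)).2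
    rw [h2] at this
    ext1
    simp only [Nat.Partition.ofSums_parts]
    exact this
  · intro q hq
    ext1
    simp only [Nat.Partition.ofSums_parts, Multiset.map_add, Multiset.map_map, Multiset.map_replicate,
      Multiset.filter_add]
    have e1 : (q.parts.map (Nat.pred ∘ Nat.succ)) = q.parts := by
      simp [Function.comp_def]
    rw [e1, ms_filter_pos q.parts (fun a ha => q.parts_pos ha)]
    have e2 : (Multiset.replicate (N - q.parts.card) (Nat.pred 1)).filter (· ≠ 0) = 0 := by
      rw [Multiset.filter_eq_nil]
      intro a ha
      rw [Multiset.eq_of_mem_replicate ha]; simp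
    rw [e2, add_zero]

lemma P_split (E N : ℕ) : P E (N + 1) = P E N +
    (Finset.univ.filter fun p : Nat.Partition E => p.parts.card = N + 1).card := by
  unfold P
  rw [← Finset.card_union_of_disjoint]
  · congr 1
    ext p
    simp only [Finset.mem_filter, Finset.mem_univ, true_and, Finset.mem_union]
    omega
  · rw [Finset.disjoint_filter]
    intro p _ h
    omega

lemma P_rec (M N : ℕ) : P (M + (N + 1)) (N + 1) = P (M + (N + 1)) N + P M (N + 1) := by
  rw [P_split, card_exact]

lemma P_rec_lt (E N : ℕ) (h : E < N + 1) : P E (N + 1) = P E N := by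
  rw [P_split]
  suffices (Finset.univ.filter fun p : Nat.Partition E => p.parts.card = N + 1).card = 0 by omega
  rw [Finset.card_eq_zero, Finset.filter_eq_empty_iff]
  intro p _ hp
  have := ms_pred_sum p.parts (fun a ha => p.parts_pos ha)
  rw [p.parts_sum] at this
  omega

lemma P_zero_zero : P 0 0 = 1 := by
  unfold P
  simp

lemma P_succ_zero (E : ℕ) : P (E + 1) 0 = 0 := by
  unfold P
  rw [Finset.card_eq_zero, Finset.filter_eq_empty_iff]
  intro p _ hp
  have h0 : p.parts = 0 := Multiset.card_eq_zero.1 (Nat.le_zero.1 hp)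
  have := p.parts_sum
  rw [h0] at this
  simp at this

/-- generating function of `P · N` -/
lemma P_summable (N : ℕ) (r : ℝ) (hr0 : 0 ≤ r) (hr1 : r < 1) :
    Summable fun E : ℕ => (P E N : ℝ) * r ^ E := by
  induction N with
  | zero =>
    refine summable_of_ne_finset_zero (s := {0}) ?_
    intro E hE
    obtain ⟨E, rfl⟩ : ∃ b, E = b + 1 := ⟨E - 1, by simp at hE; omega⟩
    rw [P_succ_zero]; simp
  | succ N ih =>
    have hq : r ^ (N + 1) < 1 := pow_lt_one₀ hr0 hr1 (by omega)
    have hnn : ∀ (K E : ℕ), 0 ≤ (P E K : ℝ) * r ^ E := fun K E => by positivity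
    refine summable_of_sum_range_le (c := (∑' E, (P E N : ℝ) * r ^ E) / (1 - r ^ (N + 1)))
      (hnn _) ?_
    intro n
    rw [le_div_iff₀ (by linarith)]
    have key : ∑ i ∈ Finset.range n, (P i (N + 1) : ℝ) * r ^ i ≤
        ∑ i ∈ Finset.range n, (P i N : ℝ) * r ^ i +
        r ^ (N + 1) * ∑ i ∈ Finset.range n, (P i (N + 1) : ℝ) * r ^ i := by
      induction n using Nat.strong_induction_on with
      | _ n _ =>
      rcases lt_or_ge n (N + 1) with h | h
      · have : ∑ i ∈ Finset.range n, (P i (N + 1) : ℝ) * r ^ i =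
            ∑ i ∈ Finset.range n, (P i N : ℝ) * r ^ i := by
          refine Finset.sum_congr rfl fun i hi => ?_
          rw [P_rec_lt _ _ (by have := Finset.mem_range.1 hi; omega)]
        have h3 : 0 ≤ r ^ (N + 1) * ∑ i ∈ Finset.range n, (P i (N + 1) : ℝ) * r ^ i :=
          mul_nonneg (by positivity) (Finset.sum_nonneg fun i _ => hnn _ _)
        linarith
      · obtain ⟨m, rfl⟩ : ∃ m, n = (N + 1) + m := ⟨n - (N + 1), by omega⟩
        have h1 : ∑ i ∈ Finset.range (N + 1), (P i (N + 1) : ℝ) * r ^ i =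
            ∑ i ∈ Finset.range (N + 1), (P i N : ℝ) * r ^ i := by
          refine Finset.sum_congr rfl fun i hi => ?_
          rw [P_rec_lt _ _ (Finset.mem_range.1 hi)]
        have h2 : ∑ i ∈ Finset.range m, (P ((N + 1) + i) (N + 1) : ℝ) * r ^ ((N + 1) + i) =
            ∑ i ∈ Finset.range m, (P ((N + 1) + i) N : ℝ) * r ^ ((N + 1) + i) +
            r ^ (N + 1) * ∑ i ∈ Finset.range m, (P i (N + 1) : ℝ) * r ^ i := by
          rw [Finset.mul_sum, ← Finset.sum_add_distrib]
          refine Finset.sum_congr rfl fun i hi => ?_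
          rw [add_comm (N + 1) i, P_rec]
          push_cast
          ring
        have h3 : ∑ i ∈ Finset.range m, (P i (N + 1) : ℝ) * r ^ i ≤
            ∑ i ∈ Finset.range ((N + 1) + m), (P i (N + 1) : ℝ) * r ^ i :=
          Finset.sum_le_sum_of_subset_of_nonneg (Finset.range_mono (by omega))
            fun i _ _ => hnn _ _
        have h4 : r ^ (N + 1) * ∑ i ∈ Finset.range m, (P i (N + 1) : ℝ) * r ^ i ≤
          r ^ (N + 1) * ∑ i ∈ Finset.range ((N + 1) + m), (P i (N + 1) : ℝ) * r ^ i :=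
          mul_le_mul_of_nonneg_left h3 (by positivity)
        rw [Finset.sum_range_add, Finset.sum_range_add (fun i => (P i N : ℝ) * r ^ i)]
        rw [Finset.sum_range_add] at h4
        linarith
    have h5 : ∑ i ∈ Finset.range n, (P i N : ℝ) * r ^ i ≤ ∑' E, (P E N : ℝ) * r ^ E :=
      ih.sum_le_tsum _ fun i _ => hnn _ _
    linarith

lemma P_summable_c (N : ℕ) (q : ℂ) (hq : ‖q‖ < 1) :
    Summable fun E : ℕ => (P E N : ℂ) * q ^ E := by
  refine Summable.of_norm ?_
  have := P_summable N ‖q‖ (norm_nonneg _) hq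
  refine this.congr fun E => ?_
  simp

lemma P_tsum (N : ℕ) (q : ℂ) (hq : ‖q‖ < 1) :
    ∑' E : ℕ, (P E N : ℂ) * q ^ E = ∏ k ∈ Finset.range N, (1 - q ^ (k + 1))⁻¹ := by
  induction N with
  | zero =>
    rw [tsum_eq_single 0]
    · simp [P_zero_zero]
    · intro E hE
      obtain ⟨E, rfl⟩ : ∃ b, E = b + 1 := ⟨E - 1, by omega⟩
      rw [P_succ_zero]; simp
  | succ N ih =>
    rw [Finset.prod_range_succ, ← ih]
    have hq1 : ‖q ^ (N + 1)‖ < 1 := by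
      rw [norm_pow]; exact pow_lt_one₀ (norm_nonneg _) hq (by omega)
    have hne : 1 - q ^ (N + 1) ≠ 0 := by
      intro h
      rw [sub_eq_zero] at h
      rw [← h] at hq1
      simp at hq1
    rw [eq_mul_inv_iff_mul_eq₀ hne]
    have s1 := P_summable_c (N + 1) q hq
    have s0 := P_summable_c N q hq
    have e1 := s1.sum_add_tsum_nat_add (N + 1)
    have e0 := s0.sum_add_tsum_nat_add (N + 1)
    have h1 : ∑ i ∈ Finset.range (N + 1), (P i (N + 1) : ℂ) * q ^ i =
            ∑ i ∈ Finset.range (N + 1), (P i N : ℂ) * q ^ i := by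
      refine Finset.sum_congr rfl fun i hi => ?_
      rw [P_rec_lt _ _ (Finset.mem_range.1 hi)]
    have h2 : ∑' i, (P (i + (N + 1)) (N + 1) : ℂ) * q ^ (i + (N + 1)) =
        ∑' i, (P (i + (N + 1)) N : ℂ) * q ^ (i + (N + 1)) +
        q ^ (N + 1) * ∑' i, (P i (N + 1) : ℂ) * q ^ i := by
      rw [← tsum_mul_left, ← Summable.tsum_add]
      · refine tsum_congr fun i => ?_
        rw [P_rec]
        push_cast
        ring
      · exact (summable_nat_add_iff (f := fun E : ℕ => (P E N : ℂ) * q ^ E) (N + 1)).2 s0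
      · exact s1.mul_left _
    rw [h2, h1] at e1
    linear_combination (-1 : ℂ) * e1 + e0

section Aux
open Real Set Filter Topology MeasureTheory

noncomputable def mm (α : ℝ) (k : ℕ) : ℝ := (Real.exp (α * (k + 1)) - 1)⁻¹

noncomputable def Fp (α : ℝ) (N : ℕ) : ℝ :=
  ∏ k ∈ Finset.range N, (1 - Real.exp (-(α * (k + 1))))⁻¹

noncomputable def phi (α : ℝ) (N : ℕ) (θ : ℝ) : ℂ :=
  ∏ k ∈ Finset.range N,
    (1 - (mm α k : ℂ) * (Complex.exp (((k + 1 : ℕ) * θ : ℝ) * Complex.I) - 1))⁻¹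

lemma exp_arg_pos {α : ℝ} (hα : 0 < α) (k : ℕ) : 0 < α * ((k : ℝ) + 1) := by positivity

lemma mm_pos {α : ℝ} (hα : 0 < α) (k : ℕ) : 0 < mm α k := by
  unfold mm
  have := Real.one_lt_exp_iff.2 (exp_arg_pos hα k)
  exact inv_pos.2 (by linarith)

lemma one_sub_exp_pos {α : ℝ} (hα : 0 < α) (k : ℕ) : 0 < 1 - Real.exp (-(α * ((k : ℝ) + 1))) := by
  have := Real.exp_lt_one_iff.2 (show -(α * ((k : ℝ) + 1)) < 0 by linarith [exp_arg_pos hα k])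
  linarith

lemma Fp_pos {α : ℝ} (hα : 0 < α) (N : ℕ) : 0 < Fp α N :=
  Finset.prod_pos fun k _ => inv_pos.2 (one_sub_exp_pos hα k)

lemma prod_eq {α : ℝ} (hα : 0 < α) (N : ℕ) (θ : ℝ) :
    ∏ k ∈ Finset.range N, (1 - (Complex.exp (-(α : ℂ) + θ * Complex.I)) ^ (k + 1))⁻¹ =
      (Fp α N : ℂ) * phi α N θ := by
  unfold Fp phi
  rw [Complex.ofReal_prod, ← Finset.prod_mul_distrib]
  refine Finset.prod_congr rfl fun k _ => ?_
  rw [Complex.ofReal_inv, ← mul_inv]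
  congr 1
  rw [← Complex.exp_nat_mul]
  have e1 : ((k + 1 : ℕ) : ℂ) * (-(α : ℂ) + θ * Complex.I) =
      ((-(α * ((k : ℝ) + 1)) : ℝ) : ℂ) + (((k + 1 : ℕ) * θ : ℝ) : ℂ) * Complex.I := by
    push_cast; ring
  rw [e1, Complex.exp_add]
  generalize Complex.exp ((((k + 1 : ℕ) * θ : ℝ) : ℂ) * Complex.I) = e
  have h1 : (mm α k) * (1 - Real.exp (-(α * ((k : ℝ) + 1)))) = Real.exp (-(α * ((k : ℝ) + 1))) := by
    unfold mm
    have := Real.one_lt_exp_iff.2 (exp_arg_pos hα k)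
    rw [Real.exp_neg]
    generalize Real.exp (α * ((k : ℝ) + 1)) = x at *
    have h1 : x - 1 ≠ 0 := by linarith
    have h2 : x ≠ 0 := by linarith
    field_simp
  have h2 : (mm α k : ℂ) * (1 - (Real.exp (-(α * ((k : ℝ) + 1))) : ℂ))
      = (Real.exp (-(α * ((k : ℝ) + 1))) : ℂ) := by
    exact_mod_cast h1
  rw [← Complex.ofReal_exp]
  push_cast at h2 ⊢
  linear_combination (e - 1) * h2

lemma fourier_orth (n E : ℕ) :
    ∫ θ in (-π)..π, Complex.exp (((n : ℂ) - E) * (θ * Complex.I)) = if n = E then 2 * (π : ℂ) else 0 := by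
  split_ifs with h
  · subst h
    simp
    ring
  · have hne : ((n : ℂ) - E) * Complex.I ≠ 0 := by
      refine mul_ne_zero ?_ Complex.I_ne_zero
      rw [sub_ne_zero]
      exact_mod_cast h
    have e1 : ∀ θ : ℝ, Complex.exp (((n : ℂ) - E) * (θ * Complex.I)) =
        Complex.exp ((((n : ℂ) - E) * Complex.I) * θ) := fun θ => by ring_nf
    simp_rw [e1]
    rw [integral_exp_mul_complex hne]
    have e2 : Complex.exp ((((n : ℂ) - E) * Complex.I) * (π : ℝ)) =
        Complex.exp ((((n : ℂ) - E) * Complex.I) * ((-π : ℝ) : ℂ)) := by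
      rw [Complex.exp_eq_exp_iff_exists_int]
      refine ⟨(n : ℤ) - E, ?_⟩
      push_cast
      ring
    rw [e2]
    simp

lemma coeff_formula {α : ℝ} (hα : 0 < α) (E N : ℕ) :
    (P E N : ℂ) * (2 * π) * Real.exp (-(α * E)) =
      (Fp α N : ℂ) * ∫ θ in (-π)..π, phi α N θ * Complex.exp (-(E * (θ * Complex.I))) := by
  rw [← intervalIntegral.integral_const_mul]
  have hq : ∀ θ : ℝ, ‖Complex.exp (-(α : ℂ) + θ * Complex.I)‖ = Real.exp (-α) := fun θ => by
    rw [Complex.norm_exp]; simp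
  have hlt : Real.exp (-α) < 1 := Real.exp_lt_one_iff.2 (by linarith)
  have hs := P_summable N (Real.exp (-α)) (Real.exp_pos _).le hlt
  have key : HasSum (fun n : ℕ => ∫ θ in (-π)..π, (P n N : ℂ) *
        (Complex.exp (-(α : ℂ) + θ * Complex.I)) ^ n * Complex.exp (-(E * (θ * Complex.I))))
      (∫ θ in (-π)..π, (Fp α N : ℂ) * (phi α N θ * Complex.exp (-(E * (θ * Complex.I))))) := by
    refine intervalIntegral.hasSum_integral_of_dominated_convergence
      (fun n _ => (P n N : ℝ) * Real.exp (-α) ^ n) ?_ ?_ ?_ ?_ ?_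
    · intro n
      exact Continuous.aestronglyMeasurable (by fun_prop)
    · intro n
      refine Eventually.of_forall fun θ _ => ?_
      rw [norm_mul, norm_mul, norm_pow, hq]
      have : ‖Complex.exp (-(E * (θ * Complex.I)))‖ = 1 := by
        rw [Complex.norm_exp]; simp
      rw [this]; simp
    · exact Eventually.of_forall fun θ _ => hs
    · exact intervalIntegrable_const
    · refine Eventually.of_forall fun θ _ => ?_
      rw [← mul_assoc (Fp α N : ℂ), ← prod_eq hα, ← P_tsum _ _ (by rw [hq]; exact hlt)]
      exact (P_summable_c N _ (by rw [hq]; exact hlt)).hasSum.mul_right _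
  have e : ∀ n : ℕ, (∫ θ in (-π)..π, (P n N : ℂ) *
        (Complex.exp (-(α : ℂ) + θ * Complex.I)) ^ n * Complex.exp (-(E * (θ * Complex.I)))) =
      if n = E then (P E N : ℂ) * (2 * π) * Real.exp (-(α * E)) else 0 := by
    intro n
    have e1 : ∀ θ : ℝ, (P n N : ℂ) *
        (Complex.exp (-(α : ℂ) + θ * Complex.I)) ^ n * Complex.exp (-(E * (θ * Complex.I))) =
        ((P n N : ℂ) * Complex.exp (-(α * n))) * Complex.exp (((n : ℂ) - E) * (θ * Complex.I)) := by
      intro θ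
      rw [← Complex.exp_nat_mul, mul_assoc, mul_assoc, ← Complex.exp_add, ← Complex.exp_add]
      ring_nf
    simp_rw [e1]
    rw [intervalIntegral.integral_const_mul, fourier_orth]
    split_ifs with h
    · subst h
      push_cast
      ring
    · simp
  simp_rw [e] at key
  have h2 := hasSum_ite_eq E ((P E N : ℂ) * (2 * π) * Real.exp (-(α * E)))
  exact h2.unique key

lemma G_zero : G 0 = 1 := by simp [G]

lemma G_ne {t : ℝ} (ht : t ≠ 0) : G t = t / (Real.exp t - 1) := by simp [G, ht]

lemma G_eq_dslope (t : ℝ) : G t = (dslope Real.exp 0 t)⁻¹ := by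
  rcases eq_or_ne t 0 with rfl | h
  · rw [dslope_same]; simp [G]
  · rw [dslope_of_ne _ h, slope_def_field, G_ne h]; simp

lemma exp_sub_one_pos {t : ℝ} (ht : 0 < t) : 0 < Real.exp t - 1 := by
  have := Real.one_lt_exp_iff.2 ht
  linarith

lemma G_pos (t : ℝ) : 0 < G t := by
  rcases lt_trichotomy t 0 with h | rfl | h
  · rw [G_ne h.ne]
    exact div_pos_of_neg_of_neg h (by linarith [Real.exp_lt_one_iff.2 h])
  · simp [G]
  · rw [G_ne h.ne']
    exact div_pos h (exp_sub_one_pos h)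

lemma G_cont : Continuous G := by
  have e : G = fun t => (dslope Real.exp 0 t)⁻¹ := funext G_eq_dslope
  rw [e]
  refine Continuous.inv₀ ?_ ?_
  · have := (continuousOn_dslope (f := Real.exp) (a := (0 : ℝ)) (s := Set.univ) univ_mem).2
      ⟨Real.continuous_exp.continuousOn, Real.differentiableAt_exp⟩
    exact continuousOn_univ.1 this
  · intro t h
    have := G_pos t
    rw [G_eq_dslope, h] at this
    simp at this

lemma tanh_ineq {t : ℝ} (ht : 0 ≤ t) : 2 * (Real.exp t - 1) ≤ t * (Real.exp t + 1) := by
  have hd : ∀ x : ℝ, HasDerivAt (fun x => x * (Real.exp x + 1) - 2 * (Real.exp x - 1))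
      (1 - Real.exp x * (1 - x)) x := by
    intro x
    have h1 := (hasDerivAt_id x).mul ((Real.hasDerivAt_exp x).add_const 1)
    have h2 := ((Real.hasDerivAt_exp x).sub_const 1).const_mul 2
    have h3 := h1.sub h2
    refine h3.congr_deriv ?_
    simp only [id]
    ring
  have hm : Monotone (fun x => x * (Real.exp x + 1) - 2 * (Real.exp x - 1)) := by
    refine monotone_of_deriv_nonneg (fun x => (hd x).differentiableAt) fun x => ?_
    rw [(hd x).deriv]
    have h1 : 1 - x ≤ Real.exp (-x) := by linarith [Real.add_one_le_exp (-x)]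
    have h2 := mul_le_mul_of_nonneg_left h1 (Real.exp_pos x).le
    rw [← Real.exp_add] at h2
    simp at h2
    linarith
  have := hm ht
  simp at this
  linarith

noncomputable def Kf (t : ℝ) : ℝ := G t ^ 2 * Real.exp t

lemma Kf_zero : Kf 0 = 1 := by simp [Kf, G_zero]

lemma Kf_cont : Continuous Kf := by
  unfold Kf
  exact (G_cont.pow 2).mul Real.continuous_exp

lemma Kf_pos (t : ℝ) : 0 < Kf t := by
  unfold Kf
  have := G_pos t
  positivity

lemma G_hasDeriv {t : ℝ} (ht : 0 < t) : HasDerivAt G ((G t - Kf t) / t) t := by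
  have h1 : HasDerivAt (fun x => x / (Real.exp x - 1)) ((1 * (Real.exp t - 1) - t * Real.exp t) / (Real.exp t - 1) ^ 2) t :=
    (hasDerivAt_id t).div ((Real.hasDerivAt_exp t).sub_const 1) (exp_sub_one_pos ht).ne'
  have h2 : G =ᶠ[𝓝 t] (fun x => x / (Real.exp x - 1)) := by
    filter_upwards [lt_mem_nhds ht] with x hx
    exact G_ne hx.ne'
  refine (h1.congr_of_eventuallyEq h2).congr_deriv ?_
  unfold Kf
  rw [G_ne ht.ne']
  have := (exp_sub_one_pos ht).ne'
  field_simp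

lemma G_antitone : AntitoneOn G (Ici 0) := by
  refine antitoneOn_of_deriv_nonpos (convex_Ici 0) G_cont.continuousOn ?_ ?_
  · rw [interior_Ici]
    exact fun x hx => (G_hasDeriv hx).differentiableAt.differentiableWithinAt
  · rw [interior_Ici]
    intro x hx
    have hx : 0 < x := hx
    rw [(G_hasDeriv hx).deriv]
    refine div_nonpos_of_nonpos_of_nonneg ?_ hx.le
    unfold Kf
    have h1 : 1 - x ≤ Real.exp (-x) := by linarith [Real.add_one_le_exp (-x)]
    have h2 := mul_le_mul_of_nonneg_left h1 (Real.exp_pos x).le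
    rw [← Real.exp_add] at h2
    simp at h2
    have h3 : 1 ≤ G x * Real.exp x := by
      rw [G_ne hx.ne', div_mul_eq_mul_div, le_div_iff₀ (exp_sub_one_pos hx)]
      linarith
    have := G_pos x
    nlinarith

lemma Kf_hasDeriv {t : ℝ} (ht : 0 < t) :
    HasDerivAt Kf (2 * G t * ((G t - Kf t) / t) * Real.exp t + G t ^ 2 * Real.exp t) t := by
  have h := ((G_hasDeriv ht).pow 2).mul (Real.hasDerivAt_exp t)
  refine h.congr_deriv ?_
  simp

lemma Kf_antitone : AntitoneOn Kf (Ici 0) := by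
  refine antitoneOn_of_deriv_nonpos (convex_Ici 0) Kf_cont.continuousOn ?_ ?_
  · rw [interior_Ici]
    exact fun x hx => (Kf_hasDeriv hx).differentiableAt.differentiableWithinAt
  · rw [interior_Ici]
    intro x hx
    have hx : 0 < x := hx
    rw [(Kf_hasDeriv hx).deriv]
    have h1 := tanh_ineq hx.le
    have h2 := exp_sub_one_pos hx
    have e : 2 * G x * ((G x - Kf x) / x) * Real.exp x + G x ^ 2 * Real.exp x =
      - (G x * Real.exp x / (Real.exp x - 1) ^ 2 * (x * (Real.exp x + 1) - 2 * (Real.exp x - 1))) := by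
      unfold Kf
      rw [G_ne hx.ne']
      have := h2.ne'
      field_simp
      ring
    rw [e]
    have := G_pos x
    have : 0 ≤ G x * Real.exp x / (Real.exp x - 1) ^ 2 * (x * (Real.exp x + 1) - 2 * (Real.exp x - 1)) :=
      mul_nonneg (by positivity) (by linarith)
    linarith

lemma Kf_le_one {t : ℝ} (ht : 0 ≤ t) : Kf t ≤ 1 := by
  have := Kf_antitone (a := 0) (b := t) (by simp) ht ht
  rwa [Kf_zero] at this

lemma G_le_one {t : ℝ} (ht : 0 ≤ t) : G t ≤ 1 := by
  have := G_antitone (a := 0) (b := t) (by simp) ht ht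
  rwa [G_zero] at this

lemma one_sub_Kf_le {t : ℝ} (ht : 0 < t) : 1 - Kf t ≤ t ^ 2 / 4 := by
  have h1 := tanh_ineq ht.le
  have h2 := exp_sub_one_pos ht
  set y := Real.exp t with hy
  have h3 : 2 / (y + 1) ≤ G t := by
    rw [G_ne ht.ne', ← hy, div_le_div_iff₀ (by linarith) h2]
    linarith
  have h4 : (2 / (y + 1)) ^ 2 * y ≤ Kf t := by
    unfold Kf
    rw [← hy]
    have : 0 ≤ 2 / (y + 1) := div_nonneg (by norm_num) (by linarith)
    have : (2 / (y + 1)) ^ 2 ≤ G t ^ 2 := pow_le_pow_left₀ this h3 2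
    exact mul_le_mul_of_nonneg_right this (by linarith)
  have h5 : 1 - (2 / (y + 1)) ^ 2 * y = ((y - 1) / (y + 1)) ^ 2 := by
    have : y + 1 ≠ 0 := by linarith
    field_simp
    ring
  have h6 : (y - 1) / (y + 1) ≤ t / 2 := by
    rw [div_le_div_iff₀ (by linarith) (by norm_num)]
    linarith
  have h7 : ((y - 1) / (y + 1)) ^ 2 ≤ (t / 2) ^ 2 :=
    pow_le_pow_left₀ (div_nonneg h2.le (by linarith)) h6 2
  nlinarith

lemma Kf_integral {v : ℝ} (hv : 0 < v) :
    ∫ t in (0 : ℝ)..v, Kf t = 2 * (∫ t in (0 : ℝ)..v, G t) - v * G v := by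
  have h : ∫ t in (0 : ℝ)..v, (2 * G t - Kf t) = v * G v - 0 * G 0 := by
    refine intervalIntegral.integral_eq_sub_of_hasDerivAt_of_le hv.le
      (f := fun t => t * G t) ?_ ?_ ?_
    · exact (continuous_id.mul G_cont).continuousOn
    · intro x hx
      have := (hasDerivAt_id x).mul (G_hasDeriv hx.1)
      refine this.congr_deriv ?_
      have : x ≠ 0 := hx.1.ne'
      simp only [id]
      field_simp
      ring
    · exact (((continuous_const.mul G_cont).sub Kf_cont).intervalIntegrable _ _)
  have hi : IntervalIntegrable (fun t => 2 * G t) volume 0 v :=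
    (continuous_const.mul G_cont).intervalIntegrable _ _
  rw [intervalIntegral.integral_sub hi
    (Kf_cont.intervalIntegrable _ _), intervalIntegral.integral_const_mul] at h
  linarith

noncomputable def el (t : ℝ) : ℝ := -Real.log (G t) - t

lemma el_cont : Continuous el := by
  unfold el
  exact ((G_cont.log fun t => (G_pos t).ne').neg).sub continuous_id

lemma el_zero : el 0 = 0 := by simp [el, G_zero]

lemma el_exp {t : ℝ} (ht : 0 < t) : Real.exp (el t) = (1 - Real.exp (-t)) / t := by
  unfold el
  rw [Real.exp_sub, Real.exp_neg, Real.exp_log (G_pos t), G_ne ht.ne', Real.exp_neg]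
  have := (exp_sub_one_pos ht).ne'
  field_simp

lemma el_hasDeriv {t : ℝ} (ht : 0 < t) : HasDerivAt el ((G t - 1) / t) t := by
  have h := (((G_hasDeriv ht).log (G_pos t).ne').neg).sub (hasDerivAt_id t)
  refine h.congr_deriv ?_
  have hg := (G_pos t).ne'
  have e : Kf t = G t * (G t + t) := by
    unfold Kf
    rw [G_ne ht.ne']
    have := (exp_sub_one_pos ht).ne'
    field_simp
    ring
  rw [e]
  field_simp
  ring

lemma el_hasDeriv2 {t : ℝ} (ht : 0 < t) :
    HasDerivAt (fun t => (G t - 1) / t) ((1 - Kf t) / t ^ 2) t := by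
  have h := ((G_hasDeriv ht).sub_const 1).div (hasDerivAt_id t) ht.ne'
  refine h.congr_deriv ?_
  simp only [id]
  field_simp
  ring

lemma el_abs_le {t : ℝ} (ht : 0 ≤ t) : |el t| ≤ t := by
  rcases ht.eq_or_lt with rfl | ht
  · simp [el_zero]
  have h1 : el t ≤ 0 := by
    rw [← Real.exp_le_one_iff, el_exp ht, div_le_one ht]
    linarith [Real.add_one_le_exp (-t)]
  have h2 : -t ≤ el t := by
    unfold el
    have := Real.log_nonpos (G_pos t).le (G_le_one ht.le)
    linarith
  rw [abs_of_nonpos h1]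
  linarith

lemma el_integral {v : ℝ} (hv : 0 < v) :
    ∫ t in (0 : ℝ)..v, el t = v * el v - (∫ t in (0 : ℝ)..v, G t) + v := by
  have h : ∫ t in (0 : ℝ)..v, (el t + (G t - 1)) = v * el v - 0 * el 0 := by
    refine intervalIntegral.integral_eq_sub_of_hasDerivAt_of_le hv.le
      (f := fun t => t * el t) ?_ ?_ ?_
    · exact (continuous_id.mul el_cont).continuousOn
    · intro x hx
      have := (hasDerivAt_id x).mul (el_hasDeriv hx.1)
      refine this.congr_deriv ?_
      have : x ≠ 0 := hx.1.ne'
      simp only [id]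
      field_simp
    · exact ((el_cont.add (G_cont.sub continuous_const)).intervalIntegrable _ _)
  have hi : IntervalIntegrable (fun t => G t - 1) volume 0 v :=
    (G_cont.sub continuous_const).intervalIntegrable _ _
  rw [intervalIntegral.integral_add (el_cont.intervalIntegrable _ _) hi,
    intervalIntegral.integral_sub (G_cont.intervalIntegrable _ _) (by simp)] at h
  simp at h
  linarith

lemma p_lip {a b : ℝ} (ha : 0 < a) (hab : a ≤ b) :
    |(G b - 1) / b - (G a - 1) / a| ≤ (b - a) := by
  have := (convex_Ici a).norm_image_sub_le_of_norm_hasDerivWithin_le (f := fun t => (G t - 1) / t)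
    (f' := fun t => (1 - Kf t) / t ^ 2) (C := 1) (x := a) (y := b)
    (fun x hx => (el_hasDeriv2 (lt_of_lt_of_le ha hx)).hasDerivWithinAt) ?_ (Set.mem_Ici.2 le_rfl) hab
  · simpa [abs_of_nonneg (sub_nonneg.2 hab)] using this
  · intro x hx
    have hx0 : 0 < x := lt_of_lt_of_le ha hx
    have h1 := Kf_le_one hx0.le
    have h2 := one_sub_Kf_le hx0
    rw [Real.norm_eq_abs, abs_of_nonneg (div_nonneg (by linarith) (by positivity)),
      div_le_one (by positivity)]
    nlinarith [sq_nonneg x]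

lemma trap_cell {a b : ℝ} (ha : 0 < a) (hab : a ≤ b) :
    |(∫ t in a..b, el t) - (b - a) * (el a + el b) / 2| ≤ (b - a) ^ 3 := by
  have hQ : ∀ x, 0 < x → HasDerivAt (fun x => (∫ t in a..x, el t) - (x - a) * (el a + el x) / 2)
      (el x - (1 * (el a + el x) + (x - a) * ((G x - 1) / x)) / 2) x := by
    intro x hx
    have h1 : HasDerivAt (fun x => ∫ t in a..x, el t) (el x) x :=
      intervalIntegral.integral_hasDerivAt_right (el_cont.intervalIntegrable _ _)
        (el_cont.stronglyMeasurableAtFilter _ _) el_cont.continuousAt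
    exact h1.sub ((((hasDerivAt_id x).sub_const a).mul ((el_hasDeriv hx).const_add (el a))).div_const 2)
  have := (convex_Icc a b).norm_image_sub_le_of_norm_hasDerivWithin_le
    (f := fun x => (∫ t in a..x, el t) - (x - a) * (el a + el x) / 2)
    (C := (b - a) ^ 2) (x := a) (y := b)
    (fun x hx => (hQ x (lt_of_lt_of_le ha hx.1)).hasDerivWithinAt) ?_ (left_mem_Icc.2 hab)
    (right_mem_Icc.2 hab)
  · simp only [intervalIntegral.integral_same, sub_self, zero_mul, zero_div, sub_zero,
      Real.norm_eq_abs, abs_of_nonneg (sub_nonneg.2 hab)] at this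
    calc _ ≤ _ := this
      _ = _ := by ring
  · intro x hx
    have hx0 : 0 < x := lt_of_lt_of_le ha hx.1
    -- mean value bound for el x - el a - (x - a) p x
    have h2 := (convex_Icc a x).norm_image_sub_le_of_norm_hasDerivWithin_le
      (f := fun t => el t - t * ((G x - 1) / x))
      (f' := fun t => (G t - 1) / t - 1 * ((G x - 1) / x))
      (C := (x - a)) (x := a) (y := x)
      (fun t ht => (((el_hasDeriv (lt_of_lt_of_le ha ht.1)).sub
        ((hasDerivAt_id t).mul_const _))).hasDerivWithinAt) ?_ (left_mem_Icc.2 hx.1)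
      (right_mem_Icc.2 hx.1)
    · rw [Real.norm_eq_abs] at h2 ⊢
      rw [Real.norm_eq_abs, abs_of_nonneg (sub_nonneg.2 hx.1)] at h2
      have e : el x - (1 * (el a + el x) + (x - a) * ((G x - 1) / x)) / 2 =
        (el x - x * ((G x - 1) / x) - (el a - a * ((G x - 1) / x))) / 2 := by ring
      rw [e, abs_div, abs_of_pos (by norm_num : (0 : ℝ) < 2)]
      have h3 : (x - a) * (x - a) ≤ (b - a) ^ 2 := by
        have := hx.1; have := hx.2
        nlinarith
      have := sq_nonneg (b - a)
      linarith
    · intro t ht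
      rw [Real.norm_eq_abs, one_mul, abs_sub_comm]
      exact (p_lip (lt_of_lt_of_le ha ht.1) ht.2).trans (by linarith [ht.1])

lemma riemann_anti {f : ℝ → ℝ} (hf : AntitoneOn f (Ici 0)) {α : ℝ} (hα : 0 < α) (N : ℕ) :
    |(∑ k ∈ Finset.range N, f (α * (k + 1))) - α⁻¹ * ∫ t in (0 : ℝ)..(α * N), f t| ≤
      f 0 - f (α * N) := by
  have ha : AntitoneOn (fun x => f (α * x)) (Icc 0 (0 + (N : ℝ))) := by
    intro x hx y hy hxy
    exact hf (mul_nonneg hα.le hx.1) (mul_nonneg hα.le hy.1) (mul_le_mul_of_nonneg_left hxy hα.le)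
  have h1 := ha.integral_le_sum
  have h2 := ha.sum_le_integral
  rw [intervalIntegral.integral_comp_mul_left _ hα.ne'] at h1 h2
  simp only [zero_add, mul_zero, smul_eq_mul, Nat.cast_add, Nat.cast_one] at h1 h2
  have h3 := Finset.sum_range_succ (fun k : ℕ => f (α * k)) N
  have h4 := Finset.sum_range_succ' (fun k : ℕ => f (α * k)) N
  simp only [Nat.cast_add, Nat.cast_one, Nat.cast_zero, mul_zero] at h4
  rw [abs_of_nonpos (by linarith)]
  linarith

lemma el_sum_bound {α : ℝ} (hα : 0 < α) (N : ℕ) :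
    |(∑ k ∈ Finset.range (N + 1), el (α * (k + 1))) - α⁻¹ * (∫ t in (0 : ℝ)..(α * (N + 1)), el t)
      - el (α * (N + 1)) / 2| ≤ 2 * α + N * α ^ 2 := by
  induction N with
  | zero =>
    have h1 := el_abs_le hα.le
    have h2 : |∫ t in (0 : ℝ)..α, el t| ≤ α * |α - 0| := by
      rw [← Real.norm_eq_abs]
      refine intervalIntegral.norm_integral_le_of_norm_le_const fun t ht => ?_
      rw [uIoc_of_le hα.le] at ht
      exact (el_abs_le ht.1.le).trans ht.2
    have h3 : |α⁻¹ * ∫ t in (0 : ℝ)..α, el t| ≤ α := by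
      rw [abs_mul, abs_of_pos (inv_pos.2 hα), inv_mul_le_iff₀ hα]
      rwa [sub_zero, abs_of_pos hα] at h2
    simp only [zero_add, Finset.range_one, Finset.sum_singleton, Nat.cast_zero, mul_one, zero_mul,
      add_zero]
    rw [abs_le] at *
    constructor <;> linarith [h1.1, h1.2, h3.1, h3.2]
  | succ N ih =>
    rw [Finset.sum_range_succ]
    have hc := trap_cell (a := α * (N + 1)) (b := α * ((N + 1 : ℕ) + 1)) (by positivity)
      (by push_cast; nlinarith)
    have hadd := intervalIntegral.integral_add_adjacent_intervals
      (el_cont.intervalIntegrable (μ := volume) 0 (α * (N + 1)))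
      (el_cont.intervalIntegrable (μ := volume) (α * (N + 1)) (α * ((N + 1 : ℕ) + 1)))
    rw [← hadd]
    have hd : α * (((N + 1 : ℕ) : ℝ) + 1) - α * (N + 1) = α := by push_cast; ring
    rw [hd] at hc
    generalize (∫ t in (α * ((N : ℝ) + 1))..(α * (((N + 1 : ℕ) : ℝ) + 1)), el t) = J at *
    generalize (∫ t in (0 : ℝ)..(α * ((N : ℝ) + 1)), el t) = J0 at *
    generalize el (α * ((N : ℝ) + 1)) = e0 at *
    generalize el (α * (((N + 1 : ℕ) : ℝ) + 1)) = e1 at *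
    generalize (∑ k ∈ Finset.range (N + 1), el (α * (k + 1))) = S at *
    have h4 : |α⁻¹ * (J - α * (e0 + e1) / 2)| ≤ α ^ 2 := by
      rw [abs_mul, abs_of_pos (inv_pos.2 hα), inv_mul_le_iff₀ hα]
      calc _ ≤ _ := hc
        _ = _ := by ring
    have e : S + e1 - α⁻¹ * (J0 + J) - e1 / 2 = (S - α⁻¹ * J0 - e0 / 2) -
        α⁻¹ * (J - α * (e0 + e1) / 2) := by
      field_simp
      ring
    rw [e]
    push_cast
    rw [abs_le] at *
    constructor <;> linarith [ih.1, ih.2, h4.1, h4.2]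

lemma Fp_eq {α : ℝ} (hα : 0 < α) (N : ℕ) :
    Fp α N = (α ^ N * N.factorial * Real.exp (∑ k ∈ Finset.range N, el (α * (k + 1))))⁻¹ := by
  unfold Fp
  rw [Finset.prod_inv_distrib, Real.exp_sum]
  congr 1
  induction N with
  | zero => simp
  | succ N ih =>
    rw [Finset.prod_range_succ, Finset.prod_range_succ, ih, el_exp (exp_arg_pos hα N),
      Nat.factorial_succ]
    have := (exp_arg_pos hα N).ne'
    field_simp
    push_cast
    ring

lemma Fp_asymp (N : ℕ → ℕ) (v : ℕ → ℝ) (w : ℝ) (hN : Tendsto N atTop atTop)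
    (hN0 : ∀ n, 0 < N n) (hv : Tendsto v atTop (𝓝 w)) (hv0 : ∀ n, 0 < v n) :
    Tendsto (fun n => Fp (v n / N n) (N n) * Real.exp (-(N n / v n * ∫ t in (0 : ℝ)..(v n), G t)) *
      (1 - Real.exp (-(v n))) ^ (N n) * √(2 * π * N n)) atTop (𝓝 (Real.exp (-(el w / 2)))) := by
  have hNr : Tendsto (fun n => (N n : ℝ)) atTop atTop := tendsto_natCast_atTop_atTop.comp hN
  set err : ℕ → ℝ := fun n => (∑ k ∈ Finset.range (N n), el (v n / N n * (k + 1))) -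
    (v n / N n)⁻¹ * (∫ t in (0 : ℝ)..(v n), el t) - el (v n) / 2 with herr
  have hα : Tendsto (fun n => v n / N n) atTop (𝓝 0) := hv.div_atTop hNr
  have herr0 : Tendsto err atTop (𝓝 0) := by
    have hb : Tendsto (fun n => 2 * (v n / N n) + v n * (v n / N n)) atTop (𝓝 0) := by
      have := (hα.const_mul 2).add (hv.mul hα)
      simpa using this
    refine squeeze_zero_norm (fun n => ?_) hb
    have hn : (0 : ℝ) < N n := by exact_mod_cast hN0 n
    have hpos : 0 < v n / N n := div_pos (hv0 n) hn
    have h := el_sum_bound hpos (N n - 1)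
    have e1 : N n - 1 + 1 = N n := Nat.sub_add_cancel (hN0 n)
    have e2 : ((N n - 1 : ℕ) : ℝ) + 1 = N n := by exact_mod_cast e1
    rw [e1, e2, div_mul_cancel₀ _ hn.ne'] at h
    rw [Real.norm_eq_abs]
    refine h.trans ?_
    have : ((N n - 1 : ℕ) : ℝ) * (v n / N n) ^ 2 ≤ N n * (v n / N n) ^ 2 :=
      mul_le_mul_of_nonneg_right (by linarith) (by positivity)
    have e3 : N n * (v n / N n) ^ 2 = v n * (v n / N n) := by field_simp
    linarith
  have hst : Tendsto (fun n => Stirling.stirlingSeq (N n)) atTop (𝓝 √π) :=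
    Stirling.tendsto_stirlingSeq_sqrt_pi.comp hN
  have hmain : Tendsto (fun n => √π / Stirling.stirlingSeq (N n) *
      Real.exp (-(el (v n) / 2) - err n)) atTop (𝓝 (Real.exp (-(el w / 2)))) := by
    have h1 := (tendsto_const_nhds (x := √π)).div hst (by positivity)
    have h2 : Tendsto (fun n => -(el (v n) / 2) - err n) atTop (𝓝 (-(el w / 2) - 0)) :=
      ((((el_cont.tendsto w).comp hv).div_const 2).neg).sub herr0
    have h3 := h1.mul ((Real.continuous_exp.tendsto _).comp h2)
    rw [div_self (by positivity), one_mul, sub_zero] at h3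
    exact h3
  refine hmain.congr fun n => ?_
  have hn : (0 : ℝ) < N n := by exact_mod_cast hN0 n
  have hvn := hv0 n
  have hpos : 0 < v n / N n := div_pos hvn hn
  have hS : ∑ k ∈ Finset.range (N n), el (v n / N n * (k + 1)) =
      N n * el (v n) + -(N n / v n * ∫ t in (0 : ℝ)..(v n), G t) + N n + el (v n) / 2 + err n := by
    have : (v n / N n)⁻¹ * (∫ t in (0 : ℝ)..(v n), el t) =
        N n * el (v n) + -(N n / v n * ∫ t in (0 : ℝ)..(v n), G t) + N n := by
      rw [el_integral hvn]
      field_simp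
      ring
    rw [herr]
    simp only
    rw [this]
    ring
  rw [Fp_eq hpos, hS]
  generalize -(N n / v n * ∫ t in (0 : ℝ)..(v n), G t) = X
  have e1 : Real.exp (N n * el (v n) + X + N n + el (v n) / 2 + err n) =
      ((1 - Real.exp (-(v n))) / v n) ^ (N n) * Real.exp X * Real.exp 1 ^ (N n) *
        (Real.exp (-(el (v n) / 2) - err n))⁻¹ := by
    rw [← el_exp hvn, ← Real.exp_nat_mul, ← Real.exp_nat_mul, ← Real.exp_neg, ← Real.exp_add,
      ← Real.exp_add, ← Real.exp_add]
    congr 1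
    ring
  rw [e1]
  have e2 : ((N n).factorial : ℝ) = Stirling.stirlingSeq (N n) * (√(2 * N n) * (N n / Real.exp 1) ^ (N n)) := by
    unfold Stirling.stirlingSeq
    have : √(2 * N n) * (N n / Real.exp 1) ^ (N n) ≠ 0 := by positivity
    field_simp
  rw [e2]
  have e3 : √(2 * π * N n) = √π * √(2 * N n) := by
    rw [← Real.sqrt_mul pi_pos.le]; ring_nf
  rw [e3]
  have hst0 : Stirling.stirlingSeq (N n) ≠ 0 := by
    unfold Stirling.stirlingSeq
    have := Nat.factorial_pos (N n)
    positivity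
  have h1 : 1 - Real.exp (-(v n)) ≠ 0 := by
    have := Real.exp_lt_one_iff.2 (show -(v n) < 0 by linarith)
    linarith
  have h2 : √(2 * (N n : ℝ)) ≠ 0 := by positivity
  have h3 := Real.exp_pos (-(el (v n) / 2) - err n)
  generalize Real.exp (-(el (v n) / 2) - err n) = Y at *
  generalize 1 - Real.exp (-(v n)) = Z at *
  generalize √(2 * (N n : ℝ)) = W at *
  generalize Stirling.stirlingSeq (N n) = T at *
  have h4 := Real.exp_pos X
  generalize Real.exp X = X' at *
  rw [div_pow, div_pow, div_pow]
  have := Real.exp_pos 1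
  generalize Real.exp 1 = q at *
  field_simp

lemma mm_mul_eq {α : ℝ} (hα : 0 < α) (k : ℕ) : mm α k * (k + 1) = α⁻¹ * G (α * (k + 1)) := by
  rw [G_ne (exp_arg_pos hα k).ne']
  unfold mm
  have := (exp_sub_one_pos (exp_arg_pos hα k)).ne'
  field_simp

lemma mm_var_eq {α : ℝ} (hα : 0 < α) (k : ℕ) :
    (mm α k + mm α k ^ 2) * (k + 1) ^ 2 = (α⁻¹) ^ 2 * Kf (α * (k + 1)) := by
  unfold Kf
  rw [G_ne (exp_arg_pos hα k).ne']
  unfold mm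
  have := (exp_sub_one_pos (exp_arg_pos hα k)).ne'
  field_simp
  ring

lemma mm_mul_le {α : ℝ} (hα : 0 < α) (k : ℕ) : mm α k * (k + 1) ≤ α⁻¹ := by
  rw [mm_mul_eq hα]
  exact mul_le_of_le_one_right (inv_pos.2 hα).le (G_le_one (exp_arg_pos hα k).le)

lemma mean_bound {α : ℝ} (hα : 0 < α) (N : ℕ) :
    |(∑ k ∈ Finset.range N, mm α k * (k + 1)) - (α⁻¹) ^ 2 * ∫ t in (0 : ℝ)..(α * N), G t| ≤ α⁻¹ := by
  simp_rw [mm_mul_eq hα]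
  rw [← Finset.mul_sum, sq, mul_assoc, ← mul_sub, abs_mul, abs_of_pos (inv_pos.2 hα)]
  refine mul_le_of_le_one_right (inv_pos.2 hα).le ?_
  refine (riemann_anti G_antitone hα N).trans ?_
  rw [G_zero]
  linarith [G_pos (α * N)]

lemma var_bound {α : ℝ} (hα : 0 < α) (N : ℕ) :
    |(∑ k ∈ Finset.range N, (mm α k + mm α k ^ 2) * (k + 1) ^ 2) -
      (α⁻¹) ^ 3 * ∫ t in (0 : ℝ)..(α * N), Kf t| ≤ (α⁻¹) ^ 2 := by
  simp_rw [mm_var_eq hα]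
  rw [← Finset.mul_sum, pow_succ (α⁻¹) 2, mul_assoc, ← mul_sub, abs_mul,
    abs_of_pos (pow_pos (inv_pos.2 hα) 2)]
  refine mul_le_of_le_one_right (pow_pos (inv_pos.2 hα) 2).le ?_
  refine (riemann_anti Kf_antitone hα N).trans ?_
  rw [Kf_zero]
  linarith [Kf_pos (α * N)]

lemma factor_expand {m y : ℝ} (hm : 0 < m) (hy : |y| ≤ 1) (hmy : m * |y| ≤ 1 / 2) :
    ‖Complex.log (1 - (m : ℂ) * (Complex.exp (y * Complex.I) - 1))⁻¹ -
      ((m * y : ℝ) * Complex.I - ((m + m ^ 2) * y ^ 2 / 2 : ℝ))‖ ≤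
      3 * ((m * |y|) ^ 3 + m * |y| ^ 3 + m ^ 2 * |y| ^ 3) := by
  set e : ℂ := Complex.exp (y * Complex.I) - 1 with he
  have hnI : ‖(y : ℂ) * Complex.I‖ = |y| := by simp
  have hexp : Real.exp |y| ≤ 3 := by
    have := Real.exp_le_exp.2 hy
    linarith [Real.exp_one_lt_d9]
  have h1 : ‖e‖ ≤ |y| := by
    have := Real.norm_exp_I_mul_ofReal_sub_one_le (x := y)
    rwa [mul_comm, Real.norm_eq_abs] at this
  have h2 : ‖e - y * Complex.I‖ ≤ 3 * |y| ^ 2 := by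
    have := Complex.norm_exp_sub_sum_le_norm_mul_exp ((y : ℂ) * Complex.I) 2
    rw [hnI] at this
    simp [Finset.sum_range_succ] at this
    rw [he, sub_sub]
    refine this.trans ?_
    rw [sq_abs]
    nlinarith [sq_nonneg y]
  have h3 : ‖e - y * Complex.I + y ^ 2 / 2‖ ≤ 3 * |y| ^ 3 := by
    have := Complex.norm_exp_sub_sum_le_norm_mul_exp ((y : ℂ) * Complex.I) 3
    rw [hnI] at this
    simp [Finset.sum_range_succ, mul_pow] at this
    have e1 : e - y * Complex.I + y ^ 2 / 2 = Complex.exp (y * Complex.I) -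
      (1 + y * Complex.I + -(y:ℂ) ^ 2 / 2) := by rw [he]; ring
    rw [e1]
    refine this.trans ?_
    have : 0 ≤ |y| ^ 3 := by positivity
    nlinarith
  set z : ℂ := (m : ℂ) * e with hz
  have hzn : ‖z‖ ≤ m * |y| := by
    rw [hz, norm_mul, Complex.norm_real, Real.norm_eq_abs, abs_of_pos hm]
    exact mul_le_mul_of_nonneg_left h1 hm.le
  have h4 : ‖Complex.log (1 - z)⁻¹ - (z + z ^ 2 / 2)‖ ≤ (m * |y|) ^ 3 := by
    have := Complex.norm_log_one_sub_inv_add_logTaylor_neg_le 2 (z := z) (by linarith)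
    have e1 : Complex.logTaylor (2 + 1) (-z) = -(z + z ^ 2 / 2) := by
      simp [Complex.logTaylor, Finset.sum_range_succ]
      ring
    rw [e1, ← sub_eq_add_neg] at this
    refine this.trans ?_
    have h5 : (1 - ‖z‖)⁻¹ ≤ 2 := by
      rw [inv_le_comm₀ (by linarith) (by norm_num)]
      linarith
    have h6 : ‖z‖ ^ 3 ≤ (m * |y|) ^ 3 := pow_le_pow_left₀ (norm_nonneg _) hzn 3
    have h7 : 0 ≤ ‖z‖ ^ 3 := by positivity
    norm_num
    nlinarith
  have h5 : ‖z + z ^ 2 / 2 - ((m * y : ℝ) * Complex.I - ((m + m ^ 2) * y ^ 2 / 2 : ℝ))‖ ≤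
      3 * (m * |y| ^ 3) + 3 * (m ^ 2 * |y| ^ 3) := by
    have e1 : z + z ^ 2 / 2 - ((m * y : ℝ) * Complex.I - ((m + m ^ 2) * y ^ 2 / 2 : ℝ)) =
        m * (e - y * Complex.I + y ^ 2 / 2) + m ^ 2 / 2 * ((e - y * Complex.I) * (e + y * Complex.I)) := by
      rw [hz]
      push_cast
      have : Complex.I ^ 2 = -1 := Complex.I_sq
      linear_combination ((m : ℂ) ^ 2 * y ^ 2 / 2) * this
    rw [e1]
    refine (norm_add_le _ _).trans ?_
    rw [norm_mul, norm_mul, norm_mul, norm_div, norm_pow, Complex.norm_real, Real.norm_eq_abs,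
      abs_of_pos hm]
    have h6 : ‖e + y * Complex.I‖ ≤ 2 * |y| := by
      refine (norm_add_le _ _).trans ?_
      rw [hnI]; linarith
    have h7 := mul_le_mul h2 h6 (norm_nonneg _) (by positivity)
    have h8 := mul_le_mul_of_nonneg_left h3 hm.le
    have h9 := mul_le_mul_of_nonneg_left h7 (sq_nonneg m)
    simp only [Complex.norm_ofNat]
    have e2 : m ^ 2 * (3 * |y| ^ 2 * (2 * |y|)) = 6 * (m ^ 2 * |y| ^ 3) := by ring
    rw [e2] at h9
    linarith
  calc _ = ‖(Complex.log (1 - z)⁻¹ - (z + z ^ 2 / 2)) +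
      (z + z ^ 2 / 2 - ((m * y : ℝ) * Complex.I - ((m + m ^ 2) * y ^ 2 / 2 : ℝ)))‖ := by
        congr 1; ring
    _ ≤ _ := norm_add_le _ _
    _ ≤ _ := by
      have : 0 ≤ (m * |y|) ^ 3 := by positivity
      linarith

lemma factor_ne {m y : ℝ} (hm : 0 < m) :
    1 - (m : ℂ) * (Complex.exp (y * Complex.I) - 1) ≠ 0 := by
  intro h
  have h1 : (m : ℂ) * Complex.exp (y * Complex.I) = 1 + m := by linear_combination -h
  have h2 := congrArg norm h1
  rw [norm_mul, Complex.norm_exp_ofReal_mul_I, mul_one, Complex.norm_real, Real.norm_eq_abs,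
    abs_of_pos hm] at h2
  have h3 : ‖(1 : ℂ) + m‖ = 1 + m := by
    rw [show (1 : ℂ) + m = ((1 + m : ℝ) : ℂ) by push_cast; ring, Complex.norm_real, Real.norm_eq_abs,
      abs_of_pos (by linarith)]
  linarith

lemma phi_expand {v : ℝ} (hv : 0 < v) {N : ℕ} (hN : 0 < N) {θ : ℝ} (h1 : N * |θ| ≤ 1)
    (h2 : N * |θ| / v ≤ 1 / 2) :
    ∃ L : ℂ, phi (v / N) N θ = Complex.exp L ∧
      ‖L - ((θ * ∑ k ∈ Finset.range N, mm (v / N) k * (k + 1) : ℝ) * Complex.I -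
        (θ ^ 2 / 2 * ∑ k ∈ Finset.range N, (mm (v / N) k + mm (v / N) k ^ 2) * (k + 1) ^ 2 : ℝ))‖ ≤
      N * (3 * ((N * |θ|) ^ 3 * (1 / v ^ 3 + 1 / v + 1 / v ^ 2))) := by
  have hn : (0 : ℝ) < N := by exact_mod_cast hN
  have hα : 0 < v / N := div_pos hv hn
  refine ⟨∑ k ∈ Finset.range N, Complex.log (1 - (mm (v / N) k : ℂ) *
    (Complex.exp (((k + 1 : ℕ) * θ : ℝ) * Complex.I) - 1))⁻¹, ?_, ?_⟩
  · rw [Complex.exp_sum]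
    unfold phi
    refine Finset.prod_congr rfl fun k _ => ?_
    rw [Complex.exp_log (inv_ne_zero (factor_ne (mm_pos hα k)))]
  · have e : ((θ * ∑ k ∈ Finset.range N, mm (v / N) k * (k + 1) : ℝ) * Complex.I -
        (θ ^ 2 / 2 * ∑ k ∈ Finset.range N, (mm (v / N) k + mm (v / N) k ^ 2) * (k + 1) ^ 2 : ℝ)) =
        ∑ k ∈ Finset.range N, ((mm (v / N) k * ((k + 1 : ℕ) * θ) : ℝ) * Complex.I -
          ((mm (v / N) k + mm (v / N) k ^ 2) * ((k + 1 : ℕ) * θ) ^ 2 / 2 : ℝ)) := by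
      rw [Finset.sum_sub_distrib, ← Finset.sum_mul, ← Complex.ofReal_sum, ← Complex.ofReal_sum,
        Finset.mul_sum, Finset.mul_sum]
      congr 1
      · congr 2
        refine Finset.sum_congr rfl fun k _ => ?_
        push_cast; ring
      · congr 1
        refine Finset.sum_congr rfl fun k _ => ?_
        push_cast; ring
    rw [e, ← Finset.sum_sub_distrib]
    refine (norm_sum_le _ _).trans ?_
    calc _ ≤ ∑ k ∈ Finset.range N, (3 * ((N * |θ|) ^ 3 * (1 / v ^ 3 + 1 / v + 1 / v ^ 2))) := ?_
      _ = _ := by simp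
    refine Finset.sum_le_sum fun k hk => ?_
    have hk1 : (k : ℝ) + 1 ≤ N := by exact_mod_cast Finset.mem_range.1 hk
    have hk0 : (0 : ℝ) < (k : ℝ) + 1 := by positivity
    have hm := mm_pos hα k
    have hm2 := mm_mul_le hα k
    rw [inv_div] at hm2
    have hy : |((k + 1 : ℕ) : ℝ) * θ| = (k + 1) * |θ| := by
      push_cast
      rw [abs_mul, abs_of_pos hk0]
    have hθ := abs_nonneg θ
    have b1 : (k + 1) * |θ| ≤ N * |θ| := mul_le_mul_of_nonneg_right hk1 hθ
    have b0 : 0 ≤ ((k : ℝ) + 1) * |θ| := by positivity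
    have b2 : mm (v / N) k * ((k + 1) * |θ|) ≤ N * |θ| / v := by
      calc _ = mm (v / N) k * (k + 1) * |θ| := by ring
        _ ≤ N / v * |θ| := mul_le_mul_of_nonneg_right hm2 hθ
        _ = _ := by ring
    have b3 : 0 ≤ mm (v / N) k * ((k + 1) * |θ|) := by positivity
    refine (factor_expand hm (y := (k + 1 : ℕ) * θ) (by rw [hy]; linarith) (by rw [hy]; linarith)).trans ?_
    rw [hy]
    set m := mm (v / N) k
    set Y := ((k : ℝ) + 1) * |θ|
    set T := N * |θ|
    have hT : 0 ≤ T := by positivity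
    have c1 : (m * Y) ^ 3 ≤ T ^ 3 * (1 / v ^ 3) := by
      calc _ ≤ (T / v) ^ 3 := pow_le_pow_left₀ b3 b2 3
        _ = _ := by rw [div_pow]; ring
    have c2 : m * Y ^ 3 ≤ T ^ 3 * (1 / v) := by
      calc _ = (m * Y) * Y ^ 2 := by ring
        _ ≤ (T / v) * T ^ 2 := mul_le_mul b2 (pow_le_pow_left₀ b0 b1 2) (by positivity) (by positivity)
        _ = _ := by ring
    have c3 : m ^ 2 * Y ^ 3 ≤ T ^ 3 * (1 / v ^ 2) := by
      calc _ = (m * Y) ^ 2 * Y := by ring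
        _ ≤ (T / v) ^ 2 * T := mul_le_mul (pow_le_pow_left₀ b3 b2 2) b1 (by positivity) (by positivity)
        _ = _ := by rw [div_pow]; ring
    have : T ^ 3 * (1 / v ^ 3 + 1 / v + 1 / v ^ 2) = T ^ 3 * (1 / v ^ 3) + T ^ 3 * (1 / v) +
      T ^ 3 * (1 / v ^ 2) := by ring
    rw [this]
    linarith

lemma factor_norm_sq (m y : ℝ) :
    ‖1 - (m : ℂ) * (Complex.exp (y * Complex.I) - 1)‖ ^ 2 = 1 + 2 * m * (1 + m) * (1 - cos y) := by
  rw [← Complex.normSq_eq_norm_sq, Complex.normSq_apply, Complex.exp_mul_I,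
    ← Complex.ofReal_cos, ← Complex.ofReal_sin]
  simp only [Complex.sub_re, Complex.sub_im, Complex.mul_re, Complex.mul_im, Complex.add_re, Complex.add_im, Complex.one_re, Complex.one_im, Complex.ofReal_re, Complex.ofReal_im, Complex.I_re, Complex.I_im]
  have := Real.sin_sq_add_cos_sq y
  linear_combination m ^ 2 * this

lemma factor_inv_le {m1 m y : ℝ} (h1 : 0 < m1) (hm : m1 ≤ m) :
    ‖(1 - (m : ℂ) * (Complex.exp (y * Complex.I) - 1))⁻¹‖ ≤
      exp (-(m1 / (1 + 4 * m1) * (1 - cos y))) := by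
  set z := 1 - (m : ℂ) * (Complex.exp (y * Complex.I) - 1) with hz
  have hm0 : 0 < m := by linarith
  have hzp : 0 < ‖z‖ := norm_pos_iff.2 (factor_ne hm0)
  set t := 1 - cos y with ht
  have ht0 : 0 ≤ t := by linarith [cos_le_one y]
  have ht2 : t ≤ 2 := by linarith [neg_one_le_cos y]
  have hsq : ‖z‖ ^ 2 = 1 + 2 * m * (1 + m) * t := factor_norm_sq m y
  have h2 : 1 + 2 * m1 * t ≤ ‖z‖ ^ 2 := by
    rw [hsq]
    have : 2 * m1 ≤ 2 * m * (1 + m) := by nlinarith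
    nlinarith
  have hx : 0 ≤ 2 * m1 * t := by positivity
  have h3 : exp (2 * m1 * t / (1 + 2 * m1 * t)) ≤ 1 + 2 * m1 * t := by
    have := Real.add_one_le_exp (-(2 * m1 * t / (1 + 2 * m1 * t)))
    have e : -(2 * m1 * t / (1 + 2 * m1 * t)) + 1 = (1 + 2 * m1 * t)⁻¹ := by field_simp; ring
    rw [e, Real.exp_neg] at this
    exact (inv_le_inv₀ (by positivity) (by positivity)).1 this
  have h4 : 2 * (m1 / (1 + 4 * m1) * t) ≤ 2 * m1 * t / (1 + 2 * m1 * t) := by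
    rw [show 2 * (m1 / (1 + 4 * m1) * t) = 2 * m1 * t / (1 + 4 * m1) by ring]
    exact div_le_div_of_nonneg_left hx (by positivity) (by nlinarith)
  have h5 : exp (m1 / (1 + 4 * m1) * t) ^ 2 ≤ ‖z‖ ^ 2 := by
    rw [← Real.exp_nat_mul]
    push_cast
    exact (Real.exp_le_exp.2 h4).trans (h3.trans h2)
  have h6 := (pow_le_pow_iff_left₀ (Real.exp_pos _).le hzp.le two_ne_zero).1 h5
  rw [norm_inv, Real.exp_neg]
  exact inv_anti₀ (Real.exp_pos _) h6

lemma mm_lower {v v1 : ℝ} (hv : 0 < v) (hv1 : v ≤ v1) {N k : ℕ} (hk : k < N) :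
    (exp v1 - 1)⁻¹ ≤ mm (v / N) k := by
  have hn : (0 : ℝ) < N := by exact_mod_cast (Nat.zero_le k).trans_lt hk
  have hα : 0 < v / N := div_pos hv hn
  unfold mm
  refine inv_anti₀ (exp_sub_one_pos (exp_arg_pos hα k)) ?_
  have : v / N * (k + 1) ≤ v1 := by
    have hk1 : (k : ℝ) + 1 ≤ N := by exact_mod_cast hk
    calc _ ≤ v / N * N := mul_le_mul_of_nonneg_left hk1 hα.le
      _ = v := by field_simp
      _ ≤ _ := hv1
  linarith [Real.exp_le_exp.2 this]

lemma phi_norm_le {v v1 : ℝ} (hv : 0 < v) (hv1 : v ≤ v1) (N : ℕ) (θ : ℝ) :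
    ‖phi (v / N) N θ‖ ≤ exp (-((exp v1 - 1)⁻¹ / (1 + 4 * (exp v1 - 1)⁻¹) *
      ∑ k ∈ Finset.range N, (1 - cos ((k + 1 : ℕ) * θ)))) := by
  unfold phi
  rw [norm_prod, Finset.mul_sum, ← Finset.sum_neg_distrib, Real.exp_sum]
  refine Finset.prod_le_prod (fun _ _ => norm_nonneg _) fun k hk => ?_
  exact factor_inv_le (inv_pos.2 (exp_sub_one_pos (hv.trans_le hv1)))
    (mm_lower hv hv1 (Finset.mem_range.1 hk))

lemma cos_sum_tel (N : ℕ) (θ : ℝ) :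
    2 * sin (θ / 2) * ∑ k ∈ Finset.range N, cos ((k + 1 : ℕ) * θ) =
      sin ((N + 1 / 2) * θ) - sin (θ / 2) := by
  induction N with
  | zero => simp; ring_nf
  | succ n ih =>
    rw [Finset.sum_range_succ, mul_add, ih]
    have e1 : ((n : ℝ) + 1 / 2) * θ = (n + 1 : ℕ) * θ - θ / 2 := by push_cast; ring
    have e2 : (((n + 1 : ℕ) : ℝ) + 1 / 2) * θ = (n + 1 : ℕ) * θ + θ / 2 := by push_cast; ring
    rw [e1, e2, sin_sub, sin_add]
    ring

lemma D_large {N : ℕ} (hN : 0 < N) {θ : ℝ} (h1 : |θ| ≤ π) (h2 : 2 * π / N ≤ |θ|) :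
    (N : ℝ) / 2 ≤ ∑ k ∈ Finset.range N, (1 - cos ((k + 1 : ℕ) * θ)) := by
  have hn : (0 : ℝ) < N := by exact_mod_cast hN
  rw [Finset.sum_sub_distrib]
  simp only [Finset.sum_const, Finset.card_range, nsmul_eq_mul, mul_one]
  have tel := cos_sum_tel N θ
  set S := ∑ k ∈ Finset.range N, cos ((k + 1 : ℕ) * θ)
  have hs := Real.mul_abs_le_abs_sin (x := θ / 2) (by rw [abs_div, abs_two]; linarith)
  have hb : |2 * sin (θ / 2) * S| ≤ 2 := by
    rw [tel, abs_le]
    constructor <;> linarith [neg_one_le_sin ((N + 1 / 2) * θ), sin_le_one ((N + 1 / 2) * θ),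
      neg_one_le_sin (θ / 2), sin_le_one (θ / 2)]
  rw [abs_mul, abs_mul, abs_two] at hb
  rw [abs_div, abs_two] at hs
  have h3 : 2 / N ≤ |sin (θ / 2)| := by
    refine le_trans ?_ hs
    calc 2 / (N : ℝ) = 2 / π * ((2 * π / N) / 2) := by field_simp
      _ ≤ _ := by gcongr
  have h4 : 2 / N * |S| ≤ 1 := by
    have := mul_le_mul_of_nonneg_right h3 (abs_nonneg S)
    linarith
  have h5 : |S| ≤ N / 2 := by
    rw [div_mul_eq_mul_div, div_le_one hn] at h4
    linarith
  linarith [le_abs_self S]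

lemma sum_sq_lower (M : ℕ) : (M : ℝ) ^ 3 / 3 ≤ ∑ k ∈ Finset.range M, ((k + 1 : ℕ) : ℝ) ^ 2 := by
  induction M with
  | zero => simp
  | succ n ih =>
    rw [Finset.sum_range_succ]
    push_cast at *
    have : (0 : ℝ) ≤ n := by positivity
    nlinarith

lemma D_small {N : ℕ} (hN : 2 ≤ N) {θ : ℝ} (h2 : |θ| ≤ 2 * π / N) :
    2 / (81 * π ^ 2) * (N ^ 3 * θ ^ 2) ≤ ∑ k ∈ Finset.range N, (1 - cos ((k + 1 : ℕ) * θ)) := by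
  have hn : (0 : ℝ) < N := by exact_mod_cast (by omega : 0 < N)
  have hM : (N : ℝ) / 3 ≤ ((N / 2 : ℕ) : ℝ) := by
    have : N ≤ 3 * (N / 2) := by omega
    have : (N : ℝ) ≤ 3 * ((N / 2 : ℕ) : ℝ) := by exact_mod_cast this
    linarith
  calc _ = 2 / π ^ 2 * θ ^ 2 * ((N / 3 : ℝ) ^ 3 / 3) := by field_simp; norm_num; ring
    _ ≤ 2 / π ^ 2 * θ ^ 2 * (((N / 2 : ℕ) : ℝ) ^ 3 / 3) := by gcongr
    _ ≤ 2 / π ^ 2 * θ ^ 2 * ∑ k ∈ Finset.range (N / 2), ((k + 1 : ℕ) : ℝ) ^ 2 := by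
        gcongr; exact sum_sq_lower _
    _ = ∑ k ∈ Finset.range (N / 2), 2 / π ^ 2 * ((k + 1 : ℕ) * θ) ^ 2 := by
        rw [Finset.mul_sum]; refine Finset.sum_congr rfl fun k _ => by ring
    _ ≤ ∑ k ∈ Finset.range (N / 2), (1 - cos ((k + 1 : ℕ) * θ)) := by
        refine Finset.sum_le_sum fun k hk => ?_
        have hk1 : 2 * (k + 1) ≤ N := by have := Finset.mem_range.1 hk; omega
        have hk2 : 2 * ((k + 1 : ℕ) : ℝ) ≤ N := by exact_mod_cast hk1
        have : |((k + 1 : ℕ) : ℝ) * θ| ≤ π := by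
          rw [abs_mul, Nat.abs_cast]
          calc _ ≤ (N / 2 : ℝ) * (2 * π / N) := by
                gcongr; linarith
            _ = π := by field_simp
        linarith [Real.cos_le_one_sub_mul_cos_sq this]
    _ ≤ _ := Finset.sum_le_sum_of_subset_of_nonneg
        (Finset.range_subset_range.2 (Nat.div_le_self _ _))
        (fun k _ _ => by linarith [cos_le_one (((k + 1 : ℕ) : ℝ) * θ)])

/-- domination -/
lemma phi_dom {v1 : ℝ} (hv1 : 0 < v1) : ∃ c : ℝ, 0 < c ∧ ∀ (v : ℝ), 0 < v → v ≤ v1 →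
    ∀ N : ℕ, 2 ≤ N → ∀ x : ℝ, |x| ≤ π * (N * √N) →
      ‖phi (v / N) N (x / (N * √N))‖ ≤ (1 + (c * x) ^ 2)⁻¹ := by
  set c1 : ℝ := (exp v1 - 1)⁻¹ / (1 + 4 * (exp v1 - 1)⁻¹) with hc1
  have hm : 0 < (exp v1 - 1)⁻¹ := inv_pos.2 (exp_sub_one_pos hv1)
  have hc1p : 0 < c1 := by positivity
  set a : ℝ := c1 * (2 / (81 * π ^ 2)) with ha
  set b : ℝ := (c1 / 2) ^ 3 / 6 / π ^ 2 with hb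
  have hap : 0 < a := by positivity
  have hbp : 0 < b := by positivity
  have hmin : 0 < min a b := lt_min hap hbp
  refine ⟨√(min a b), Real.sqrt_pos.2 hmin, fun v hv hvv N hN x hx => ?_⟩
  have hn : (0 : ℝ) < N := by exact_mod_cast (by omega : 0 < N)
  have hs : 0 < √(N : ℝ) := Real.sqrt_pos.2 hn
  have hss : √(N : ℝ) ^ 2 = N := Real.sq_sqrt hn.le
  refine (phi_norm_le hv hvv N _).trans ?_
  rw [Real.exp_neg, mul_pow, Real.sq_sqrt hmin.le]
  refine inv_anti₀ (by positivity) ?_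
  have hθ : |x / (N * √N)| = |x| / (N * √N) := by
    rw [abs_div, abs_of_pos (a := (N : ℝ) * √N) (by positivity)]
  rcases le_total (|x / (N * √N)|) (2 * π / N) with h | h
  · have h1 := D_small hN h
    have e : (N : ℝ) ^ 3 * (x / (N * √N)) ^ 2 = x ^ 2 := by
      rw [div_pow, mul_pow, hss]; field_simp
    rw [e] at h1
    have h2 := mul_le_mul_of_nonneg_left h1 hc1p.le
    rw [← mul_assoc, ← ha] at h2
    have h3 : min a b * x ^ 2 ≤ a * x ^ 2 := mul_le_mul_of_nonneg_right (min_le_left _ _) (sq_nonneg x)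
    refine le_trans ?_ (Real.exp_le_exp.2 h2)
    linarith [Real.add_one_le_exp (a * x ^ 2)]
  · have h1 := D_large (by omega : 0 < N) (θ := x / (N * √N))
      (by rw [hθ, div_le_iff₀ (by positivity)]; exact hx) h
    have h2 := mul_le_mul_of_nonneg_left h1 hc1p.le
    refine le_trans ?_ (Real.exp_le_exp.2 h2)
    have h3 : min a b * x ^ 2 ≤ b * x ^ 2 := mul_le_mul_of_nonneg_right (min_le_right _ _) (sq_nonneg x)
    have h4 : x ^ 2 ≤ π ^ 2 * N ^ 3 := by
      rw [← sq_abs]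
      calc _ ≤ (π * (N * √N)) ^ 2 := pow_le_pow_left₀ (abs_nonneg x) hx 2
        _ = _ := by rw [mul_pow, mul_pow, hss]; ring
    have h5 : b * x ^ 2 ≤ (c1 * (N / 2)) ^ 3 / 6 := by
      calc _ ≤ b * (π ^ 2 * N ^ 3) := mul_le_mul_of_nonneg_left h4 hbp.le
        _ = _ := by rw [hb]; field_simp
    have h6 := Real.sum_le_exp_of_nonneg (x := c1 * (N / 2)) (by positivity) 4
    simp [Finset.sum_range_succ, Nat.factorial] at h6
    have h7 : 0 ≤ c1 * ((N : ℝ) / 2) := by positivity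
    have h8 : 0 ≤ (c1 * ((N : ℝ) / 2)) ^ 2 / 2 := by positivity
    linarith

lemma phi_step {v : ℝ} (hv : 0 < v) {N E : ℕ} (hN : 0 < N)
    (hrel : (v / N) ^ 2 * E = ∫ t in (0 : ℝ)..v, G t) (x : ℝ)
    (h1 : |x| / √N ≤ 1) (h2 : |x| / √N / v ≤ 1 / 2) :
    ∃ L : ℂ, phi (v / N) N (x / (N * √N)) *
        Complex.exp (-(E * ((x / (N * √N) : ℝ) * Complex.I))) = Complex.exp L ∧
      ‖L - ((-(x ^ 2 / 2 * ((∫ t in (0 : ℝ)..v, Kf t) / v ^ 3)) : ℝ) : ℂ)‖ ≤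
        3 * |x| ^ 3 * (1 / v ^ 3 + 1 / v + 1 / v ^ 2) / √N + |x| / √N / v + x ^ 2 / 2 / v ^ 2 / N := by
  have hn : (0 : ℝ) < N := by exact_mod_cast hN
  have hs : 0 < √(N : ℝ) := Real.sqrt_pos.2 hn
  have hss : √(N : ℝ) ^ 2 = N := Real.sq_sqrt hn.le
  have hα : 0 < v / N := div_pos hv hn
  set θ : ℝ := x / (N * √N) with hθd
  have hθ : |θ| = |x| / (N * √N) := by
    rw [hθd, abs_div, abs_of_pos (a := (N : ℝ) * √N) (by positivity)]
  have hNθ : N * |θ| = |x| / √N := by rw [hθ]; field_simp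
  obtain ⟨L, hL, hLb⟩ := phi_expand hv hN (θ := θ) (by rw [hNθ]; exact h1) (by rw [hNθ]; exact h2)
  rw [hNθ] at hLb
  have hm := mean_bound hα N
  have hvar := var_bound hα N
  have hαN : v / N * N = v := by field_simp
  rw [hαN] at hm hvar
  rw [← hrel] at hm
  have hE : (v / N : ℝ)⁻¹ ^ 2 * ((v / N) ^ 2 * E) = E := by field_simp
  rw [hE, inv_div] at hm
  rw [inv_div] at hvar
  set M := ∑ k ∈ Finset.range N, mm (v / N) k * (k + 1)
  set V := ∑ k ∈ Finset.range N, (mm (v / N) k + mm (v / N) k ^ 2) * (k + 1) ^ 2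
  set K := ∫ t in (0 : ℝ)..v, Kf t
  refine ⟨L - E * (θ * Complex.I), ?_, ?_⟩
  · rw [hL, ← Complex.exp_add, sub_eq_add_neg]
  have e : L - E * (θ * Complex.I) - ((-(x ^ 2 / 2 * (K / v ^ 3)) : ℝ) : ℂ) =
      (L - ((θ * M : ℝ) * Complex.I - (θ ^ 2 / 2 * V : ℝ))) + (θ * (M - E) : ℝ) * Complex.I
      + ((-(θ ^ 2 / 2 * (V - (N / v) ^ 3 * K)) : ℝ) : ℂ) := by
    have : x ^ 2 / 2 * (K / v ^ 3) = θ ^ 2 / 2 * ((N / v) ^ 3 * K) := by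
      rw [hθd, div_pow, mul_pow, hss]; field_simp
    rw [this]
    push_cast
    ring
  rw [e]
  refine (norm_add_le _ _).trans (add_le_add ((norm_add_le _ _).trans (add_le_add (hLb.trans ?_) ?_)) ?_)
  · have : N * (3 * ((|x| / √N) ^ 3 * (1 / v ^ 3 + 1 / v + 1 / v ^ 2))) = 
      3 * |x| ^ 3 * (1 / v ^ 3 + 1 / v + 1 / v ^ 2) / √N * (N / √N ^ 2) := by
      field_simp
    rw [this, hss, div_self hn.ne', mul_one]
  · rw [norm_mul, Complex.norm_I, mul_one, Complex.norm_real, Real.norm_eq_abs, abs_mul]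
    calc _ ≤ |θ| * (N / v) := mul_le_mul_of_nonneg_left hm (abs_nonneg _)
      _ = N * |θ| / v := by ring
      _ ≤ _ := by rw [hNθ]
  · rw [Complex.norm_real, Real.norm_eq_abs, abs_neg, abs_mul, abs_of_nonneg (by positivity)]
    calc _ ≤ θ ^ 2 / 2 * (N / v) ^ 2 := mul_le_mul_of_nonneg_left hvar (by positivity)
      _ = _ := by rw [hθd, div_pow, mul_pow, hss]; field_simp

lemma phi_pointwise (N E : ℕ → ℕ) (v : ℕ → ℝ) (w : ℝ) (hw : 0 < w) (hN : Tendsto N atTop atTop)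
    (hN0 : ∀ n, 0 < N n) (hv : Tendsto v atTop (𝓝 w)) (hv0 : ∀ n, 0 < v n)
    (hrel : ∀ n, (v n / N n) ^ 2 * E n = ∫ t in (0 : ℝ)..v n, G t) (x : ℝ) :
    Tendsto (fun n => phi (v n / N n) (N n) (x / (N n * √(N n))) *
        Complex.exp (-(E n * ((x / (N n * √(N n)) : ℝ) * Complex.I)))) atTop
      (𝓝 ((exp (-(x ^ 2 / 2 * ((∫ t in (0 : ℝ)..w, Kf t) / w ^ 3))) : ℝ) : ℂ)) := by
  have hNr : Tendsto (fun n => (N n : ℝ)) atTop atTop := tendsto_natCast_atTop_atTop.comp hN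
  have hsr : Tendsto (fun n => √(N n : ℝ)) atTop atTop := Real.tendsto_sqrt_atTop.comp hNr
  have hK : Tendsto (fun n => ∫ t in (0 : ℝ)..v n, Kf t) atTop (𝓝 (∫ t in (0 : ℝ)..w, Kf t)) :=
    ((intervalIntegral.continuous_primitive (fun a b => Kf_cont.intervalIntegrable a b) 0).tendsto w).comp hv
  have l1 : Tendsto (fun n => |x| / √(N n : ℝ)) atTop (𝓝 0) := hsr.const_div_atTop _
  have l2 : Tendsto (fun n => |x| / √(N n : ℝ) / v n) atTop (𝓝 0) := by
    have := l1.div hv hw.ne'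
    rw [zero_div] at this
    exact this
  have c1 : ∀ᶠ n in atTop, |x| / √(N n : ℝ) ≤ 1 := (l1.eventually_le_const one_pos)
  have c2 : ∀ᶠ n in atTop, |x| / √(N n : ℝ) / v n ≤ 1 / 2 := (l2.eventually_le_const (by norm_num))
  have key : ∀ n, ∃ L : ℂ, (|x| / √(N n : ℝ) ≤ 1 ∧ |x| / √(N n : ℝ) / v n ≤ 1 / 2) →
      phi (v n / N n) (N n) (x / (N n * √(N n))) *
        Complex.exp (-(E n * ((x / (N n * √(N n)) : ℝ) * Complex.I))) = Complex.exp L ∧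
      ‖L - ((-(x ^ 2 / 2 * ((∫ t in (0 : ℝ)..v n, Kf t) / v n ^ 3)) : ℝ) : ℂ)‖ ≤
        3 * |x| ^ 3 * (1 / v n ^ 3 + 1 / v n + 1 / v n ^ 2) / √(N n) + |x| / √(N n) / v n
          + x ^ 2 / 2 / v n ^ 2 / N n := by
    intro n
    by_cases h : |x| / √(N n : ℝ) ≤ 1 ∧ |x| / √(N n : ℝ) / v n ≤ 1 / 2
    · obtain ⟨L, hL⟩ := phi_step (hv0 n) (hN0 n) (hrel n) x h.1 h.2
      exact ⟨L, fun _ => hL⟩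
    · exact ⟨0, fun h' => absurd h' h⟩
  choose L hL using key
  have hb : Tendsto (fun n => 3 * |x| ^ 3 * (1 / v n ^ 3 + 1 / v n + 1 / v n ^ 2) / √(N n) +
      |x| / √(N n) / v n + x ^ 2 / 2 / v n ^ 2 / N n) atTop (𝓝 0) := by
    have t1 : Tendsto (fun n => 3 * |x| ^ 3 * (1 / v n ^ 3 + 1 / v n + 1 / v n ^ 2)) atTop
        (𝓝 (3 * |x| ^ 3 * (1 / w ^ 3 + 1 / w + 1 / w ^ 2))) := by
      have p3 := (tendsto_const_nhds (x := (1 : ℝ))).div (hv.pow 3) (pow_pos hw 3).ne'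
      have p2 := (tendsto_const_nhds (x := (1 : ℝ))).div (hv.pow 2) (pow_pos hw 2).ne'
      have p1 := (tendsto_const_nhds (x := (1 : ℝ))).div hv hw.ne'
      exact ((p3.add p1).add p2).const_mul _
    have t2 : Tendsto (fun n => x ^ 2 / 2 / v n ^ 2) atTop (𝓝 (x ^ 2 / 2 / w ^ 2)) :=
      tendsto_const_nhds.div (hv.pow 2) (pow_pos hw 2).ne'
    simpa using ((t1.div_atTop hsr).add l2).add (t2.div_atTop hNr)
  have hd : Tendsto (fun n => L n - ((-(x ^ 2 / 2 * ((∫ t in (0 : ℝ)..v n, Kf t) / v n ^ 3)) : ℝ) : ℂ))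
      atTop (𝓝 0) := by
    refine squeeze_zero_norm' ?_ hb
    filter_upwards [c1, c2] with n h1 h2 using (hL n ⟨h1, h2⟩).2
  have hc : Tendsto (fun n => ((-(x ^ 2 / 2 * ((∫ t in (0 : ℝ)..v n, Kf t) / v n ^ 3)) : ℝ) : ℂ)) atTop
      (𝓝 ((-(x ^ 2 / 2 * ((∫ t in (0 : ℝ)..w, Kf t) / w ^ 3)) : ℝ) : ℂ)) :=
    (Complex.continuous_ofReal.tendsto _).comp ((hK.div (hv.pow 3) (pow_pos hw 3).ne').const_mul _).neg
  have hLt := hd.add hc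
  simp only [sub_add_cancel, zero_add] at hLt
  have := (Complex.continuous_exp.tendsto _).comp hLt
  rw [Complex.ofReal_exp]
  refine this.congr' ?_
  filter_upwards [c1, c2] with n h1 h2 using (hL n ⟨h1, h2⟩).1.symm

lemma phi_cont {α : ℝ} (hα : 0 < α) (N : ℕ) : Continuous (phi α N) := by
  unfold phi
  refine continuous_finsetProd _ fun k _ => ?_
  refine Continuous.inv₀ (by fun_prop) fun θ => factor_ne (mm_pos hα k)

lemma int_limit (N E : ℕ → ℕ) (v : ℕ → ℝ) (w : ℝ) (hw : 0 < w) (hN : Tendsto N atTop atTop)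
    (hN0 : ∀ n, 0 < N n) (hv : Tendsto v atTop (𝓝 w)) (hv0 : ∀ n, 0 < v n)
    (hrel : ∀ n, (v n / N n) ^ 2 * E n = ∫ t in (0 : ℝ)..v n, G t) :
    Tendsto (fun n => ((N n * √(N n) : ℝ) : ℂ) * ∫ θ in (-π)..π, phi (v n / N n) (N n) θ *
        Complex.exp (-(E n * (θ * Complex.I)))) atTop
      (𝓝 ((√(2 * π / ((∫ t in (0 : ℝ)..w, Kf t) / w ^ 3)) : ℝ) : ℂ)) := by
  set c := (∫ t in (0 : ℝ)..w, Kf t) / w ^ 3 with hc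
  set A : ℕ → ℝ := fun n => N n * √(N n) with hA
  have hAp : ∀ n, 0 < A n := fun n => by
    have : (0 : ℝ) < N n := by exact_mod_cast hN0 n
    have := Real.sqrt_pos.2 this
    positivity
  have hNr : Tendsto (fun n => (N n : ℝ)) atTop atTop := tendsto_natCast_atTop_atTop.comp hN
  have hAt : Tendsto A atTop atTop := hNr.atTop_mul_atTop₀ (Real.tendsto_sqrt_atTop.comp hNr)
  let g : ℕ → ℝ → ℂ := fun n θ => phi (v n / N n) (N n) θ * Complex.exp (-(E n * (θ * Complex.I)))
  let h : ℕ → ℝ → ℂ := fun n => (Ioc (-π * A n) (π * A n)).indicator (fun x => g n (x / A n))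
  have hgc : ∀ n, Continuous (g n) := fun n => by
    have : (0 : ℝ) < N n := by exact_mod_cast hN0 n
    exact (phi_cont (div_pos (hv0 n) this) (N n)).mul (by fun_prop)
  have e1 : ∀ n, ((N n * √(N n) : ℝ) : ℂ) * ∫ θ in (-π)..π, g n θ = ∫ x, h n x := by
    intro n
    have hsub := intervalIntegral.integral_comp_div (a := -π * A n) (b := π * A n) (g n) (hAp n).ne'
    rw [mul_div_cancel_right₀ _ (hAp n).ne', mul_div_cancel_right₀ _ (hAp n).ne'] at hsub
    rw [integral_indicator measurableSet_Ioc, ← intervalIntegral.integral_of_le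
      (by nlinarith [hAp n, pi_pos]), hsub, Complex.real_smul]
  have e2 : ((√(2 * π / c) : ℝ) : ℂ) = ∫ x : ℝ, ((exp (-(x ^ 2 / 2 * c)) : ℝ) : ℂ) := by
    rw [integral_complex_ofReal]
    congr 1
    have := integral_gaussian (c / 2)
    rw [show π / (c / 2) = 2 * π / c by field_simp] at this
    rw [← this]
    congr 1
    ext x
    congr 1
    ring
  change Tendsto (fun n => ((N n * √(N n) : ℝ) : ℂ) * ∫ θ in (-π)..π, g n θ) atTop _
  simp_rw [e1]
  rw [e2]
  obtain ⟨d, hd, hdom⟩ := phi_dom (v1 := w + 1) (by linarith)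
  refine tendsto_integral_filter_of_dominated_convergence (fun x => (1 + (d * x) ^ 2)⁻¹) ?_ ?_ ?_ ?_
  · refine Eventually.of_forall fun n => ?_
    refine AEStronglyMeasurable.indicator ?_ measurableSet_Ioc
    exact ((hgc n).comp (continuous_id.div_const _)).aestronglyMeasurable
  · filter_upwards [hv.eventually_le_const (by linarith : w < w + 1), hN.eventually_ge_atTop 2]
      with n h1 h2
    refine Eventually.of_forall fun x => ?_
    by_cases hx : x ∈ Ioc (-π * A n) (π * A n)
    · simp only [h, Set.indicator_of_mem hx, g]
      rw [norm_mul, Complex.norm_exp]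
      have : (-((E n : ℂ) * ((x / A n : ℝ) * Complex.I))).re = 0 := by simp
      rw [this, Real.exp_zero, mul_one]
      exact hdom (v n) (hv0 n) h1 (N n) h2 x (abs_le.2 ⟨by linarith [hx.1], hx.2⟩)
    · simp only [h, Set.indicator_of_notMem hx, norm_zero]
      positivity
  · exact integrable_inv_one_add_sq.comp_mul_left' hd.ne'
  · refine Eventually.of_forall fun x => ?_
    have hp := phi_pointwise N E v w hw hN hN0 hv hv0 hrel x
    refine hp.congr' ?_
    filter_upwards [hAt.eventually_gt_atTop (|x| / π)] with n hn
    rw [div_lt_iff₀ pi_pos] at hn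
    have := abs_lt.1 hn
    have hx : x ∈ Ioc (-π * A n) (π * A n) := ⟨by linarith, by linarith⟩
    exact (Set.indicator_of_mem hx (fun x => g n (x / A n))).symm

lemma Kf_int_pos {w : ℝ} (hw : 0 < w) : 0 < ∫ t in (0 : ℝ)..w, Kf t :=
  intervalIntegral.intervalIntegral_pos_of_pos (Kf_cont.intervalIntegrable _ _) Kf_pos hw

/-- the limiting constant -/
lemma const_eq {w U : ℝ} (hw : 0 < w) (hU : 0 < U) (hrel : w ^ 2 / U ^ 2 = ∫ t in (0 : ℝ)..w, G t) :
    0 < 1 - exp (-w) - U ^ 2 / 2 * exp (-w) ∧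
    w / ((2 : ℝ) ^ ((3 : ℝ) / 2) * π * U) *
      (1 - exp (-w) - U ^ 2 / 2 * exp (-w)) ^ (-(1 : ℝ) / 2) =
    exp (-(el w / 2)) * √(2 * π / ((∫ t in (0 : ℝ)..w, Kf t) / w ^ 3)) / (2 * π * √(2 * π)) / U ^ 2 := by
  set K := ∫ t in (0 : ℝ)..w, Kf t with hK
  have hKp : 0 < K := Kf_int_pos hw
  have hKe : K = 2 * (w ^ 2 / U ^ 2) - w * G w := by rw [hK, Kf_integral hw, hrel]
  have hh := el_exp hw
  set h := exp (el w) with hh0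
  have hhp : 0 < h := exp_pos _
  set c := K / w ^ 3 with hc
  have hcp : 0 < c := by positivity
  have hB : 1 - exp (-w) - U ^ 2 / 2 * exp (-w) = h * c * (U * w) ^ 2 / 2 := by
    rw [hh, hc, hKe, G_ne hw.ne', Real.exp_neg]
    have h1 := (exp_sub_one_pos hw).ne'
    have h2 := (exp_pos w).ne'
    field_simp
  have hBp : 0 < h * c * (U * w) ^ 2 / 2 := by positivity
  rw [hB]
  refine ⟨hBp, ?_⟩
  have r1 : (2 : ℝ) ^ ((3 : ℝ) / 2) = 2 * √2 := by
    rw [show (3 : ℝ) / 2 = 1 + 1 / 2 by norm_num, Real.rpow_add two_pos, Real.rpow_one,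
      ← Real.sqrt_eq_rpow]
  have r2 : (h * c * (U * w) ^ 2 / 2) ^ (-(1 : ℝ) / 2) = (√h * √c * (U * w) / √2)⁻¹ := by
    rw [show -(1 : ℝ) / 2 = -(1 / 2) by norm_num, Real.rpow_neg hBp.le, ← Real.sqrt_eq_rpow,
      Real.sqrt_div' _ zero_le_two, Real.sqrt_mul (by positivity), Real.sqrt_mul hhp.le,
      Real.sqrt_sq (by positivity)]
  have r3 : exp (-(el w / 2)) = (√h)⁻¹ := by
    rw [Real.exp_neg, Real.exp_half]
  have r4 : √(2 * π / c) = √(2 * π) / √c := Real.sqrt_div (by positivity) _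
  rw [r1, r2, r3, r4]
  have s1 : 0 < √h := Real.sqrt_pos.2 hhp
  have s2 : 0 < √c := Real.sqrt_pos.2 hcp
  have s3 : 0 < √(2 : ℝ) := Real.sqrt_pos.2 two_pos
  have s4 : 0 < √(2 * π) := Real.sqrt_pos.2 (by positivity)
  field_simp

lemma core (N E : ℕ → ℕ) (v : ℕ → ℝ) (w U : ℝ) (hw : 0 < w) (hU : 0 < U)
    (hN : Tendsto N atTop atTop) (hN0 : ∀ n, 0 < N n) (hE0 : ∀ n, 0 < E n)
    (hv : Tendsto v atTop (𝓝 w)) (hv0 : ∀ n, 0 < v n)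
    (hu : Tendsto (fun n => (N n : ℝ) / √(E n)) atTop (𝓝 U))
    (hrel : ∀ n, v n ^ 2 / ((N n : ℝ) / √(E n)) ^ 2 = ∫ t in (0 : ℝ)..v n, G t) :
    Tendsto (fun n => (P (E n) (N n) : ℝ) * (E n : ℝ) *
      exp (-(√(E n)) * (2 * v n / ((N n : ℝ) / √(E n)) -
        (N n : ℝ) / √(E n) * log (1 - exp (-(v n))))) /
      (v n / ((2 : ℝ) ^ ((3 : ℝ) / 2) * π * ((N n : ℝ) / √(E n))) *
      (1 - exp (-(v n)) - ((N n : ℝ) / √(E n)) ^ 2 / 2 * exp (-(v n))) ^ (-(1 : ℝ) / 2))) atTop (𝓝 1) := by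
  have hG : Tendsto (fun n => ∫ t in (0 : ℝ)..v n, G t) atTop (𝓝 (∫ t in (0 : ℝ)..w, G t)) :=
    ((intervalIntegral.continuous_primitive (fun a b => G_cont.intervalIntegrable a b) 0).tendsto w).comp hv
  have hrelw : w ^ 2 / U ^ 2 = ∫ t in (0 : ℝ)..w, G t :=
    tendsto_nhds_unique (((hv.pow 2).div (hu.pow 2) (pow_pos hU 2).ne').congr hrel) hG
  obtain ⟨hBp, hconst⟩ := const_eq hw hU hrelw
  have hNp : ∀ n, (0 : ℝ) < N n := fun n => by exact_mod_cast hN0 n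
  have hEp : ∀ n, (0 : ℝ) < E n := fun n => by exact_mod_cast hE0 n
  have hrel2 : ∀ n, (v n / N n) ^ 2 * E n = ∫ t in (0 : ℝ)..v n, G t := by
    intro n
    rw [← hrel n, div_pow, div_pow, Real.sq_sqrt (hEp n).le]
    have := (hNp n).ne'
    have := (hEp n).ne'
    field_simp
  have hJ := int_limit N E v w hw hN hN0 hv hv0 hrel2
  have hF := Fp_asymp N v w hN hN0 hv hv0
  set c := (∫ t in (0 : ℝ)..w, Kf t) / w ^ 3
  have hFc := ((Complex.continuous_ofReal.tendsto _).comp hF).mul hJ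
  rw [← Complex.ofReal_mul] at hFc
  have hnum : Tendsto (fun n => (P (E n) (N n) : ℝ) * (E n : ℝ) *
      exp (-(√(E n)) * (2 * v n / ((N n : ℝ) / √(E n)) -
        (N n : ℝ) / √(E n) * log (1 - exp (-(v n)))))) atTop
      (𝓝 (exp (-(el w / 2)) * √(2 * π / c) / (2 * π * √(2 * π)) / U ^ 2)) := by
    have h1 := (Complex.continuous_re.tendsto _).comp hFc
    rw [Complex.ofReal_re] at h1
    refine ((h1.div_const (2 * π * √(2 * π))).div (hu.pow 2) (pow_pos hU 2).ne').congr fun n => ?_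
    have hn := hNp n
    have he := hEp n
    have hα : 0 < v n / N n := div_pos (hv0 n) hn
    have hs : 0 < √(E n : ℝ) := Real.sqrt_pos.2 he
    have hss : √(E n : ℝ) ^ 2 = E n := Real.sq_sqrt he.le
    have hvn := hv0 n
    have hco := coeff_formula hα (E n) (N n)
    have hαE : (N n : ℝ) / v n * ∫ t in (0 : ℝ)..v n, G t = v n / N n * E n := by
      rw [← hrel2 n]; field_simp
    have hlog : 0 < 1 - exp (-(v n)) := by
      have : exp (-(v n)) < 1 := by
        rw [← Real.exp_zero]; exact Real.exp_lt_exp.2 (by linarith)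
      linarith
    have hexp : exp (-(√(E n)) * (2 * v n / ((N n : ℝ) / √(E n)) -
        (N n : ℝ) / √(E n) * log (1 - exp (-(v n))))) =
        exp (-(v n / N n * E n)) * exp (-(v n / N n * E n)) * (1 - exp (-(v n))) ^ N n := by
      rw [← Real.exp_log (pow_pos hlog (N n)), Real.log_pow, ← Real.exp_add, ← Real.exp_add]
      congr 1
      have : √(E n : ℝ) * (2 * v n / ((N n : ℝ) / √(E n))) = 2 * (v n / N n * √(E n : ℝ) ^ 2) := by
        field_simp
      rw [hss] at this
      have h2 : √(E n : ℝ) * ((N n : ℝ) / √(E n) * log (1 - exp (-(v n)))) =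
        N n * log (1 - exp (-(v n))) := by field_simp
      linear_combination -this + h2
    rw [hexp]
    simp only [Function.comp_apply, Pi.div_apply]
    rw [hαE]
    set I0 := ∫ θ in (-π)..π, phi (v n / N n) (N n) θ * Complex.exp (-(E n * (θ * Complex.I)))
    have hsplit : √(2 * π * N n) = √(2 * π) * √(N n) := Real.sqrt_mul (by positivity) _
    have hNs : √(N n : ℝ) * √(N n) = N n := Real.mul_self_sqrt hn.le
    have hre : (((Fp (v n / N n) (N n) * exp (-(v n / N n * E n)) * (1 - exp (-(v n))) ^ N n *
        √(2 * π * N n) : ℝ) : ℂ) * (((N n * √(N n) : ℝ) : ℂ) * I0)) =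
        ((P (E n) (N n) * (2 * π) * exp (-(v n / N n * E n)) * (exp (-(v n / N n * E n)) *
          (1 - exp (-(v n))) ^ N n * √(2 * π) * (√(N n) * √(N n)) * N n) : ℝ) : ℂ) := by
      rw [hsplit]
      push_cast
      push_cast at hco
      linear_combination (-(Complex.exp (-(v n / N n * E n)) *
          (1 - Complex.exp (-(v n))) ^ N n * (√(2 * π) : ℝ) * ((√(N n) : ℝ) * (√(N n) : ℝ)) * N n)) * hco
    rw [hre, Complex.ofReal_re, hNs, div_pow, hss]
    have : 0 < √(2 * π) := Real.sqrt_pos.2 (by positivity)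
    field_simp
  have hden : Tendsto (fun n => v n / ((2 : ℝ) ^ ((3 : ℝ) / 2) * π * ((N n : ℝ) / √(E n))) *
      (1 - exp (-(v n)) - ((N n : ℝ) / √(E n)) ^ 2 / 2 * exp (-(v n))) ^ (-(1 : ℝ) / 2)) atTop
      (𝓝 (w / ((2 : ℝ) ^ ((3 : ℝ) / 2) * π * U) *
      (1 - exp (-w) - U ^ 2 / 2 * exp (-w)) ^ (-(1 : ℝ) / 2))) := by
    have he : Tendsto (fun n => exp (-(v n))) atTop (𝓝 (exp (-w))) :=
      (Real.continuous_exp.tendsto _).comp hv.neg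
    refine (hv.div (hu.const_mul _) (by positivity)).mul ?_
    refine Tendsto.rpow_const ?_ (Or.inl hBp.ne')
    exact (he.const_sub 1).sub (((hu.pow 2).div_const 2).mul he)
  have hpos : 0 < w / ((2 : ℝ) ^ ((3 : ℝ) / 2) * π * U) *
      (1 - exp (-w) - U ^ 2 / 2 * exp (-w)) ^ (-(1 : ℝ) / 2) := by positivity
  rw [← hconst] at hnum
  have := hnum.div hden hpos.ne'
  rw [div_self hpos.ne'] at this
  exact this

lemma v_range {v u : ℝ} (hv : 0 < v) (hu : 0 < u)
    (hrel : v ^ 2 / u ^ 2 = ∫ t in (0 : ℝ)..v, G t) : log (1 + u ^ 2) ≤ v ∧ v ≤ u ^ 2 := by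
  have h1 : ∫ t in (0 : ℝ)..v, G t ≤ v := by
    calc _ ≤ ∫ t in (0 : ℝ)..v, (1 : ℝ) := intervalIntegral.integral_mono_on hv.le
          (G_cont.intervalIntegrable _ _) (by simp) (fun t ht => G_le_one ht.1)
      _ = v := by simp
  have h2 : v * G v ≤ ∫ t in (0 : ℝ)..v, G t := by
    calc v * G v = ∫ t in (0 : ℝ)..v, G v := by simp
      _ ≤ _ := intervalIntegral.integral_mono_on hv.le (by simp)
          (G_cont.intervalIntegrable _ _) (fun t ht => G_antitone (Set.mem_Ici.2 ht.1) (Set.mem_Ici.2 hv.le) ht.2)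
  rw [← hrel] at h1 h2
  have hu2 : 0 < u ^ 2 := by positivity
  constructor
  · rw [G_ne hv.ne'] at h2
    have hx := exp_sub_one_pos hv
    have e1 : v * (v / (exp v - 1)) = v ^ 2 / (exp v - 1) := by ring
    rw [e1, div_le_div_iff_of_pos_left (by positivity) hx hu2] at h2
    rw [Real.log_le_iff_le_exp (by positivity)]
    linarith
  · rw [div_le_iff₀ hu2, sq] at h1
    exact le_of_mul_le_mul_left h1 hv

lemma final_aux
    (v : ℝ → ℝ)
    (hv : ∀ u : ℝ, 0 < u →
      0 < v u ∧ (v u) ^ 2 / u ^ 2 = ∫ t in (0 : ℝ)..(v u), G t)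
    (g f : ℝ → ℝ)
    (hg : ∀ u : ℝ, g u = 2 * v u / u - u * Real.log (1 - Real.exp (-(v u))))
    (hf : ∀ u : ℝ, f u = v u / ((2 : ℝ) ^ ((3 : ℝ) / 2) * Real.pi * u) *
      (1 - Real.exp (-(v u)) - u ^ 2 / 2 * Real.exp (-(v u))) ^ (-(1 : ℝ) / 2))
    (δ : ℝ) (hδ : 0 < δ) (ε : ℝ) (hε : 0 < ε) :
    ∃ E₀ : ℕ, ∀ E : ℕ, E₀ ≤ E → ∀ N : ℕ, 0 < N →
      δ ≤ (N : ℝ) / Real.sqrt E → (N : ℝ) / Real.sqrt E ≤ 1 / δ →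
      |(P E N : ℝ) * (E : ℝ) *
          Real.exp (-(Real.sqrt E) * g ((N : ℝ) / Real.sqrt E)) /
          f ((N : ℝ) / Real.sqrt E) - 1| ≤ ε := by
  by_contra hcon
  push Not at hcon
  choose E hE N hN0 hu1 hu2 hbad using fun n : ℕ => hcon (n + 1)
  set u : ℕ → ℝ := fun n => (N n : ℝ) / √(E n) with hu
  have hup : ∀ n, 0 < u n := fun n => hδ.trans_le (hu1 n)
  have hmem : ∀ n, (u n, v (u n)) ∈ Icc δ (1 / δ) ×ˢ Icc (log (1 + δ ^ 2)) ((1 / δ) ^ 2) := by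
    intro n
    obtain ⟨a, b⟩ := hv _ (hup n)
    obtain ⟨c, d⟩ := v_range a (hup n) b
    refine ⟨⟨hu1 n, hu2 n⟩, ⟨le_trans ?_ c, d.trans ?_⟩⟩
    · apply Real.log_le_log (by positivity)
      have := pow_le_pow_left₀ hδ.le (hu1 n) 2
      show 1 + δ ^ 2 ≤ 1 + ((N n : ℝ) / √(E n)) ^ 2
      linarith
    · exact pow_le_pow_left₀ (hup n).le (hu2 n) 2
  obtain ⟨⟨U, w⟩, hUw, s, hs, hlim⟩ := (isCompact_Icc.prod isCompact_Icc).tendsto_subseq hmem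
  have hU : 0 < U := hδ.trans_le hUw.1.1
  have hw : 0 < w := by
    have h1 : log (1 + δ ^ 2) ≤ w := hUw.2.1
    have : 0 < log (1 + δ ^ 2) := Real.log_pos (by have := pow_pos hδ 2; linarith)
    linarith
  have hlu : Tendsto (fun n => u (s n)) atTop (𝓝 U) := (continuous_fst.tendsto _).comp hlim
  have hlv : Tendsto (fun n => v (u (s n))) atTop (𝓝 w) := (continuous_snd.tendsto _).comp hlim
  have hEpos : ∀ n, 0 < E n := fun n => lt_of_lt_of_le (Nat.succ_pos n) (hE n)
  have hEt : Tendsto (fun n => E (s n)) atTop atTop := by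
    refine tendsto_atTop_mono (fun n => ?_) tendsto_id
    exact (hs.id_le n).trans ((Nat.le_succ _).trans (hE (s n)))
  have hNt : Tendsto (fun n => N (s n)) atTop atTop := by
    rw [← tendsto_natCast_atTop_iff (R := ℝ)]
    have h1 : Tendsto (fun n => δ * √(E (s n) : ℝ)) atTop atTop :=
      (Real.tendsto_sqrt_atTop.comp (tendsto_natCast_atTop_atTop.comp hEt)).const_mul_atTop hδ
    refine tendsto_atTop_mono (fun n => ?_) h1
    have := hu1 (s n)
    rwa [le_div_iff₀ (Real.sqrt_pos.2 (by exact_mod_cast hEpos (s n)))] at this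
  have hc := core (fun n => N (s n)) (fun n => E (s n)) (fun n => v (u (s n))) w U hw hU hNt
    (fun n => hN0 _) (fun n => hEpos _) hlv (fun n => (hv _ (hup _)).1) hlu (fun n => (hv _ (hup _)).2)
  have hev := (Metric.tendsto_nhds.1 hc) ε hε
  obtain ⟨n, hn⟩ := hev.exists
  have hb := hbad (s n)
  rw [hg, hf] at hb
  rw [Real.dist_eq] at hn
  exact lt_asymm hb hn

end Aux

theorem stmt_15
    -- `v u` is the unique solution of the saddle-point equation for `u > 0`
    (v : ℝ → ℝ)
    (hv : ∀ u : ℝ, 0 < u →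
      0 < v u ∧ (v u) ^ 2 / u ^ 2 = ∫ t in (0 : ℝ)..(v u), G t)
    (g f : ℝ → ℝ)
    (hg : ∀ u : ℝ, g u = 2 * v u / u - u * Real.log (1 - Real.exp (-(v u))))
    (hf : ∀ u : ℝ, f u = v u / ((2 : ℝ) ^ ((3 : ℝ) / 2) * Real.pi * u) *
      (1 - Real.exp (-(v u)) - u ^ 2 / 2 * Real.exp (-(v u))) ^ (-(1 : ℝ) / 2))
    (δ : ℝ) (hδ : 0 < δ) (ε : ℝ) (hε : 0 < ε) :
    ∃ E₀ : ℕ, ∀ E : ℕ, E₀ ≤ E → ∀ N : ℕ, 0 < N →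
      δ ≤ (N : ℝ) / Real.sqrt E → (N : ℝ) / Real.sqrt E ≤ 1 / δ →
      |(P E N : ℝ) * (E : ℝ) *
          Real.exp (-(Real.sqrt E) * g ((N : ℝ) / Real.sqrt E)) /
          f ((N : ℝ) / Real.sqrt E) - 1| ≤ ε := by
  exact final_aux v hv g f hg hf δ hδ ε hε
end
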